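/- arXiv:2603.25358 — 7 statements merged into one kernel-verified Lean document; each statement's English description precedes it below -/
import Mathlib

section
/- Let S = (∑_x √( c₊·c₋·p⁺_x·p⁻_x / (c₊·p⁺_x + c₋·p⁻_x) ))², where terms with c₊·p⁺_x + c₋·p⁻_x = 0 are taken to be 0. For ε > 0 and δ₁ ∈ (0,1), if the number of samples N satisfies N ≥ 8·γ·((1+ε)/ε)²·(√S + √(c₋/δ₁))², then with probability at least 1 − δ₁ the estimated acceptance ratios satisfy Δ := γ·∑_x |μ_x − R_x|·q_x ≤ ε/(1+ε). (Theorem 2 / Theorem S2, estimation stage, first bound.) -/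
open MeasureTheory Finset

/-!
The counts of the `N` samples form a multinomial vector on `ι × Bool`, and `Δ / γ` is a function
of this vector.

* *Mean.* Given the total number `m` of samples at `x`, the number of negative ones is binomial, so
  the mean square error of the ratio at `x` is `O(1 / (m + 1))`. The size-bias identity gives
  `E[1 / (m + 1)] ≤ 1 / ((N + 1) q x)`, and Jensen's inequality turns this into the summand
  `√(w (x, true) * w (x, false) / q x)`, up to the factor `√(8 / (N + 1))`.
* *Variance.* The sum of conditional variances over the draws is controlled by the mean squared
  change of `Δ / γ` when one draw is added. Such a draw moves the ratio at `x` by a multiple of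
  `1 / (m * (m + 1))`, and conditional binomiality together with
  `E[1 / ((m + 1) * (m + 2))] ≤ 1 / ((N + 1) (N + 2) (q x) ^ 2)` bounds the variance by
  `8 / (N + 1)` times the probability `c₋ / γ` of a negative sample.

Chebyshev's inequality combines the two bounds.
-/

section Multinomial

variable {α : Type*} [DecidableEq α]

/-- The vector of multiplicities with which the elements of `α` occur in the sample `ω`. -/
def sampleCounts {n : ℕ} (ω : Fin n → α) (s : α) : ℕ := #{i | ω i = s}

lemma sampleCounts_cons {n : ℕ} (s : α) (ω : Fin n → α) :
    sampleCounts (Fin.cons s ω : Fin (n + 1) → α) = sampleCounts ω + Pi.single s 1 := by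
  funext t
  simp only [sampleCounts, Pi.add_apply, card_filter, Fin.sum_univ_succ, Fin.cons_zero,
    Fin.cons_succ, Pi.single_apply, eq_comm (a := t)]
  exact add_comm _ _

variable [Fintype α] {w : α → ℝ}

/-- The expectation of `F` at the counts of `n` independent draws from the weights `w`, that is,
at a multinomial vector. It is a finite sum, so `α` needs no measurable structure. -/
noncomputable def multinomialMean (w : α → ℝ) (n : ℕ) (F : (α → ℕ) → ℝ) : ℝ :=
  ∑ ω : Fin n → α, (∏ i, w (ω i)) * F (sampleCounts ω)

/-- The variance of `F` at the counts of `n` independent draws from the weights `w`. -/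
noncomputable def multinomialVar (w : α → ℝ) (n : ℕ) (F : (α → ℕ) → ℝ) : ℝ :=
  multinomialMean w n fun c => (F c - multinomialMean w n F) ^ 2

/-- The expectation of `F` after one more draw from the weights `w` is added to the counts. -/
def addSampleMean (w : α → ℝ) (F : (α → ℕ) → ℝ) (c : α → ℕ) : ℝ :=
  ∑ s, w s * F (c + Pi.single s 1)

/-- The mean squared change of `F` when one more draw from the weights `w` is added to the
counts. -/
def addSampleEnergy (w : α → ℝ) (F : (α → ℕ) → ℝ) (c : α → ℕ) : ℝ :=
  ∑ s, w s * (F (c + Pi.single s 1) - F c) ^ 2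

lemma multinomialMean_zero (F : (α → ℕ) → ℝ) : multinomialMean w 0 F = F 0 := by
  have counts_default : sampleCounts (default : Fin 0 → α) = 0 := by
    funext s
    simp [sampleCounts]
  simp [multinomialMean, counts_default]

lemma multinomialMean_succ (n : ℕ) (F : (α → ℕ) → ℝ) :
    multinomialMean w (n + 1) F = multinomialMean w n (addSampleMean w F) := by
  simp only [multinomialMean, addSampleMean]
  rw [← (Fin.consEquiv fun _ : Fin (n + 1) => α).sum_comp, Fintype.sum_prod_type, sum_comm]
  refine sum_congr rfl fun ω _ => ?_
  rw [mul_sum]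
  refine sum_congr rfl fun s _ => ?_
  simp only [Fin.consEquiv, Equiv.coe_fn_mk, Fin.prod_univ_succ, Fin.cons_zero, Fin.cons_succ,
    sampleCounts_cons]
  ring

lemma multinomialMean_add (n : ℕ) (F G : (α → ℕ) → ℝ) :
    multinomialMean w n (fun c => F c + G c) = multinomialMean w n F + multinomialMean w n G := by
  simp [multinomialMean, mul_add, sum_add_distrib]

lemma multinomialMean_sub (n : ℕ) (F G : (α → ℕ) → ℝ) :
    multinomialMean w n (fun c => F c - G c) = multinomialMean w n F - multinomialMean w n G := by
  simp [multinomialMean, mul_sub, sum_sub_distrib]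

lemma multinomialMean_const_mul (n : ℕ) (r : ℝ) (F : (α → ℕ) → ℝ) :
    multinomialMean w n (fun c => r * F c) = r * multinomialMean w n F := by
  simp only [multinomialMean, mul_sum, mul_left_comm]

lemma multinomialMean_sum {β : Type*} (t : Finset β) (n : ℕ) (F : β → (α → ℕ) → ℝ) :
    multinomialMean w n (fun c => ∑ b ∈ t, F b c) = ∑ b ∈ t, multinomialMean w n (F b) := by
  simp only [multinomialMean, mul_sum]
  exact sum_comm

lemma multinomialMean_mono (hw : 0 ≤ w) (n : ℕ) {F G : (α → ℕ) → ℝ} (hFG : ∀ c, F c ≤ G c) :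
    multinomialMean w n F ≤ multinomialMean w n G :=
  sum_le_sum fun _ _ => mul_le_mul_of_nonneg_left (hFG _) (prod_nonneg fun _ _ => hw _)

lemma multinomialMean_nonneg (hw : 0 ≤ w) (n : ℕ) {F : (α → ℕ) → ℝ} (hF : ∀ c, 0 ≤ F c) :
    0 ≤ multinomialMean w n F :=
  sum_nonneg fun _ _ => mul_nonneg (prod_nonneg fun _ _ => hw _) (hF _)

lemma multinomialMean_const (hw : ∑ s, w s = 1) (n : ℕ) (r : ℝ) :
    multinomialMean w n (fun _ => r) = r := by
  rw [multinomialMean, ← sum_mul, ← Fintype.sum_pow, hw, one_pow, one_mul]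

lemma sq_multinomialMean_le (hw : w ∈ stdSimplex ℝ α) (n : ℕ) (F : (α → ℕ) → ℝ) :
    multinomialMean w n F ^ 2 ≤ multinomialMean w n fun c => F c ^ 2 :=
  Real.pow_arith_mean_le_arith_mean_pow_of_even univ _ _
    (fun _ _ => prod_nonneg fun _ _ => hw.1 _)
    (by rw [← Fintype.sum_pow, hw.2, one_pow]) even_two

lemma multinomialVar_eq_sub (hw : ∑ s, w s = 1) (n : ℕ) (F : (α → ℕ) → ℝ) :
    multinomialVar w n F =
      multinomialMean w n (fun c => F c ^ 2) - multinomialMean w n F ^ 2 := by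
  have expand (c : α → ℕ) : (F c - multinomialMean w n F) ^ 2 =
      F c ^ 2 - 2 * multinomialMean w n F * F c + multinomialMean w n F ^ 2 := by ring
  simp only [multinomialVar, expand]
  rw [multinomialMean_add, multinomialMean_sub, multinomialMean_const_mul,
    multinomialMean_const hw]
  ring

lemma multinomialVar_zero (hw : ∑ s, w s = 1) (F : (α → ℕ) → ℝ) : multinomialVar w 0 F = 0 := by
  simp [multinomialVar_eq_sub hw, multinomialMean_zero]

lemma multinomialMean_indicator_lt_le (hw : 0 ≤ w) (n : ℕ) (F : (α → ℕ) → ℝ) {t : ℝ}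
    (ht : multinomialMean w n F < t) :
    multinomialMean w n (fun c => if t < F c then 1 else 0) ≤
      multinomialVar w n F / (t - multinomialMean w n F) ^ 2 := by
  have gap_pos : 0 < t - multinomialMean w n F := sub_pos.mpr ht
  rw [div_eq_inv_mul, multinomialVar, ← multinomialMean_const_mul]
  refine multinomialMean_mono hw n fun c => ?_
  split_ifs with hc
  · rw [inv_mul_eq_div, one_le_div (pow_pos gap_pos 2)]
    gcongr
  · positivity

lemma multinomialMean_indicator_lt_le_of_add_sqrt_le (hw : 0 ≤ w) (n : ℕ) {F : (α → ℕ) → ℝ}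
    {a v t δ : ℝ} (hmean : multinomialMean w n F ≤ a) (hvar : multinomialVar w n F ≤ v)
    (hδ : 0 < δ) (hat : a < t) (ht : a + √(v / δ) ≤ t) :
    multinomialMean w n (fun c => if t < F c then 1 else 0) ≤ δ := by
  have mean_lt : multinomialMean w n F < t := hmean.trans_lt hat
  have ratio_le : v / δ ≤ (t - multinomialMean w n F) ^ 2 :=
    (Real.sqrt_le_left (sub_nonneg.mpr mean_lt.le)).mp (by linarith)
  refine (multinomialMean_indicator_lt_le hw n F mean_lt).trans ?_
  rw [div_le_iff₀ (pow_pos (sub_pos.mpr mean_lt) 2)]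
  exact hvar.trans ((div_le_iff₀' hδ).mp ratio_le)

lemma addSampleMean_sq_sub_sq_le (hw : ∑ s, w s = 1) (F : (α → ℕ) → ℝ) (c : α → ℕ) :
    addSampleMean w (fun c => F c ^ 2) c - addSampleMean w F c ^ 2 ≤ addSampleEnergy w F c := by
  have energy_eq : addSampleEnergy w F c =
      addSampleMean w (fun c => F c ^ 2) c - 2 * F c * addSampleMean w F c + F c ^ 2 := by
    have expand (s : α) : w s * (F (c + Pi.single s 1) - F c) ^ 2 =
        w s * F (c + Pi.single s 1) ^ 2 - 2 * F c * (w s * F (c + Pi.single s 1)) +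
          F c ^ 2 * w s := by ring
    simp only [addSampleEnergy, addSampleMean, expand, sum_add_distrib, sum_sub_distrib,
      ← mul_sum, hw, mul_one]
  linarith [sq_nonneg (addSampleMean w F c - F c)]

lemma addSampleEnergy_addSampleMean_le (hw : w ∈ stdSimplex ℝ α) (F : (α → ℕ) → ℝ)
    (c : α → ℕ) :
    addSampleEnergy w (addSampleMean w F) c ≤ addSampleMean w (addSampleEnergy w F) c := by
  have increment_eq (s : α) : addSampleMean w F (c + Pi.single s 1) - addSampleMean w F c =
      ∑ t, w t * (F (c + Pi.single t 1 + Pi.single s 1) - F (c + Pi.single t 1)) := by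
    simp only [addSampleMean, mul_sub, sum_sub_distrib, add_right_comm]
  calc addSampleEnergy w (addSampleMean w F) c
      ≤ ∑ s, w s * ∑ t, w t *
          (F (c + Pi.single t 1 + Pi.single s 1) - F (c + Pi.single t 1)) ^ 2 := by
        refine sum_le_sum fun s _ => mul_le_mul_of_nonneg_left ?_ (hw.1 s)
        rw [increment_eq]
        exact Real.pow_arith_mean_le_arith_mean_pow_of_even univ _ _ (fun t _ => hw.1 t) hw.2
          even_two
    _ = addSampleMean w (addSampleEnergy w F) c := by
        simp only [addSampleMean, addSampleEnergy, mul_sum]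
        rw [sum_comm]
        simp only [mul_left_comm]

lemma multinomialVar_succ_le_add (hw : w ∈ stdSimplex ℝ α) (n : ℕ) (F : (α → ℕ) → ℝ) :
    multinomialVar w (n + 1) F ≤
      multinomialVar w n (addSampleMean w F) + multinomialMean w n (addSampleEnergy w F) := by
  have last_draw := multinomialMean_mono hw.1 n (addSampleMean_sq_sub_sq_le hw.2 F)
  rw [multinomialMean_sub] at last_draw
  rw [multinomialVar_eq_sub hw.2, multinomialVar_eq_sub hw.2, multinomialMean_succ,
    multinomialMean_succ]
  linarith

/-- An Efron–Stein inequality in which the sensitivity of `F` is measured by adding a draw rather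
than by resampling one. -/
theorem multinomialVar_succ_le (hw : w ∈ stdSimplex ℝ α) (n : ℕ) (F : (α → ℕ) → ℝ) :
    multinomialVar w (n + 1) F ≤ (n + 1) * multinomialMean w n (addSampleEnergy w F) := by
  induction n generalizing F with
  | zero => simpa [multinomialVar_zero hw.2] using multinomialVar_succ_le_add hw 0 F
  | succ n ih =>
    have energy_le : multinomialMean w n (addSampleEnergy w (addSampleMean w F)) ≤
        multinomialMean w (n + 1) (addSampleEnergy w F) := by
      rw [multinomialMean_succ]
      exact multinomialMean_mono hw.1 n (addSampleEnergy_addSampleMean_le hw F)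
    calc multinomialVar w (n + 1 + 1) F
        ≤ multinomialVar w (n + 1) (addSampleMean w F) +
            multinomialMean w (n + 1) (addSampleEnergy w F) :=
          multinomialVar_succ_le_add hw (n + 1) F
      _ ≤ (n + 1) * multinomialMean w n (addSampleEnergy w (addSampleMean w F)) +
            multinomialMean w (n + 1) (addSampleEnergy w F) := by
          gcongr
          exact ih (addSampleMean w F)
      _ ≤ (n + 1) * multinomialMean w (n + 1) (addSampleEnergy w F) +
            multinomialMean w (n + 1) (addSampleEnergy w F) := by gcongr
      _ = ((n + 1 : ℕ) + 1) * multinomialMean w (n + 1) (addSampleEnergy w F) := by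
          push_cast
          ring

lemma addSampleMean_apply_mul (s : α) (F : (α → ℕ) → ℝ) (c : α → ℕ) :
    addSampleMean w (fun c => c s * F c) c =
      c s * addSampleMean w F c + w s * F (c + Pi.single s 1) := by
  have summand_eq (t : α) :
      w t * (((c + Pi.single t 1 : α → ℕ) s : ℝ) * F (c + Pi.single t 1)) =
        c s * (w t * F (c + Pi.single t 1)) +
          if s = t then w t * F (c + Pi.single t 1) else 0 := by
    split_ifs with hst
    · subst hst
      simp only [Pi.add_apply, Pi.single_eq_same, Nat.cast_add, Nat.cast_one]
      ring
    · simp only [Pi.add_apply, Pi.single_eq_of_ne hst, add_zero]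
      ring
  simp only [addSampleMean, summand_eq, sum_add_distrib, mul_sum, sum_ite_eq, mem_univ, if_true]

/-- The size-bias (Stein) identity of the multinomial distribution. -/
theorem multinomialMean_succ_apply_mul (n : ℕ) (s : α) (F : (α → ℕ) → ℝ) :
    multinomialMean w (n + 1) (fun c => c s * F c) =
      (n + 1) * (w s * multinomialMean w n fun c => F (c + Pi.single s 1)) := by
  have one_step (n : ℕ) (F : (α → ℕ) → ℝ) : multinomialMean w (n + 1) (fun c => c s * F c) =
      multinomialMean w n (fun c => c s * addSampleMean w F c) +
        w s * multinomialMean w n fun c => F (c + Pi.single s 1) := by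
    rw [multinomialMean_succ, ← multinomialMean_const_mul, ← multinomialMean_add]
    exact congrArg _ (funext (addSampleMean_apply_mul s F))
  induction n generalizing F with
  | zero => simp [one_step, multinomialMean_zero]
  | succ n ih =>
    have shift_comm : (multinomialMean w n fun c => addSampleMean w F (c + Pi.single s 1)) =
        multinomialMean w (n + 1) fun c => F (c + Pi.single s 1) := by
      rw [multinomialMean_succ]
      refine congrArg _ (funext fun c => ?_)
      simp only [addSampleMean, add_right_comm]
    rw [one_step, ih, shift_comm]
    push_cast
    ring

lemma multinomialMean_succ_sum_mul (n : ℕ) (T : Finset α) (h : ℕ → ℝ) :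
    multinomialMean w (n + 1) (fun c => ((∑ s ∈ T, c s : ℕ) : ℝ) * h (∑ s ∈ T, c s)) =
      (n + 1) * ((∑ s ∈ T, w s) * multinomialMean w n fun c => h (∑ s ∈ T, c s + 1)) := by
  simp only [Nat.cast_sum, sum_mul, mul_sum, multinomialMean_sum]
  refine sum_congr rfl fun s hs => ?_
  rw [multinomialMean_succ_apply_mul n s fun c => h (∑ s ∈ T, c s)]
  simp [sum_add_distrib, sum_pi_single', hs]

lemma multinomialMean_inv_succ_le (hw : w ∈ stdSimplex ℝ α) (n : ℕ) (T : Finset α) :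
    (n + 1) * ((∑ s ∈ T, w s) *
      multinomialMean w n fun c => 1 / (((∑ s ∈ T, c s : ℕ) : ℝ) + 1)) ≤ 1 := by
  have size_bias := multinomialMean_succ_sum_mul (w := w) n T fun m => 1 / (m : ℝ)
  simp only [Nat.cast_add_one] at size_bias
  rw [← size_bias]
  refine (multinomialMean_mono hw.1 _ fun c => ?_).trans (multinomialMean_const hw.2 _ 1).le
  rw [mul_one_div]
  exact div_self_le_one _

lemma multinomialMean_inv_succ_mul_succ_le (hw : w ∈ stdSimplex ℝ α) (n : ℕ) (T : Finset α) :
    (n + 1) * (n + 2) * ((∑ s ∈ T, w s) ^ 2 * multinomialMean w n fun c =>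
      1 / ((((∑ s ∈ T, c s : ℕ) : ℝ) + 1) * (((∑ s ∈ T, c s : ℕ) : ℝ) + 2))) ≤ 1 := by
  have weight_nonneg : 0 ≤ ∑ s ∈ T, w s := sum_nonneg fun s _ => hw.1 s
  have size_bias :=
    multinomialMean_succ_sum_mul (w := w) n T fun m => 1 / ((m : ℝ) * (m + 1))
  simp only [Nat.cast_add_one, add_assoc, one_add_one_eq_two] at size_bias
  calc _ = (n + 2) * ((∑ s ∈ T, w s) * multinomialMean w (n + 1) fun c =>
        ((∑ s ∈ T, c s : ℕ) : ℝ) *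
          (1 / (((∑ s ∈ T, c s : ℕ) : ℝ) * (((∑ s ∈ T, c s : ℕ) : ℝ) + 1)))) := by
        rw [size_bias]
        ring
    _ ≤ (n + 2) * ((∑ s ∈ T, w s) * multinomialMean w (n + 1) fun c =>
        1 / (((∑ s ∈ T, c s : ℕ) : ℝ) + 1)) := by
        gcongr
        refine multinomialMean_mono hw.1 _ fun c => ?_
        rw [mul_one_div, ← div_div]
        gcongr
        exact div_self_le_one _
    _ ≤ 1 := by
        simpa only [Nat.cast_add_one, add_assoc, one_add_one_eq_two] using
          multinomialMean_inv_succ_le hw (n + 1) T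

/-- Given `c s + c t = m`, the count `c t` is binomial with success probability
`w t / (w s + w t)`; the left-hand side is its variance, rescaled to avoid division. -/
lemma multinomialMean_sq_mul_sub_mul {s t : α} (hst : s ≠ t) (n : ℕ) (h : ℕ → ℝ) :
    multinomialMean w n (fun c => (w s * c t - w t * c s) ^ 2 * h (c s + c t)) =
      w s * w t * multinomialMean w n fun c => ((c s + c t : ℕ) : ℝ) * h (c s + c t) := by
  cases n with
  | zero => simp [multinomialMean_zero]
  | succ n =>
    have size_bias := multinomialMean_succ_sum_mul (w := w) n {s, t} h
    simp only [sum_pair hst] at size_bias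
    let G (c : α → ℕ) : ℝ := (w s * c t - w t * c s) * h (c s + c t)
    have split_square (c : α → ℕ) : (w s * c t - w t * c s) ^ 2 * h (c s + c t) =
        w s * (c t * G c) - w t * (c s * G c) := by
      simp only [G]
      ring
    have increment_diff (c : α → ℕ) : G (c + Pi.single t 1) - G (c + Pi.single s 1) =
        (w s + w t) * h (c s + c t + 1) := by
      simp only [G, Pi.add_apply, Pi.single_eq_same, Pi.single_eq_of_ne hst,
        Pi.single_eq_of_ne hst.symm, add_zero, add_right_comm (c s) 1, ← add_assoc]
      push_cast
      ring
    simp only [split_square]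
    rw [multinomialMean_sub, multinomialMean_const_mul, multinomialMean_const_mul,
      multinomialMean_succ_apply_mul, multinomialMean_succ_apply_mul, size_bias,
      ← multinomialMean_const_mul n (w s + w t)]
    simp only [← increment_diff, multinomialMean_sub]
    ring

lemma multinomialMean_le_of_le_add_sq_mul (hw : 0 ≤ w) {s t : α} (hst : s ≠ t) (n : ℕ)
    {φ : ℕ → ℕ → ℝ} (g h : ℕ → ℝ) {B : ℕ → ℝ}
    (hφ : ∀ k l : ℕ, φ k l ≤ g (k + l) + (w s * l - w t * k) ^ 2 * h (k + l))
    (hB : ∀ m : ℕ, g m + w s * w t * (m * h m) ≤ B m) :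
    multinomialMean w n (fun c => φ (c s) (c t)) ≤
      multinomialMean w n fun c => B (c s + c t) := by
  refine (multinomialMean_mono hw n fun c => hφ (c s) (c t)).trans ?_
  rw [multinomialMean_add, multinomialMean_sq_mul_sub_mul hst, ← multinomialMean_const_mul,
    ← multinomialMean_add]
  exact multinomialMean_mono hw n fun c => hB (c s + c t)

end Multinomial

lemma ofReal_one_sub_multinomialMean_le_pi {α : Type*} [DecidableEq α] [Fintype α]
    [MeasurableSpace α] {w : α → ℝ} (hw : 0 ≤ w) {μ : Measure α} [IsProbabilityMeasure μ]
    (hμ : ∀ s, μ {s} = ENNReal.ofReal (w s)) (n : ℕ) (P : (α → ℕ) → Prop) [DecidablePred P] :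
    ENNReal.ofReal (1 - multinomialMean w n fun c => if P c then 1 else 0) ≤
      (Measure.pi fun _ : Fin n => μ) {ω | ¬ P (sampleCounts ω)} := by
  set π := Measure.pi fun _ : Fin n => μ
  have weight_nonneg (ω : Fin n → α) : 0 ≤ ∏ i, w (ω i) := prod_nonneg fun i _ => hw (ω i)
  have pi_singleton (ω : Fin n → α) : π {ω} = ENNReal.ofReal (∏ i, w (ω i)) := by
    simp only [π, Measure.pi_singleton, hμ, ENNReal.ofReal_prod_of_nonneg fun i _ => hw (ω i)]
  -- Singletons need not be measurable, so only upper bounds are available from them.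
  have pi_le : π {ω | P (sampleCounts ω)} ≤
      ENNReal.ofReal (multinomialMean w n fun c => if P c then 1 else 0) := by
    calc π {ω | P (sampleCounts ω)}
        = π (⋃ ω ∈ ({ω | P (sampleCounts ω)} : Finset (Fin n → α)), {ω}) := by
          congr 1
          ext ω
          simp
      _ ≤ ∑ ω with P (sampleCounts ω), π {ω} := measure_biUnion_finset_le _ _
      _ = ENNReal.ofReal (multinomialMean w n fun c => if P c then 1 else 0) := by
          simp only [pi_singleton, multinomialMean, mul_ite, mul_one, mul_zero, ← sum_filter]
          exact (ENNReal.ofReal_sum_of_nonneg fun ω _ => weight_nonneg ω).symm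
  have mean_nonneg : 0 ≤ multinomialMean w n fun c => if P c then 1 else 0 :=
    multinomialMean_nonneg hw n fun c => by split_ifs <;> norm_num
  rw [ENNReal.ofReal_sub _ mean_nonneg, ENNReal.ofReal_one, tsub_le_iff_left]
  calc 1 ≤ π {ω | P (sampleCounts ω)} + π {ω | P (sampleCounts ω)}ᶜ := by
        rw [← measure_univ (μ := π)]
        exact measure_univ_le_add_compl _
    _ ≤ _ := by gcongr; rfl

/-- The acceptance ratio estimated from `k` positive and `l` negative samples. -/
noncomputable def acceptanceRatio (k l : ℕ) : ℝ :=
  if k + l = 0 then 1 else max 0 (((k : ℝ) - l) / ((k : ℝ) + l))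

/-- The mean squared change of the acceptance ratio, up to normalization, when a positive sample
(weight `a`) or a negative sample (weight `b`) is added to `k` positive and `l` negative ones. -/
noncomputable def ratioEnergy (a b : ℝ) (k l : ℕ) : ℝ :=
  a * (acceptanceRatio (k + 1) l - acceptanceRatio k l) ^ 2 +
    b * (acceptanceRatio k (l + 1) - acceptanceRatio k l) ^ 2

lemma abs_acceptanceRatio_sub_le {k l k' l' : ℕ} (h : k + l ≠ 0) (h' : k' + l' ≠ 0) :
    |acceptanceRatio k' l' - acceptanceRatio k l| ≤
      |((k' : ℝ) - l') / ((k' : ℝ) + l') - ((k : ℝ) - l) / ((k : ℝ) + l)| := by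
  rw [acceptanceRatio, acceptanceRatio, if_neg h, if_neg h', max_comm 0, max_comm 0]
  exact abs_max_sub_max_le_abs _ _ _

lemma ratioEnergy_le_div {a b : ℝ} (ha : 0 ≤ a) (hb : 0 ≤ b) {k l : ℕ} (h : k + l ≠ 0) :
    ratioEnergy a b k l ≤ (a * l ^ 2 + b * k ^ 2) *
      (4 / (((k + l : ℕ) : ℝ) ^ 2 * (((k + l : ℕ) : ℝ) + 1) ^ 2)) := by
  have total_pos : (0 : ℝ) < (k : ℝ) + l := by exact_mod_cast Nat.pos_of_ne_zero h
  have add_positive : (acceptanceRatio (k + 1) l - acceptanceRatio k l) ^ 2 ≤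
      (2 * l / ((k + l) * (k + l + 1))) ^ 2 := by
    refine sq_le_sq.mpr ((abs_acceptanceRatio_sub_le h (by lia)).trans_eq (congrArg _ ?_))
    push_cast
    field_simp
    ring
  have add_negative : (acceptanceRatio k (l + 1) - acceptanceRatio k l) ^ 2 ≤
      (2 * k / ((k + l) * (k + l + 1))) ^ 2 := by
    rw [← neg_sq (2 * (k : ℝ) / _)]
    refine sq_le_sq.mpr ((abs_acceptanceRatio_sub_le h (by lia)).trans_eq (congrArg _ ?_))
    push_cast
    field_simp
    ring
  calc ratioEnergy a b k l
      ≤ a * (2 * l / ((k + l) * (k + l + 1))) ^ 2 +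
          b * (2 * k / ((k + l) * (k + l + 1))) ^ 2 := by
        unfold ratioEnergy
        gcongr
    _ = _ := by
        push_cast
        field_simp
        ring

lemma ratioEnergy_le_of_add_le_one {b : ℝ} (hb : 0 ≤ b) (a : ℝ) {k l : ℕ} (h : k + l ≤ 1) :
    ratioEnergy a b k l ≤ b := by
  obtain ⟨rfl, rfl⟩ | ⟨rfl, rfl⟩ | ⟨rfl, rfl⟩ :
      (k = 0 ∧ l = 0) ∨ (k = 1 ∧ l = 0) ∨ (k = 0 ∧ l = 1) := by lia
  all_goals norm_num [ratioEnergy, acceptanceRatio, hb]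

lemma mul_ratioEnergy_le {a b : ℝ} (ha : 0 ≤ a) (hb : 0 ≤ b) (k l : ℕ) :
    (a + b) * ratioEnergy a b k l ≤
      (if k + l ≤ 1 then b * (a + b)
        else 4 * (a * b) / (((k + l : ℕ) : ℝ) + 1) ^ 2) +
      (a * l - b * k) ^ 2 * (if k + l ≤ 1 then 0
        else 4 / (((k + l : ℕ) : ℝ) ^ 2 * (((k + l : ℕ) : ℝ) + 1) ^ 2)) := by
  split_ifs with h
  · rw [mul_zero, add_zero, mul_comm b]
    exact mul_le_mul_of_nonneg_left (ratioEnergy_le_of_add_le_one hb a h) (add_nonneg ha hb)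
  · have total_ne : k + l ≠ 0 := by lia
    refine (mul_le_mul_of_nonneg_left (ratioEnergy_le_div ha hb total_ne)
      (add_nonneg ha hb)).trans_eq ?_
    have square_split : (a + b) * (a * (l : ℝ) ^ 2 + b * (k : ℝ) ^ 2) =
        a * b * ((k + l : ℕ) : ℝ) ^ 2 + (a * l - b * k) ^ 2 := by
      push_cast
      ring
    rw [← mul_assoc, square_split]
    field_simp

lemma sq_mul_sub_acceptanceRatio_le {a b : ℝ} (hb : 0 ≤ b) (hba : b ≤ a) (k l : ℕ) :
    (((a - b) / (a + b) - acceptanceRatio k l) * (a + b)) ^ 2 ≤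
      (if k + l = 0 then 4 * (a * b) else 0) +
        (a * l - b * k) ^ 2 * (4 / ((k + l : ℕ) : ℝ) ^ 2) := by
  have ideal_nonneg : 0 ≤ (a - b) / (a + b) := div_nonneg (by linarith) (by linarith)
  have ideal_mul : (a - b) / (a + b) * (a + b) = a - b :=
    div_mul_cancel_of_imp fun _ => by linarith
  split_ifs with h
  · rw [acceptanceRatio, if_pos h, sub_mul, ideal_mul, h, Nat.cast_zero,
      zero_pow two_ne_zero, div_zero, mul_zero, add_zero]
    nlinarith
  · have total_pos : (0 : ℝ) < (k : ℝ) + l := by exact_mod_cast Nat.pos_of_ne_zero h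
    have clip_le : |(a - b) / (a + b) - acceptanceRatio k l| ≤
        |(a - b) / (a + b) - ((k : ℝ) - l) / ((k : ℝ) + l)| := by
      rw [acceptanceRatio, if_neg h]
      nth_rw 1 [← max_eq_right ideal_nonneg]
      rw [max_comm 0, max_comm 0]
      exact abs_max_sub_max_le_abs _ _ _
    calc _ ≤ (((a - b) / (a + b) - ((k : ℝ) - l) / ((k : ℝ) + l)) * (a + b)) ^ 2 := by
          rw [mul_pow, mul_pow]
          exact mul_le_mul_of_nonneg_right (sq_le_sq.mpr clip_le) (sq_nonneg _)
      _ = _ := by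
          rw [sub_mul, ideal_mul]
          push_cast
          field_simp
          ring

section Pair

variable {α : Type*} [DecidableEq α] [Fintype α] {w : α → ℝ} {s t : α}

lemma mul_multinomialMean_ratioEnergy_le (hw : 0 ≤ w) (hst : s ≠ t) (n : ℕ) :
    (w s + w t) * (multinomialMean w n fun c => ratioEnergy (w s) (w t) (c s) (c t)) ≤
      8 * (w t * (w s + w t)) * multinomialMean w n fun c =>
        1 / ((((c s + c t : ℕ) : ℝ) + 1) * (((c s + c t : ℕ) : ℝ) + 2)) := by
  have hs : 0 ≤ w s := hw s
  have ht : 0 ≤ w t := hw t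
  rw [← multinomialMean_const_mul, ← multinomialMean_const_mul]
  refine multinomialMean_le_of_le_add_sq_mul hw hst n
    (fun m => if m ≤ 1 then w t * (w s + w t) else 4 * (w s * w t) / ((m : ℝ) + 1) ^ 2)
    (fun m => if m ≤ 1 then 0 else 4 / ((m : ℝ) ^ 2 * ((m : ℝ) + 1) ^ 2))
    (B := fun m => 8 * (w t * (w s + w t)) * (1 / (((m : ℝ) + 1) * ((m : ℝ) + 2))))
    (mul_ratioEnergy_le hs ht) fun m => ?_
  have product_nonneg : 0 ≤ w t * (w s + w t) := mul_nonneg ht (add_nonneg hs ht)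
  split_ifs with hm
  · interval_cases m <;> norm_num <;> linarith
  · have two_le : (2 : ℝ) ≤ m := by exact_mod_cast (by lia : 2 ≤ m)
    calc _ = 4 * (w t * w s) * (1 / (((m : ℝ) + 1) * m)) := by
          field_simp
      _ ≤ 4 * (w t * (w s + w t)) * (2 / (((m : ℝ) + 1) * (m + 2))) := by
          gcongr ?_ * ?_
          · gcongr
            linarith
          · rw [div_le_div_iff₀ (by positivity) (by positivity)]
            nlinarith
      _ = _ := by ring

lemma multinomialMean_ratioEnergy_le (hw : w ∈ stdSimplex ℝ α) (hst : s ≠ t) (n : ℕ) :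
    (n + 1) * (n + 2) * ((w s + w t) ^ 2 *
      multinomialMean w n fun c => ratioEnergy (w s) (w t) (c s) (c t)) ≤ 8 * w t := by
  have hs := hw.1 s
  have ht := hw.1 t
  have inv_le := multinomialMean_inv_succ_mul_succ_le hw n {s, t}
  simp only [sum_pair hst] at inv_le
  calc _ = (n + 1) * (n + 2) * ((w s + w t) * ((w s + w t) *
        multinomialMean w n fun c => ratioEnergy (w s) (w t) (c s) (c t))) := by ring
    _ ≤ (n + 1) * (n + 2) * ((w s + w t) * (8 * (w t * (w s + w t)) * multinomialMean w n fun c =>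
        1 / ((((c s + c t : ℕ) : ℝ) + 1) * (((c s + c t : ℕ) : ℝ) + 2)))) := by
        gcongr (n + 1) * (n + 2) * ((w s + w t) * ?_)
        exact mul_multinomialMean_ratioEnergy_le hw.1 hst n
    _ = 8 * w t * ((n + 1) * (n + 2) * ((w s + w t) ^ 2 * multinomialMean w n fun c =>
        1 / ((((c s + c t : ℕ) : ℝ) + 1) * (((c s + c t : ℕ) : ℝ) + 2)))) := by ring
    _ ≤ 8 * w t := mul_le_of_le_one_right (by positivity) inv_le

lemma multinomialMean_sq_ratio_error_le (hw : w ∈ stdSimplex ℝ α) (hst : s ≠ t)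
    (hts : w t ≤ w s) (n : ℕ) :
    (n + 1) * ((w s + w t) * multinomialMean w n fun c =>
      (((w s - w t) / (w s + w t) - acceptanceRatio (c s) (c t)) * (w s + w t)) ^ 2) ≤
      8 * (w s * w t) := by
  have hs := hw.1 s
  have ht := hw.1 t
  have mean_le : (multinomialMean w n fun c =>
      (((w s - w t) / (w s + w t) - acceptanceRatio (c s) (c t)) * (w s + w t)) ^ 2) ≤
      8 * (w s * w t) * multinomialMean w n fun c => 1 / (((c s + c t : ℕ) : ℝ) + 1) := by
    rw [← multinomialMean_const_mul]
    refine multinomialMean_le_of_le_add_sq_mul hw.1 hst n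
      (fun m => if m = 0 then 4 * (w s * w t) else 0) (fun m => 4 / (m : ℝ) ^ 2)
      (B := fun m => 8 * (w s * w t) * (1 / ((m : ℝ) + 1)))
      (sq_mul_sub_acceptanceRatio_le ht hts) fun m => ?_
    split_ifs with hm
    · simp only [hm, Nat.cast_zero, zero_mul, mul_zero, add_zero, zero_add, div_one, mul_one]
      linarith [mul_nonneg hs ht]
    · have one_le : (1 : ℝ) ≤ m := by exact_mod_cast Nat.one_le_iff_ne_zero.mpr hm
      calc _ = 4 * (w s * w t) * (1 / m) := by field_simp; ring
        _ ≤ 4 * (w s * w t) * (2 / (m + 1)) := by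
            gcongr 4 * (w s * w t) * ?_
            rw [div_le_div_iff₀ (by positivity) (by positivity)]
            linarith
        _ = _ := by ring
  have inv_le := multinomialMean_inv_succ_le hw n {s, t}
  simp only [sum_pair hst] at inv_le
  calc _ ≤ (n + 1) * ((w s + w t) * (8 * (w s * w t) *
        multinomialMean w n fun c => 1 / (((c s + c t : ℕ) : ℝ) + 1))) := by gcongr
    _ = 8 * (w s * w t) * ((n + 1) * ((w s + w t) *
        multinomialMean w n fun c => 1 / (((c s + c t : ℕ) : ℝ) + 1))) := by ring
    _ ≤ 8 * (w s * w t) := mul_le_of_le_one_right (by positivity) inv_le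

lemma multinomialMean_abs_ratio_error_le (hw : w ∈ stdSimplex ℝ α) (hst : s ≠ t)
    (hts : w t ≤ w s) (n : ℕ) :
    (multinomialMean w n fun c =>
      |(w s - w t) / (w s + w t) - acceptanceRatio (c s) (c t)| * (w s + w t)) ≤
      √(8 / (n + 1)) * √(w s * w t / (w s + w t)) := by
  have hs := hw.1 s
  have ht := hw.1 t
  rw [← Real.sqrt_mul (by positivity)]
  apply Real.le_sqrt_of_sq_le
  obtain weight_eq | weight_pos := (add_nonneg hs ht).eq_or_lt
  · simp only [← weight_eq, mul_zero, multinomialMean_const hw.2, div_zero]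
    norm_num
  · refine (sq_multinomialMean_le hw n _).trans ?_
    rw [div_mul_div_comm, le_div_iff₀ (by positivity)]
    simp only [mul_pow, sq_abs]
    simp only [← mul_pow]
    linarith [multinomialMean_sq_ratio_error_le hw hst hts n]

end Pair

lemma sqrt_div_mul_add_sqrt_le {r m A v t δ : ℝ} (hr : 0 ≤ r) (hm : 0 < m) (ht : 0 ≤ t)
    (h : r * (A + √(v / δ)) ^ 2 ≤ m * t ^ 2) :
    √(r / m) * A + √(r / m * v / δ) ≤ t := by
  rw [mul_div_assoc, Real.sqrt_mul (by positivity), ← mul_add]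
  refine le_of_sq_le_sq ?_ ht
  rwa [mul_pow, Real.sq_sqrt (by positivity), div_mul_eq_mul_div, div_le_iff₀' hm]

section Label

variable {ι : Type*}

/-- The total weight `q x` of the label `x` when the signs `true` and `false` are merged. -/
def labelWeight (w : ι × Bool → ℝ) (x : ι) : ℝ := w (x, true) + w (x, false)

/-- The ideal acceptance ratio `μ x = p x / (γ * q x)`: the signed fraction of the weight at `x`,
equal to `0` when `x` has no weight. -/
noncomputable def idealRatio (w : ι × Bool → ℝ) (x : ι) : ℝ :=
  (w (x, true) - w (x, false)) / labelWeight w x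

variable [Fintype ι]

/-- The weighted `ℓ¹` distance between the ideal acceptance ratios and those estimated from the
counts `c`, that is, `Δ / γ` in the notation of the paper. -/
noncomputable def ratioError (w : ι × Bool → ℝ) (c : ι × Bool → ℕ) : ℝ :=
  ∑ x, |idealRatio w x - acceptanceRatio (c (x, true)) (c (x, false))| * labelWeight w x

variable {w : ι × Bool → ℝ}

lemma sq_ratioError_sub_le {x : ι} {c c' : ι × Bool → ℕ}
    (hc : ∀ y, y ≠ x → ∀ b, c' (y, b) = c (y, b)) :
    (ratioError w c' - ratioError w c) ^ 2 ≤ labelWeight w x ^ 2 *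
      (acceptanceRatio (c' (x, true)) (c' (x, false)) -
        acceptanceRatio (c (x, true)) (c (x, false))) ^ 2 := by
  have diff_eq : ratioError w c' - ratioError w c = labelWeight w x *
      (|idealRatio w x - acceptanceRatio (c' (x, true)) (c' (x, false))| -
        |idealRatio w x - acceptanceRatio (c (x, true)) (c (x, false))|) := by
    unfold ratioError
    rw [← sum_sub_distrib, Fintype.sum_eq_single x fun y hy => by simp only [hc y hy, sub_self]]
    ring
  rw [diff_eq, mul_pow]
  refine mul_le_mul_of_nonneg_left (sq_le_sq.mpr ?_) (sq_nonneg _)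
  refine (abs_abs_sub_abs_le_abs_sub _ _).trans_eq ?_
  rw [sub_sub_sub_cancel_left, abs_sub_comm]

lemma mul_sum_sqrt_lt_of_add_sqrt_le (hw : 0 ≤ w) {r v t δ : ℝ} (hv : 0 < v) (ht : 0 < t)
    (hδ : 0 < δ) (h : r * ∑ x, √(w (x, true) * w (x, false) / labelWeight w x) +
      √(v * (∑ x, w (x, false)) / δ) ≤ t) :
    r * ∑ x, √(w (x, true) * w (x, false) / labelWeight w x) < t := by
  obtain total_eq | total_pos := (sum_nonneg fun x _ => hw (x, false)).eq_or_lt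
  · have false_eq (x : ι) : w (x, false) = 0 :=
      (sum_eq_zero_iff_of_nonneg fun x _ => hw (x, false)).mp total_eq.symm x (mem_univ x)
    simpa [false_eq] using ht
  · have deviation_pos : 0 < √(v * (∑ x, w (x, false)) / δ) := Real.sqrt_pos.mpr (by positivity)
    linarith

variable [DecidableEq ι]

lemma multinomialMean_ratioError_le (hw : w ∈ stdSimplex ℝ (ι × Bool))
    (hsign : ∀ x, w (x, false) ≤ w (x, true)) (n : ℕ) :
    multinomialMean w n (ratioError w) ≤
      √(8 / (n + 1)) * ∑ x, √(w (x, true) * w (x, false) / labelWeight w x) := by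
  unfold ratioError
  rw [multinomialMean_sum, mul_sum]
  exact sum_le_sum fun x _ =>
    multinomialMean_abs_ratio_error_le hw (by simp) (hsign x) n

lemma addSampleEnergy_ratioError_le (hw : 0 ≤ w) (c : ι × Bool → ℕ) :
    addSampleEnergy w (ratioError w) c ≤ ∑ x, labelWeight w x ^ 2 *
      ratioEnergy (w (x, true)) (w (x, false)) (c (x, true)) (c (x, false)) := by
  rw [addSampleEnergy, Fintype.sum_prod_type]
  refine sum_le_sum fun x _ => ?_
  have jump_le (b : Bool) := mul_le_mul_of_nonneg_left
    (sq_ratioError_sub_le (w := w) (x := x) (c := c) (c' := c + Pi.single (x, b) 1)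
      fun y hy b' => by simp [hy]) (hw (x, b))
  have positive_le := jump_le true
  have negative_le := jump_le false
  simp only [Pi.add_apply, Pi.single_eq_same, ne_eq, Prod.mk.injEq, Bool.false_eq_true,
    Bool.true_eq_false, and_false, not_false_eq_true, Pi.single_eq_of_ne, add_zero]
    at positive_le negative_le
  rw [Fintype.sum_bool, ratioEnergy]
  linarith

lemma multinomialVar_ratioError_le (hw : w ∈ stdSimplex ℝ (ι × Bool)) (n : ℕ) :
    multinomialVar w n (ratioError w) ≤ 8 / (n + 1) * ∑ x, w (x, false) := by
  have false_nonneg : 0 ≤ ∑ x, w (x, false) := sum_nonneg fun x _ => hw.1 (x, false)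
  cases n with
  | zero =>
    rw [multinomialVar_zero hw.2]
    positivity
  | succ n =>
    have energy_le : (n + 1) * (n + 2) * multinomialMean w n (addSampleEnergy w (ratioError w)) ≤
        8 * ∑ x, w (x, false) := by
      calc _ ≤ (n + 1) * (n + 2) * multinomialMean w n fun c => ∑ x, labelWeight w x ^ 2 *
            ratioEnergy (w (x, true)) (w (x, false)) (c (x, true)) (c (x, false)) := by
            gcongr
            exact multinomialMean_mono hw.1 n (addSampleEnergy_ratioError_le hw.1)
        _ ≤ 8 * ∑ x, w (x, false) := by
            simp only [multinomialMean_sum, multinomialMean_const_mul, mul_sum]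
            exact sum_le_sum fun x _ => multinomialMean_ratioEnergy_le hw (by simp) n
    refine (multinomialVar_succ_le hw n _).trans ?_
    rw [div_mul_eq_mul_div, le_div_iff₀ (by positivity)]
    push_cast
    linarith

theorem ofReal_one_sub_le_pi_ratioError_le [MeasurableSpace ι]
    (hw : w ∈ stdSimplex ℝ (ι × Bool)) (hsign : ∀ x, w (x, false) ≤ w (x, true))
    {μ : Measure (ι × Bool)} [IsProbabilityMeasure μ]
    (hμ : ∀ s, μ {s} = ENNReal.ofReal (w s)) (n : ℕ) {t δ : ℝ} (ht : 0 < t) (hδ : 0 < δ)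
    (hn : 8 * (∑ x, √(w (x, true) * w (x, false) / labelWeight w x) +
      √((∑ x, w (x, false)) / δ)) ^ 2 ≤ (n + 1) * t ^ 2) :
    ENNReal.ofReal (1 - δ) ≤
      (Measure.pi fun _ : Fin n => μ) {ω | ratioError w (sampleCounts ω) ≤ t} := by
  have threshold := sqrt_div_mul_add_sqrt_le (by norm_num) n.cast_add_one_pos ht.le hn
  have exceed_le := multinomialMean_indicator_lt_le_of_add_sqrt_le hw.1 n
    (multinomialMean_ratioError_le hw hsign n) (multinomialVar_ratioError_le hw n) hδ
    (mul_sum_sqrt_lt_of_add_sqrt_le hw.1 (by positivity) ht hδ threshold) threshold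
  calc ENNReal.ofReal (1 - δ)
      ≤ ENNReal.ofReal
          (1 - multinomialMean w n fun c => if t < ratioError w c then 1 else 0) := by gcongr
    _ ≤ (Measure.pi fun _ : Fin n => μ) {ω | ¬ t < ratioError w (sampleCounts ω)} :=
        ofReal_one_sub_multinomialMean_le_pi hw.1 hμ n _
    _ = (Measure.pi fun _ : Fin n => μ) {ω | ratioError w (sampleCounts ω) ≤ t} := by
        simp only [not_lt]

end Label

section Sampling

variable {ι : Type*} {pp pm : ι → ℝ} {cp cm : ℝ}

/-- The joint distribution of the label and the sign of one sample of the quasiprobability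
decomposition `cp • pp - cm • pm`; the sign `+1` is encoded as `true` and `-1` as `false`. -/
noncomputable def sampleWeight (cp cm : ℝ) (pp pm : ι → ℝ) : ι × Bool → ℝ
  | (x, true) => cp * pp x / (cp + cm)
  | (x, false) => cm * pm x / (cp + cm)

lemma labelWeight_sampleWeight (x : ι) :
    labelWeight (sampleWeight cp cm pp pm) x = (cp * pp x + cm * pm x) / (cp + cm) :=
  (add_div _ _ _).symm

lemma idealRatio_sampleWeight (x : ι) :
    idealRatio (sampleWeight cp cm pp pm) x =
      if labelWeight (sampleWeight cp cm pp pm) x = 0 then 0 else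
        (cp * pp x - cm * pm x) / ((cp + cm) * labelWeight (sampleWeight cp cm pp pm) x) := by
  split_ifs with h
  · rw [idealRatio, h, div_zero]
  · rw [idealRatio, sampleWeight, sampleWeight, ← sub_div, div_div]

variable [Fintype ι]

lemma sampleWeight_mem_stdSimplex (hcp : 0 ≤ cp) (hcm : 0 ≤ cm) (hc : cp + cm ≠ 0)
    (hpp : pp ∈ stdSimplex ℝ ι) (hpm : pm ∈ stdSimplex ℝ ι) :
    sampleWeight cp cm pp pm ∈ stdSimplex ℝ (ι × Bool) := by
  refine ⟨?_, ?_⟩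
  · rintro ⟨x, _ | _⟩
    · exact div_nonneg (mul_nonneg hcm (hpm.1 x)) (add_nonneg hcp hcm)
    · exact div_nonneg (mul_nonneg hcp (hpp.1 x)) (add_nonneg hcp hcm)
  · simp only [Fintype.sum_prod_type, Fintype.sum_bool, sampleWeight, sum_add_distrib,
      ← sum_div, ← mul_sum, hpp.2, hpm.2, mul_one, ← add_div, div_self hc]

lemma sum_sampleWeight_false (hpm : ∑ x, pm x = 1) :
    ∑ x, sampleWeight cp cm pp pm (x, false) = cm / (cp + cm) := by
  simp only [sampleWeight, ← sum_div, ← mul_sum, hpm, mul_one]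

lemma sum_sqrt_sampleWeight (hc : 0 < cp + cm) :
    ∑ x, √(sampleWeight cp cm pp pm (x, true) * sampleWeight cp cm pp pm (x, false) /
        labelWeight (sampleWeight cp cm pp pm) x) =
      (∑ x, √(cp * cm * pp x * pm x / (cp * pp x + cm * pm x))) / √(cp + cm) := by
  rw [sum_div]
  refine sum_congr rfl fun x _ => ?_
  rw [← Real.sqrt_div' _ hc.le, labelWeight_sampleWeight, sampleWeight, sampleWeight]
  congr 1
  field_simp

theorem acceptance_ratio_estimation_cost_first_bound_general [DecidableEq ι] [MeasurableSpace ι]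
    (hpp : pp ∈ stdSimplex ℝ ι) (hpm : pm ∈ stdSimplex ℝ ι) (hcp : 0 ≤ cp) (hcm : 0 ≤ cm)
    (hc : 0 < cp + cm) (hp : ∀ x, 0 ≤ cp * pp x - cm * pm x)
    {μ : Measure (ι × Bool)} [IsProbabilityMeasure μ]
    (hμ : ∀ s, μ {s} = ENNReal.ofReal (sampleWeight cp cm pp pm s))
    (n : ℕ) {t δ : ℝ} (ht : 0 < t) (hδ : 0 < δ)
    (hn : 8 * (cp + cm) * (∑ x, √(cp * cm * pp x * pm x / (cp * pp x + cm * pm x)) +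
      √(cm / δ)) ^ 2 ≤ (n + 1) * t ^ 2) :
    ENNReal.ofReal (1 - δ) ≤ (Measure.pi fun _ : Fin n => μ)
      {ω | (cp + cm) * ratioError (sampleWeight cp cm pp pm) (sampleCounts ω) ≤ t} := by
  have sign_le (x : ι) :
      sampleWeight cp cm pp pm (x, false) ≤ sampleWeight cp cm pp pm (x, true) :=
    div_le_div_of_nonneg_right (sub_nonneg.mp (hp x)) hc.le
  simp only [← le_div_iff₀' hc]
  refine ofReal_one_sub_le_pi_ratioError_le
    (sampleWeight_mem_stdSimplex hcp hcm hc.ne' hpp hpm) sign_le hμ n (div_pos ht hc) hδ ?_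
  rw [sum_sqrt_sampleWeight hc, sum_sampleWeight_false hpm.2, div_right_comm cm,
    Real.sqrt_div' _ hc.le, ← add_div, div_pow, Real.sq_sqrt hc.le, div_pow, ← mul_div_assoc,
    ← mul_div_assoc, div_le_div_iff₀ hc (pow_pos hc 2)]
  linarith [mul_le_mul_of_nonneg_right hn hc.le]

end Sampling

/-- Theorem 2 / Theorem S2, estimation stage, first bound. With
`S = (∑_x √(c₊c₋p⁺ₓp⁻ₓ/(c₊p⁺ₓ + c₋p⁻ₓ)))²`, if the number of samples satisfies
`N ≥ 8γ((1+ε)/ε)²(√S + √(c₋/δ₁))²`, then with probability at least `1 − δ₁` the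
estimated acceptance ratios `R` (built from the counts `N⁺ₓ, N⁻ₓ` of the `N`
i.i.d. samples) satisfy `γ·∑_x |μₓ − Rₓ|·qₓ ≤ ε/(1+ε)`, where `μₓ = pₓ/(γqₓ)` is
the ideal acceptance ratio. -/
theorem acceptance_ratio_estimation_cost_first_bound
    {ι : Type*} [Fintype ι] [DecidableEq ι] [MeasurableSpace ι]
    (pp pm : ι → ℝ)
    (hpp0 : ∀ x, 0 ≤ pp x) (hpp1 : ∑ x, pp x = 1)
    (hpm0 : ∀ x, 0 ≤ pm x) (hpm1 : ∑ x, pm x = 1)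
    (cp cm : ℝ) (hcp : 0 ≤ cp) (hcm : 0 ≤ cm) (hc : cp - cm = 1)
    (γ : ℝ) (hγ : γ = cp + cm)
    (p : ι → ℝ) (hp : ∀ x, p x = cp * pp x - cm * pm x)
    (hp0 : ∀ x, 0 ≤ p x)
    (q : ι → ℝ) (hq : ∀ x, q x = (cp * pp x + cm * pm x) / γ)
    (μ1 : Measure (ι × Bool)) [IsProbabilityMeasure μ1]
    (hμt : ∀ x, μ1 {(x, true)} = ENNReal.ofReal (cp * pp x / γ))
    (hμf : ∀ x, μ1 {(x, false)} = ENNReal.ofReal (cm * pm x / γ))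
    (N : ℕ) (hN : 0 < N)
    (R : ι → (Fin N → ι × Bool) → ℝ)
    (hR : ∀ x ω, R x ω =
      if ((Finset.univ.filter fun i => ω i = (x, true)).card
           + (Finset.univ.filter fun i => ω i = (x, false)).card) = 0
      then 1
      else max 0
        ((((Finset.univ.filter fun i => ω i = (x, true)).card : ℝ)
            - ((Finset.univ.filter fun i => ω i = (x, false)).card : ℝ))
          / (((Finset.univ.filter fun i => ω i = (x, true)).card : ℝ)
            + ((Finset.univ.filter fun i => ω i = (x, false)).card : ℝ))))
    (μid : ι → ℝ) (hμid : ∀ x, μid x = if q x = 0 then 0 else p x / (γ * q x))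
    (S : ℝ)
    (hS : S = (∑ x, Real.sqrt (cp * cm * pp x * pm x / (cp * pp x + cm * pm x))) ^ 2)
    (ε δ₁ : ℝ) (hε : 0 < ε) (hδ₁0 : 0 < δ₁) (hδ₁1 : δ₁ < 1)
    (hNbound : (N : ℝ) ≥ 8 * γ * ((1 + ε) / ε) ^ 2 *
      (Real.sqrt S + Real.sqrt (cm / δ₁)) ^ 2) :
    ENNReal.ofReal (1 - δ₁) ≤
      (Measure.pi fun _ : Fin N => μ1)
        {ω | γ * ∑ x, |μid x - R x ω| * q x ≤ ε / (1 + ε)} := by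
  subst hγ hS
  have hγ0 : 0 < cp + cm := by linarith
  have weight_eq (s : ι × Bool) : μ1 {s} = ENNReal.ofReal (sampleWeight cp cm pp pm s) :=
    match s with
    | (x, true) => hμt x
    | (x, false) => hμf x
  have error_eq (ω : Fin N → ι × Bool) :
      ∑ x, |μid x - R x ω| * q x =
        ratioError (sampleWeight cp cm pp pm) (sampleCounts ω) := by
    refine sum_congr rfl fun x _ => ?_
    rw [idealRatio_sampleWeight, labelWeight_sampleWeight, ← hp, ← hq, ← hμid, hR]
    rfl
  have bound : 8 * (cp + cm) *
      (∑ x, √(cp * cm * pp x * pm x / (cp * pp x + cm * pm x)) + √(cm / δ₁)) ^ 2 ≤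
        (N + 1) * (ε / (1 + ε)) ^ 2 := by
    rw [Real.sqrt_sq (sum_nonneg fun x _ => Real.sqrt_nonneg _)] at hNbound
    rw [← div_le_iff₀ (by positivity), div_eq_mul_inv, ← inv_pow, inv_div, mul_right_comm]
    linarith
  simp only [error_eq]
  exact acceptance_ratio_estimation_cost_first_bound_general ⟨hpp0, hpp1⟩ ⟨hpm0, hpm1⟩ hcp hcm
    hγ0 (fun x => hp x ▸ hp0 x) weight_eq N (by positivity) hδ₁0 bound
end

section
/- For ε > 0 and δ₁ ∈ (0,1), if the number of samples N satisfies N ≥ 8·c₋·γ·((1+ε)/ε)²·( ∑_x √(p⁻_x) + δ₁^{−1/2} )², then with probability at least 1 − δ₁ the estimated acceptance ratios satisfy Δ := γ·∑_x |μ_x − R_x|·q_x ≤ ε/(1+ε). (Theorem 2, estimation stage, Rényi-entropy form: the factor ∑_x √(p⁻_x) equals 2^{H_{1/2}(p⁻)/2}.) -/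
open MeasureTheory Finset

/-!
Condition on the labels `X_i`: the signs attached to different labels are then independent, and the
error at a label is at most the absolute sample mean of the centred signs seen there. The expected
absolute sample mean decreases with the sample size, because the mean of a sample is the average of
its leave-one-out means. Multinomial counts are negatively associated, so the errors at distinct
labels are nonpositively correlated, and the variance of the total error is at most the sum of the
second moments. As `E[1 / (n + 1)] ≤ 1 / ((N + 1) q)` for a binomial count `n` with parameters `N`
and `q`, the second moment at `x` is at most `8 c₋ p⁻_x / (γ (N + 1))`. Cauchy–Schwarz bounds the
mean of the total error, and Chebyshev's inequality its deviation from the mean.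
-/

section PositiveFunctional

variable {Ω : Type*}

/-- A positive linear functional of total mass one on real functions, i.e. the expectation of a
finitely additive probability. Finite sums with nonnegative weights are handled through it without
building a measure. -/
structure IsExpectation (E : (Ω → ℝ) →ₗ[ℝ] ℝ) : Prop where
  monotone : Monotone E
  map_one : E 1 = 1

namespace IsExpectation

variable {E : (Ω → ℝ) →ₗ[ℝ] ℝ}

theorem map_sub_mean_sq (hE : IsExpectation E) (X : Ω → ℝ) :
    E ((X - E X • 1) ^ 2) = E (X ^ 2) - E X ^ 2 := by
  have expand : (X - E X • 1) ^ 2 = X ^ 2 - (2 * E X) • X + (E X ^ 2) • 1 := by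
    ext ω
    simp only [Pi.pow_apply, Pi.sub_apply, Pi.add_apply, Pi.smul_apply, Pi.one_apply, smul_eq_mul]
    ring
  rw [expand, map_add, map_sub, map_smul, map_smul, hE.map_one, smul_eq_mul, smul_eq_mul]
  ring

theorem map_sq_le (hE : IsExpectation E) (X : Ω → ℝ) : E X ^ 2 ≤ E (X ^ 2) := by
  have variance_nonneg : 0 ≤ E ((X - E X • 1) ^ 2) := by
    simpa using hE.monotone (show 0 ≤ (X - E X • 1) ^ 2 from fun _ => sq_nonneg _)
  rwa [hE.map_sub_mean_sq, sub_nonneg] at variance_nonneg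

theorem variance_sum_le (hE : IsExpectation E) {ι : Type*} [Fintype ι] {X : ι → Ω → ℝ}
    (hcorr : Pairwise fun x y => E (X x * X y) ≤ E (X x) * E (X y)) :
    E ((∑ x, X x - E (∑ x, X x) • 1) ^ 2) ≤ ∑ x, E (X x ^ 2) := by
  classical
  have second_moment_le (x y : ι) :
      E (X x * X y) ≤ E (X x) * E (X y) + if x = y then E (X x ^ 2) else 0 := by
    split_ifs with hxy
    · subst hxy
      rw [← sq, le_add_iff_nonneg_left]
      exact mul_self_nonneg _
    · simpa using hcorr hxy
  rw [hE.map_sub_mean_sq, sub_le_iff_le_add, map_sum]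
  calc
    E ((∑ x, X x) ^ 2) = ∑ x, ∑ y, E (X x * X y) := by
      simp only [sq, sum_mul_sum, map_sum]
    _ ≤ ∑ x, ∑ y, (E (X x) * E (X y) + if x = y then E (X x ^ 2) else 0) := by
      gcongr
      exact second_moment_le _ _
    _ = ∑ x, E (X x ^ 2) + (∑ x, E (X x)) ^ 2 := by
      simp [sum_add_distrib, sq, sum_mul_sum, add_comm]

theorem tail_le_variance_div_sq (hE : IsExpectation E) (Z : Ω → ℝ) {m t : ℝ} (hm : E Z ≤ m)
    (ht : 0 < t) :
    E ({ω | m + t < Z ω}.indicator 1) ≤ E ((Z - E Z • 1) ^ 2) / t ^ 2 := by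
  have indicator_le : t ^ 2 • {ω | m + t < Z ω}.indicator 1 ≤ (Z - E Z • 1) ^ 2 := by
    intro ω
    by_cases hω : m + t < Z ω
    · have : t ≤ Z ω - E Z := by linarith
      simpa [hω] using pow_le_pow_left₀ ht.le this 2
    · simpa [hω] using sq_nonneg (Z ω - E Z)
  rw [le_div_iff₀' (by positivity), ← smul_eq_mul, ← map_smul]
  exact hE.monotone indicator_le

theorem tail_sum_le (hE : IsExpectation E) {ι : Type*} [Fintype ι] {X : ι → Ω → ℝ} {v : ι → ℝ}
    (hcorr : Pairwise fun x y => E (X x * X y) ≤ E (X x) * E (X y))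
    (hv : ∀ x, E (X x ^ 2) ≤ v x) {t : ℝ} (ht : 0 < t) :
    E ({ω | ∑ x, √(v x) + t < ∑ x, X x ω}.indicator 1) ≤ (∑ x, v x) / t ^ 2 := by
  have mean_le : E (∑ x, X x) ≤ ∑ x, √(v x) := by
    rw [map_sum]
    gcongr with x
    exact Real.le_sqrt_of_sq_le ((hE.map_sq_le _).trans (hv x))
  have tail_le := hE.tail_le_variance_div_sq _ mean_le ht
  simp only [Finset.sum_apply] at tail_le
  refine tail_le.trans ?_
  gcongr
  exact (hE.variance_sum_le hcorr).trans (sum_le_sum fun x _ => hv x)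

end IsExpectation

end PositiveFunctional

section WeightedSums

variable {α : Type*} [Fintype α]

theorem sum_mul_mul_le_of_sub_mul_sub_eq_zero {w : α → ℝ} (hw₀ : ∀ a, 0 ≤ w a)
    (hw₁ : ∑ a, w a = 1) {φ ψ : α → ℝ} {A B : ℝ} (hφ : ∀ a, φ a ≤ A) (hψ : ∀ a, ψ a ≤ B)
    (h : ∀ a, (A - φ a) * (B - ψ a) = 0) :
    ∑ a, w a * (φ a * ψ a) ≤ (∑ a, w a * φ a) * ∑ a, w a * ψ a := by
  have mean_le {χ : α → ℝ} {C : ℝ} (hχ : ∀ a, χ a ≤ C) : ∑ a, w a * χ a ≤ C := by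
    calc
      _ ≤ ∑ a, w a * C := sum_le_sum fun a _ => mul_le_mul_of_nonneg_left (hχ a) (hw₀ a)
      _ = C := by rw [← sum_mul, hw₁, one_mul]
  have expand : ∑ a, w a * (φ a * ψ a)
      = A * ∑ a, w a * ψ a + B * ∑ a, w a * φ a - A * B * ∑ a, w a := by
    rw [mul_sum, mul_sum, mul_sum, ← sum_add_distrib, ← sum_sub_distrib]
    exact sum_congr rfl fun a _ => by linear_combination w a * h a
  rw [expand, hw₁]
  linarith [mul_nonneg (sub_nonneg.2 (mean_le hφ)) (sub_nonneg.2 (mean_le hψ))]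

/-- The sum of the values `u` over a sample in which the letter `a` occurs `c a` times. -/
def weightedCount (u : α → ℝ) (c : α → ℕ) : ℝ :=
  ∑ a, u a * c a

theorem weightedCount_zero (u : α → ℝ) : weightedCount u 0 = 0 := by
  simp [weightedCount]

theorem weightedCount_add_single [DecidableEq α] (u : α → ℝ) (c : α → ℕ) (a : α) :
    weightedCount u (c + Pi.single a 1) = weightedCount u c + u a := by
  simp [weightedCount, mul_add, sum_add_distrib, Pi.single_apply]

/-- The absolute value of the mean of `u` over a sample in which the letter `a` occurs `c a` times.
On the empty sample it is the expectation of `|u|` under `w`, which makes the expected value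
antitone in the sample size from size `0` on. -/
noncomputable def absSampleMean (w u : α → ℝ) (c : α → ℕ) : ℝ :=
  if ∑ a, c a = 0 then ∑ a, w a * |u a| else |weightedCount u c| / ∑ a, (c a : ℝ)

theorem absSampleMean_eq_div (w u : α → ℝ) {N : ℕ} {c : α → ℕ} (hN : N ≠ 0) (hc : ∑ a, c a = N) :
    absSampleMean w u c = |weightedCount u c| / N := by
  rw [absSampleMean, if_neg (hc ▸ hN), ← hc, Nat.cast_sum]

end WeightedSums

section Multinomial

variable {α : Type*} [DecidableEq α]

/-- The number of occurrences of the letter `a` in the word `ω`. -/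
def letterCount {N : ℕ} (ω : Fin N → α) (a : α) : ℕ :=
  #{i | ω i = a}

theorem letterCount_cons {N : ℕ} (a : α) (ω : Fin N → α) :
    letterCount (Fin.cons a ω : Fin (N + 1) → α) = letterCount ω + Pi.single a 1 := by
  funext b
  simp only [letterCount, Fin.card_filter_univ_succ, Fin.cons_zero, Fin.cons_succ,
    Pi.add_apply, Pi.single_apply, eq_comm (a := b)]
  split_ifs <;> simp

theorem single_one_le_iff {a : α} {c : α → ℕ} : Pi.single a 1 ≤ c ↔ c a ≠ 0 := by
  rw [Pi.single, update_le_iff]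
  simp [Nat.one_le_iff_ne_zero]

theorem count_mul_add_single_sub_single (a b : α) (c : α → ℕ) (H : (α → ℕ) → ℝ) :
    ((c + Pi.single b 1 : α → ℕ) a : ℝ) * H (c + Pi.single b 1 - Pi.single a 1)
      = c a * H (c - Pi.single a 1 + Pi.single b 1) + if b = a then H c else 0 := by
  by_cases hca : c a = 0
  · by_cases hba : b = a
    · simp [hba, hca]
    · simp [hca, hba, Ne.symm hba]
  · have single_le : Pi.single a 1 ≤ c := single_one_le_iff.2 hca
    by_cases hba : b = a
    · subst hba
      rw [add_tsub_cancel_right, tsub_add_cancel_of_le single_le]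
      simp [add_mul]
    · simp [hba, Ne.symm hba, tsub_add_eq_add_tsub single_le]

variable [Fintype α]

theorem sum_letterCount {N : ℕ} (ω : Fin N → α) : ∑ a, letterCount ω a = N := by
  simpa [letterCount] using (card_eq_sum_card_fiberwise (f := ω) (s := univ) (t := univ)
    (fun _ _ => mem_coe.2 (mem_univ _))).symm

/-- The expectation of a function of the letter counts of a word of `N` independent letters with
distribution `w`. -/
def multinomialExp (w : α → ℝ) (N : ℕ) : ((α → ℕ) → ℝ) →ₗ[ℝ] ℝ where
  toFun Φ := ∑ ω : Fin N → α, (∏ i, w (ω i)) * Φ (letterCount ω)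
  map_add' Φ Ψ := by simp only [Pi.add_apply, mul_add, sum_add_distrib]
  map_smul' r Φ := by
    simp only [Pi.smul_apply, smul_eq_mul, RingHom.id_apply, mul_sum, mul_left_comm]

variable {w : α → ℝ}

theorem multinomialExp_apply (w : α → ℝ) (N : ℕ) (Φ : (α → ℕ) → ℝ) :
    multinomialExp w N Φ = ∑ ω : Fin N → α, (∏ i, w (ω i)) * Φ (letterCount ω) :=
  rfl

theorem multinomialExp_zero (w : α → ℝ) (Φ : (α → ℕ) → ℝ) : multinomialExp w 0 Φ = Φ 0 := by
  have count_eq_zero : letterCount (default : Fin 0 → α) = 0 := by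
    funext a
    simp [letterCount]
  simp [multinomialExp_apply, count_eq_zero]

theorem multinomialExp_succ (w : α → ℝ) (N : ℕ) (Φ : (α → ℕ) → ℝ) :
    multinomialExp w (N + 1) Φ
      = ∑ a, w a * multinomialExp w N (fun c => Φ (c + Pi.single a 1)) := by
  simp only [multinomialExp_apply, ← (Fin.consEquiv fun _ : Fin (N + 1) => α).sum_comp,
    Fintype.sum_prod_type, mul_sum]
  refine sum_congr rfl fun a _ => sum_congr rfl fun ω _ => ?_
  change (∏ i, w ((Fin.cons a ω : Fin (N + 1) → α) i)) * Φ (letterCount (Fin.cons a ω)) = _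
  simp only [letterCount_cons, Fin.prod_univ_succ, Fin.cons_zero, Fin.cons_succ, mul_assoc]

theorem multinomialExp_congr {N : ℕ} {Φ Ψ : (α → ℕ) → ℝ}
    (h : ∀ c, ∑ a, c a = N → Φ c = Ψ c) : multinomialExp w N Φ = multinomialExp w N Ψ :=
  sum_congr rfl fun ω _ => by rw [h _ (sum_letterCount ω)]

theorem multinomialExp_mono (hw : ∀ a, 0 ≤ w a) {N : ℕ} {Φ Ψ : (α → ℕ) → ℝ}
    (h : ∀ c, ∑ a, c a = N → Φ c ≤ Ψ c) : multinomialExp w N Φ ≤ multinomialExp w N Ψ :=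
  sum_le_sum fun ω _ =>
    mul_le_mul_of_nonneg_left (h _ (sum_letterCount ω)) (prod_nonneg fun _ _ => hw _)

theorem multinomialExp_one (hw : ∑ a, w a = 1) (N : ℕ) : multinomialExp w N 1 = 1 := by
  induction N with
  | zero => exact multinomialExp_zero w 1
  | succ N ih =>
    rw [multinomialExp_succ]
    change ∑ a, w a * multinomialExp w N 1 = 1
    rw [ih, ← sum_mul, hw, one_mul]

theorem isExpectation_multinomialExp (hw₀ : ∀ a, 0 ≤ w a) (hw₁ : ∑ a, w a = 1) (N : ℕ) :
    IsExpectation (multinomialExp w N) where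
  monotone _ _ h := multinomialExp_mono hw₀ fun c _ => h c
  map_one := multinomialExp_one hw₁ N

theorem multinomialExp_count_mul (w : α → ℝ) (a : α) (N : ℕ) (H : (α → ℕ) → ℝ) :
    multinomialExp w (N + 1) (fun c => c a * H (c - Pi.single a 1))
      = (N + 1) * w a * multinomialExp w N H := by
  induction N generalizing H with
  | zero =>
    rw [multinomialExp_succ]
    simp only [multinomialExp_zero, count_mul_add_single_sub_single]
    simp
  | succ N ih =>
    have split_count (b : α) :
        multinomialExp w (N + 1) (fun c =>
            ((c + Pi.single b 1 : α → ℕ) a : ℝ) * H (c + Pi.single b 1 - Pi.single a 1))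
          = (N + 1) * w a * multinomialExp w N (fun c => H (c + Pi.single b 1))
            + if b = a then multinomialExp w (N + 1) H else 0 := by
      simp only [count_mul_add_single_sub_single]
      rw [← ih]
      split_ifs <;> simp [← map_add, Pi.add_def]
    rw [multinomialExp_succ]
    simp only [split_count, mul_add, sum_add_distrib, mul_ite, mul_zero, sum_ite_eq', mem_univ,
      if_true, mul_left_comm (w _), ← mul_sum]
    rw [← multinomialExp_succ]
    push_cast
    ring

theorem mul_multinomialExp_inv_count_add_one_le (hw₀ : ∀ a, 0 ≤ w a) (hw₁ : ∑ a, w a = 1) (a : α)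
    (N : ℕ) : (N + 1) * w a * multinomialExp w N (fun c => (c a + 1 : ℝ)⁻¹) ≤ 1 := by
  rw [← multinomialExp_count_mul]
  refine (multinomialExp_mono hw₀ fun c _ => ?_).trans (multinomialExp_one hw₁ (N + 1)).le
  by_cases hca : c a = 0
  · simp [hca]
  · have cast_sub : ((c a - 1 : ℕ) : ℝ) + 1 = c a := by
      rw [Nat.cast_pred (Nat.pos_of_ne_zero hca), sub_add_cancel]
    simp [cast_sub, hca]

theorem multinomialExp_shift_le (hw : ∀ a, 0 ≤ w a) (N : ℕ) {f : (α → ℕ) → ℝ} (hf : Antitone f)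
    (a : α) : multinomialExp w N (fun c => f (c + Pi.single a 1)) ≤ multinomialExp w N f :=
  multinomialExp_mono hw fun _ _ => hf le_self_add

theorem multinomialExp_shift_eq_of_dependsOn (w : α → ℝ) (N : ℕ) {f : (α → ℕ) → ℝ} {s : Set α}
    (hf : DependsOn f s) {a : α} (ha : a ∉ s) :
    multinomialExp w N (fun c => f (c + Pi.single a 1)) = multinomialExp w N f :=
  multinomialExp_congr fun _ _ => hf fun b hb => by simp [ne_of_mem_of_not_mem hb ha]

theorem multinomialExp_mul_le_of_dependsOn_disjoint (hw₀ : ∀ a, 0 ≤ w a) (hw₁ : ∑ a, w a = 1)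
    (N : ℕ) {f g : (α → ℕ) → ℝ} (hf : Antitone f) (hg : Antitone g) {s t : Set α}
    (hst : Disjoint s t) (hfs : DependsOn f s) (hgt : DependsOn g t) :
    multinomialExp w N (f * g) ≤ multinomialExp w N f * multinomialExp w N g := by
  induction N generalizing f g with
  | zero => simp [multinomialExp_zero]
  | succ N ih =>
    have shift_mul_le (a : α) :
        multinomialExp w N (fun c => (f * g) (c + Pi.single a 1))
          ≤ multinomialExp w N (fun c => f (c + Pi.single a 1))
            * multinomialExp w N (fun c => g (c + Pi.single a 1)) :=
      ih (fun _ _ h => hf (add_le_add_left h _)) (fun _ _ h => hg (add_le_add_left h _))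
        (fun _ _ h => hfs fun b hb => by simp [h b hb])
        (fun _ _ h => hgt fun b hb => by simp [h b hb])
    simp only [multinomialExp_succ]
    refine (sum_le_sum fun a _ => mul_le_mul_of_nonneg_left (shift_mul_le a) (hw₀ a)).trans ?_
    -- The first letter lowers the conditional mean of at most one of `f` and `g`.
    refine sum_mul_mul_le_of_sub_mul_sub_eq_zero hw₀ hw₁ (multinomialExp_shift_le hw₀ N hf)
      (multinomialExp_shift_le hw₀ N hg) fun a => ?_
    by_cases ha : a ∈ s
    · rw [multinomialExp_shift_eq_of_dependsOn w N hgt (hst.notMem_of_mem_left ha), sub_self,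
        mul_zero]
    · rw [multinomialExp_shift_eq_of_dependsOn w N hfs ha, sub_self, zero_mul]

theorem multinomialExp_add_weightedCount_sq {u : α → ℝ} (hw : ∑ a, w a = 1)
    (hu : ∑ a, w a * u a = 0) (N : ℕ) (t : ℝ) :
    multinomialExp w N (fun c => (t + weightedCount u c) ^ 2)
      = t ^ 2 + N * ∑ a, w a * u a ^ 2 := by
  induction N generalizing t with
  | zero => simp [multinomialExp_zero, weightedCount_zero]
  | succ N ih =>
    calc
      _ = ∑ a, w a * ((t + u a) ^ 2 + N * ∑ b, w b * u b ^ 2) := by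
        simp only [multinomialExp_succ, weightedCount_add_single, ← ih, add_assoc, add_comm (u _)]
      _ = (t ^ 2 + N * ∑ b, w b * u b ^ 2) * ∑ a, w a + 2 * t * ∑ a, w a * u a
            + ∑ a, w a * u a ^ 2 := by
        rw [mul_sum univ w, mul_sum _ _ (2 * t), ← sum_add_distrib, ← sum_add_distrib]
        exact sum_congr rfl fun a _ => by ring
      _ = t ^ 2 + (N + 1 : ℕ) * ∑ a, w a * u a ^ 2 := by
        rw [hw, hu]
        push_cast
        ring

theorem count_mul_weightedCount_sub_single (u : α → ℝ) (c : α → ℕ) (a : α) :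
    c a * |weightedCount u (c - Pi.single a 1)| = |c a * (weightedCount u c - u a)| := by
  rw [abs_mul, Nat.abs_cast]
  by_cases hca : c a = 0
  · simp [hca]
  · have single_le : Pi.single a 1 ≤ c := single_one_le_iff.2 hca
    rw [← tsub_add_cancel_of_le single_le, weightedCount_add_single]
    simp

theorem mul_abs_weightedCount_le (u : α → ℝ) {N : ℕ} {c : α → ℕ} (hc : ∑ a, c a = N + 1) :
    N * |weightedCount u c| ≤ ∑ a, c a * |weightedCount u (c - Pi.single a 1)| := by
  have leave_one_out : N * weightedCount u c = ∑ a, c a * (weightedCount u c - u a) := by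
    have hc' : ∑ a, (c a : ℝ) = N + 1 := by exact_mod_cast hc
    simp only [mul_sub, sum_sub_distrib, ← sum_mul, hc', mul_comm _ (u _)]
    rw [← weightedCount]
    ring
  simp only [count_mul_weightedCount_sub_single]
  rw [← Nat.abs_cast N, ← abs_mul, leave_one_out]
  exact abs_sum_le_sum_abs _ _

theorem mul_multinomialExp_abs_weightedCount_succ_le (hw₀ : ∀ a, 0 ≤ w a) (hw₁ : ∑ a, w a = 1)
    (u : α → ℝ) (N : ℕ) :
    N * multinomialExp w (N + 1) (fun c => |weightedCount u c|)
      ≤ (N + 1) * multinomialExp w N (fun c => |weightedCount u c|) :=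
  calc
    _ = multinomialExp w (N + 1) (fun c => N * |weightedCount u c|) :=
      (map_smul (multinomialExp w (N + 1)) (N : ℝ) _).symm
    _ ≤ multinomialExp w (N + 1)
          (∑ a, fun c => c a * |weightedCount u (c - Pi.single a 1)|) := by
      refine multinomialExp_mono hw₀ fun c hc => ?_
      rw [Finset.sum_apply]
      exact mul_abs_weightedCount_le u hc
    _ = ∑ a, (N + 1) * w a * multinomialExp w N (fun c => |weightedCount u c|) := by
      rw [map_sum]
      exact sum_congr rfl fun a _ => multinomialExp_count_mul w a N fun c => |weightedCount u c|
    _ = _ := by rw [← sum_mul, ← mul_sum, hw₁, mul_one]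

theorem multinomialExp_absSampleMean (w u : α → ℝ) {N : ℕ} (hN : N ≠ 0) :
    multinomialExp w N (absSampleMean w u)
      = multinomialExp w N (fun c => |weightedCount u c|) / N := by
  rw [div_eq_inv_mul, ← smul_eq_mul, ← map_smul]
  refine multinomialExp_congr fun c hc => ?_
  rw [absSampleMean_eq_div w u hN hc, div_eq_inv_mul, Pi.smul_apply, smul_eq_mul]

theorem antitone_multinomialExp_absSampleMean (hw₀ : ∀ a, 0 ≤ w a) (hw₁ : ∑ a, w a = 1)
    (u : α → ℝ) : Antitone fun N => multinomialExp w N (absSampleMean w u) := by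
  refine antitone_nat_of_succ_le fun N => ?_
  rcases eq_or_ne N 0 with rfl | hN
  · refine le_of_eq ?_
    rw [multinomialExp_absSampleMean w u (zero_add 1 ▸ one_ne_zero), multinomialExp_succ]
    simp [multinomialExp_zero, weightedCount_add_single, weightedCount_zero, absSampleMean]
  · rw [multinomialExp_absSampleMean w u hN, multinomialExp_absSampleMean w u N.succ_ne_zero,
      div_le_div_iff₀ (by positivity) (by positivity)]
    push_cast
    linarith [mul_multinomialExp_abs_weightedCount_succ_le hw₀ hw₁ u N]

theorem multinomialExp_absSampleMean_sq {u : α → ℝ} (hw : ∑ a, w a = 1)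
    (hu : ∑ a, w a * u a = 0) {N : ℕ} (hN : N ≠ 0) :
    multinomialExp w N (absSampleMean w u ^ 2) = (∑ a, w a * u a ^ 2) * (N : ℝ)⁻¹ := by
  have eq_scaled_sq : multinomialExp w N (absSampleMean w u ^ 2)
      = multinomialExp w N (((N : ℝ) ^ 2)⁻¹ • fun c => (0 + weightedCount u c) ^ 2) := by
    refine multinomialExp_congr fun c hc => ?_
    simp only [Pi.pow_apply, Pi.smul_apply, smul_eq_mul, zero_add]
    rw [absSampleMean_eq_div w u hN hc, div_pow, sq_abs, div_eq_inv_mul]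
  rw [eq_scaled_sq, map_smul, multinomialExp_add_weightedCount_sq hw hu, smul_eq_mul]
  field_simp
  ring

theorem multinomialExp_absSampleMean_sq_le {u : α → ℝ} (hw₀ : ∀ a, 0 ≤ w a) (hw₁ : ∑ a, w a = 1)
    (hu : ∑ a, w a * u a = 0) (N : ℕ) :
    multinomialExp w N (absSampleMean w u ^ 2)
      ≤ 2 * (∑ a, w a * u a ^ 2) * (N + 1 : ℝ)⁻¹ := by
  have variance_nonneg : 0 ≤ ∑ a, w a * u a ^ 2 :=
    sum_nonneg fun a _ => mul_nonneg (hw₀ a) (sq_nonneg _)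
  rcases eq_or_ne N 0 with rfl | hN
  · have sq_mean_le : (∑ a, w a * |u a|) ^ 2 ≤ ∑ a, w a * u a ^ 2 := by
      simpa using Real.pow_arith_mean_le_arith_mean_pow_of_even univ w (fun a => |u a|)
        (fun a _ => hw₀ a) hw₁ even_two
    simp only [multinomialExp_zero, Pi.pow_apply, absSampleMean, Pi.zero_apply, sum_const_zero,
      if_true, CharP.cast_eq_zero]
    linarith
  · have inv_le : (N : ℝ)⁻¹ ≤ 2 * (N + 1 : ℝ)⁻¹ := by
      have one_le : (1 : ℝ) ≤ N := by exact_mod_cast Nat.one_le_iff_ne_zero.2 hN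
      rw [← div_eq_mul_inv, le_div_iff₀ (by positivity), inv_mul_le_iff₀ (by positivity)]
      linarith
    rw [multinomialExp_absSampleMean_sq hw₁ hu hN, mul_comm 2, mul_assoc]
    gcongr

end Multinomial

section Labelled

variable {ι κ : Type*} [DecidableEq ι] [Fintype κ] [DecidableEq κ]

theorem sum_mul_prod_multinomialExp_update {θ : ι → κ → ℝ} (hθ : ∀ x, ∑ k, θ x k = 1)
    (s : Finset ι) (F : ι → (κ → ℕ) → ℝ) (x : ι) (n : ι → ℕ) :
    ∑ k, θ x k * ∏ y ∈ s, multinomialExp (θ y) (n y)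
        (Function.update F x (fun c => F x (c + Pi.single k 1)) y)
      = ∏ y ∈ s, multinomialExp (θ y) ((n + Pi.single x 1 : ι → ℕ) y) (F y) := by
  have off_label (k : κ) {y : ι} (hy : y ≠ x) :
      multinomialExp (θ y) (n y) (Function.update F x (fun c => F x (c + Pi.single k 1)) y)
        = multinomialExp (θ y) ((n + Pi.single x 1 : ι → ℕ) y) (F y) := by
    simp [hy]
  by_cases hx : x ∈ s
  · simp only [← mul_prod_erase s _ hx, ← mul_assoc]
    rw [sum_congr rfl fun k _ => congrArg _ (prod_congr rfl fun y hy =>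
      off_label k (ne_of_mem_erase hy)), ← sum_mul]
    simp [multinomialExp_succ]
  · rw [sum_congr rfl fun k _ => congrArg _ (prod_congr rfl fun y hy =>
      off_label k (ne_of_mem_of_not_mem hy hx)), ← sum_mul, hθ, one_mul]

variable [Fintype ι]

theorem multinomialExp_prod_label (q : ι → ℝ) {θ : ι → κ → ℝ} (hθ : ∀ x, ∑ k, θ x k = 1)
    (s : Finset ι) (N : ℕ) (F : ι → (κ → ℕ) → ℝ) :
    multinomialExp (fun a : ι × κ => q a.1 * θ a.1 a.2) N (fun c => ∏ x ∈ s, F x fun k => c (x, k))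
      = multinomialExp q N (fun n => ∏ x ∈ s, multinomialExp (θ x) (n x) (F x)) := by
  induction N generalizing F with
  | zero =>
    simp only [multinomialExp_zero, Pi.zero_apply]
    rfl
  | succ N ih =>
    have add_single_eq_update (x y : ι) (k : κ) (c : ι × κ → ℕ) :
        F y (fun j => (c + Pi.single (x, k) 1 : ι × κ → ℕ) (y, j))
          = Function.update F x (fun d => F x (d + Pi.single k 1)) y fun j => c (y, j) := by
      rcases eq_or_ne y x with rfl | hyx
      · rw [Function.update_self]
        congr 1
        funext j
        simp [Pi.single_apply]
      · simp [hyx]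
    simp only [multinomialExp_succ, Fintype.sum_prod_type, add_single_eq_update, ih,
      ← sum_mul_prod_multinomialExp_update hθ, mul_assoc, ← mul_sum]
    refine sum_congr rfl fun x _ => congrArg _ ?_
    simp only [← smul_eq_mul, ← map_smul, ← map_sum]
    congr 1
    funext n
    simp

theorem multinomialExp_label (q : ι → ℝ) {θ : ι → κ → ℝ} (hθ : ∀ x, ∑ k, θ x k = 1) (N : ℕ)
    (x : ι) (F : (κ → ℕ) → ℝ) :
    multinomialExp (fun a : ι × κ => q a.1 * θ a.1 a.2) N (fun c => F fun k => c (x, k))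
      = multinomialExp q N (fun n => multinomialExp (θ x) (n x) F) := by
  simpa using multinomialExp_prod_label q hθ {x} N fun _ => F

theorem multinomialExp_label_mul_label (q : ι → ℝ) {θ : ι → κ → ℝ} (hθ : ∀ x, ∑ k, θ x k = 1)
    (N : ℕ) {x y : ι} (hxy : x ≠ y) (F : ι → (κ → ℕ) → ℝ) :
    multinomialExp (fun a : ι × κ => q a.1 * θ a.1 a.2) N
        (fun c => (F x fun k => c (x, k)) * F y fun k => c (y, k))
      = multinomialExp q N
          (fun n => multinomialExp (θ x) (n x) (F x) * multinomialExp (θ y) (n y) (F y)) := by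
  simpa [prod_pair hxy] using multinomialExp_prod_label q hθ {x, y} N F

/-- The contribution of the label `x` to the estimation error: the absolute sample mean of `u x`
over the samples labelled `x`, weighted by the probability `q x` of that label. -/
noncomputable def labelError (q : ι → ℝ) (θ u : ι → κ → ℝ) (x : ι) (c : ι × κ → ℕ) : ℝ :=
  q x * absSampleMean (θ x) (u x) fun k => c (x, k)

variable {q : ι → ℝ} {θ u : ι → κ → ℝ}

theorem multinomialExp_labelError_mul_le (hq₀ : ∀ x, 0 ≤ q x) (hq₁ : ∑ x, q x = 1)
    (hθ₀ : ∀ x k, 0 ≤ θ x k) (hθ₁ : ∀ x, ∑ k, θ x k = 1) (N : ℕ) {x y : ι} (hxy : x ≠ y) :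
    multinomialExp (fun a : ι × κ => q a.1 * θ a.1 a.2) N
        (labelError q θ u x * labelError q θ u y)
      ≤ multinomialExp (fun a : ι × κ => q a.1 * θ a.1 a.2) N (labelError q θ u x)
        * multinomialExp (fun a : ι × κ => q a.1 * θ a.1 a.2) N (labelError q θ u y) := by
  have label_antitone (z : ι) : Antitone fun n : ι → ℕ =>
      multinomialExp (θ z) (n z) (q z • absSampleMean (θ z) (u z)) := by
    intro m n hmn
    simp only [map_smul, smul_eq_mul]
    exact mul_le_mul_of_nonneg_left
      (antitone_multinomialExp_absSampleMean (hθ₀ z) (hθ₁ z) (u z) (hmn z)) (hq₀ z)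
  have label_dependsOn (z : ι) : DependsOn (fun n : ι → ℕ =>
      multinomialExp (θ z) (n z) (q z • absSampleMean (θ z) (u z))) {z} :=
    fun m n hmn => by simp only [hmn z rfl]
  have mean_eq (z : ι) := multinomialExp_label q hθ₁ N z (q z • absSampleMean (θ z) (u z))
  have product_eq := multinomialExp_label_mul_label q hθ₁ N hxy
    fun z => q z • absSampleMean (θ z) (u z)
  have neg_assoc := multinomialExp_mul_le_of_dependsOn_disjoint hq₀ hq₁ N (label_antitone x)
    (label_antitone y) (Set.disjoint_singleton.2 hxy) (label_dependsOn x) (label_dependsOn y)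
  rw [← mean_eq, ← mean_eq] at neg_assoc
  exact product_eq.trans_le neg_assoc

theorem multinomialExp_labelError_sq_le (hq₀ : ∀ x, 0 ≤ q x) (hq₁ : ∑ x, q x = 1)
    (hθ₀ : ∀ x k, 0 ≤ θ x k) (hθ₁ : ∀ x, ∑ k, θ x k = 1) (hu : ∀ x, ∑ k, θ x k * u x k = 0)
    (N : ℕ) (x : ι) :
    multinomialExp (fun a : ι × κ => q a.1 * θ a.1 a.2) N (labelError q θ u x ^ 2)
      ≤ 2 * (q x * ∑ k, θ x k * u x k ^ 2) / (N + 1) := by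
  set σ := ∑ k, θ x k * u x k ^ 2
  have σ_nonneg : 0 ≤ σ := sum_nonneg fun k _ => mul_nonneg (hθ₀ x k) (sq_nonneg _)
  have inv_count_le := mul_multinomialExp_inv_count_add_one_le hq₀ hq₁ x N
  calc
    _ = multinomialExp q N
          (fun n => multinomialExp (θ x) (n x) (q x ^ 2 • absSampleMean (θ x) (u x) ^ 2)) := by
      rw [← multinomialExp_label q hθ₁]
      congr 1
      funext c
      simp [labelError, mul_pow]
    _ ≤ multinomialExp q N ((2 * q x ^ 2 * σ) • fun n => (n x + 1 : ℝ)⁻¹) := by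
      refine multinomialExp_mono hq₀ fun n _ => ?_
      have := multinomialExp_absSampleMean_sq_le (hθ₀ x) (hθ₁ x) (hu x) (n x)
      rw [map_smul, smul_eq_mul, Pi.smul_apply, smul_eq_mul]
      nlinarith [mul_le_mul_of_nonneg_left this (sq_nonneg (q x))]
    _ = 2 * (q x * σ) * ((N + 1) * q x * multinomialExp q N fun n => (n x + 1 : ℝ)⁻¹)
          / (N + 1) := by
      rw [map_smul, smul_eq_mul]
      field_simp
    _ ≤ 2 * (q x * σ) / (N + 1) :=
      div_le_div_of_nonneg_right
        (mul_le_of_le_one_right (mul_nonneg two_pos.le (mul_nonneg (hq₀ x) σ_nonneg)) inv_count_le)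
        (by positivity)

theorem multinomialExp_tail_sum_labelError_le (hq₀ : ∀ x, 0 ≤ q x) (hq₁ : ∑ x, q x = 1)
    (hθ₀ : ∀ x k, 0 ≤ θ x k) (hθ₁ : ∀ x, ∑ k, θ x k = 1) (hu : ∀ x, ∑ k, θ x k * u x k = 0)
    (N : ℕ) {v : ι → ℝ} (hv : ∀ x, 2 * (q x * ∑ k, θ x k * u x k ^ 2) / (N + 1) ≤ v x) {t : ℝ}
    (ht : 0 < t) :
    multinomialExp (fun a : ι × κ => q a.1 * θ a.1 a.2) N
        ({c | ∑ x, √(v x) + t < ∑ x, labelError q θ u x c}.indicator 1)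
      ≤ (∑ x, v x) / t ^ 2 := by
  have weight_nonneg (a : ι × κ) : 0 ≤ q a.1 * θ a.1 a.2 := mul_nonneg (hq₀ _) (hθ₀ _ _)
  have weight_sum : ∑ a : ι × κ, q a.1 * θ a.1 a.2 = 1 := by
    simp only [Fintype.sum_prod_type, ← mul_sum, hθ₁, mul_one, hq₁]
  exact (isExpectation_multinomialExp weight_nonneg weight_sum N).tail_sum_le
    (fun _ _ hxy => multinomialExp_labelError_mul_le hq₀ hq₁ hθ₀ hθ₁ N hxy)
    (fun x => (multinomialExp_labelError_sq_le hq₀ hq₁ hθ₀ hθ₁ hu N x).trans (hv x)) ht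

end Labelled

section MeasureBound

variable {α : Type*} [Fintype α] [DecidableEq α] [MeasurableSpace α]

theorem measure_pi_preimage_letterCount_le {w : α → ℝ} (hw : ∀ a, 0 ≤ w a) (μ : Measure α)
    [SigmaFinite μ] (hμ : ∀ a, μ {a} = ENNReal.ofReal (w a)) (N : ℕ) (A : Set (α → ℕ)) :
    Measure.pi (fun _ : Fin N => μ) (letterCount ⁻¹' A)
      ≤ ENNReal.ofReal (multinomialExp w N (A.indicator 1)) := by
  classical
  have measure_singleton (ω : Fin N → α) :
      Measure.pi (fun _ : Fin N => μ) {ω} = ENNReal.ofReal (∏ i, w (ω i)) := by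
    rw [← Set.univ_pi_singleton, Measure.pi_pi, ENNReal.ofReal_prod_of_nonneg fun i _ => hw _]
    exact prod_congr rfl fun i _ => hμ _
  calc
    _ = Measure.pi (fun _ : Fin N => μ) (⋃ ω ∈ ({ω | letterCount ω ∈ A} : Finset _), {ω}) := by
      congr 1
      ext ω
      simp
    _ ≤ ∑ ω with letterCount ω ∈ A, Measure.pi (fun _ : Fin N => μ) {ω} :=
      measure_biUnion_finset_le _ _
    _ = ENNReal.ofReal (∑ ω with letterCount ω ∈ A, ∏ i, w (ω i)) := by
      rw [ENNReal.ofReal_sum_of_nonneg fun ω _ => prod_nonneg fun i _ => hw _]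
      exact sum_congr rfl fun ω _ => measure_singleton ω
    _ = _ := by
      simp [multinomialExp_apply, sum_filter, Set.indicator_apply]

theorem ofReal_one_sub_le_measure_pi_letterCount {w : α → ℝ} (hw : ∀ a, 0 ≤ w a) (μ : Measure α)
    [IsProbabilityMeasure μ] (hμ : ∀ a, μ {a} = ENNReal.ofReal (w a)) {N : ℕ} {A : Set (α → ℕ)}
    {δ : ℝ} (hδ₀ : 0 ≤ δ) (hδ : multinomialExp w N (A.indicator 1) ≤ δ) :
    ENNReal.ofReal (1 - δ) ≤ Measure.pi (fun _ : Fin N => μ) (letterCount ⁻¹' A)ᶜ := by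
  rw [ENNReal.ofReal_sub _ hδ₀, ENNReal.ofReal_one, tsub_le_iff_left,
    ← measure_univ (μ := Measure.pi fun _ : Fin N => μ)]
  refine (measure_univ_le_add_compl (letterCount ⁻¹' A)).trans ?_
  gcongr
  exact (measure_pi_preimage_letterCount_le hw μ hμ N A).trans (ENNReal.ofReal_le_ofReal hδ)

end MeasureBound

section SignedSamples

/-- The acceptance ratio estimated from `m` positive and `n` negative observations. -/
noncomputable def acceptanceEstimate (m n : ℕ) : ℝ :=
  if m + n = 0 then 1 else max 0 ((m - n) / (m + n))

/-- The distribution of a sign that is negative (`false`) with probability `θ`. -/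
def signWeight (θ : ℝ) (k : Bool) : ℝ :=
  if k then 1 - θ else θ

/-- The deviation of a sign `±1` from its mean `1 - 2 * θ` under `signWeight θ`. -/
def signDeviation (θ : ℝ) (k : Bool) : ℝ :=
  if k then 2 * θ else -(2 * (1 - θ))

theorem signWeight_nonneg {θ : ℝ} (hθ₀ : 0 ≤ θ) (hθ₁ : θ ≤ 1) (k : Bool) : 0 ≤ signWeight θ k := by
  cases k <;> simp [signWeight, hθ₀, hθ₁]

theorem sum_signWeight (θ : ℝ) : ∑ k, signWeight θ k = 1 := by
  simp [signWeight]

theorem sum_signWeight_mul_signDeviation (θ : ℝ) :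
    ∑ k, signWeight θ k * signDeviation θ k = 0 := by
  simp only [signWeight, signDeviation, Fintype.sum_bool, Bool.false_eq_true, if_true, if_false]
  ring

theorem sum_signWeight_mul_signDeviation_sq (θ : ℝ) :
    ∑ k, signWeight θ k * signDeviation θ k ^ 2 = 4 * θ * (1 - θ) := by
  simp only [signWeight, signDeviation, Fintype.sum_bool, Bool.false_eq_true, if_true, if_false]
  ring

theorem add_mul_signWeight_div_add {a b : ℝ} (ha : 0 ≤ a) (hb : 0 ≤ b) (k : Bool) :
    (a + b) * signWeight (b / (a + b)) k = if k then a else b := by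
  have add_mul_div : (a + b) * (b / (a + b)) = b := mul_div_cancel_of_imp' fun h => by linarith
  cases k
  · simpa [signWeight] using add_mul_div
  · simp [signWeight, mul_sub, add_mul_div]

theorem abs_sub_acceptanceEstimate_le {θ : ℝ} (hθ₀ : 0 ≤ θ) (hθ₁ : θ ≤ 1 / 2) (c : Bool → ℕ) :
    |1 - 2 * θ - acceptanceEstimate (c true) (c false)|
      ≤ absSampleMean (signWeight θ) (signDeviation θ) c := by
  simp only [acceptanceEstimate, absSampleMean, weightedCount, signWeight, signDeviation,
    Fintype.sum_bool, Bool.false_eq_true, if_true, if_false]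
  split_ifs with hc
  · rw [abs_of_nonpos (by linarith), abs_of_nonneg (by linarith), abs_of_nonpos (by linarith)]
    nlinarith
  · have total_pos : (0 : ℝ) < c true + c false := by exact_mod_cast Nat.pos_of_ne_zero hc
    have truncation_le := abs_max_sub_max_le_abs (1 - 2 * θ)
      (((c true : ℝ) - c false) / (c true + c false)) 0
    rw [max_eq_left (by linarith), max_comm _ (0 : ℝ)] at truncation_le
    refine truncation_le.trans_eq ?_
    rw [← abs_of_pos total_pos, ← abs_div, abs_of_pos total_pos, ← abs_neg]
    congr 1
    field_simp
    ring

variable {ι : Type*} [Fintype ι]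

/-- The mean error, over labels distributed as `q`, of the acceptance ratios estimated from the
counts `c`, where a sample with label `x` is negative with probability `θ x` and hence has ideal
acceptance ratio `1 - 2 * θ x`. -/
noncomputable def acceptanceError (q θ : ι → ℝ) (c : ι × Bool → ℕ) : ℝ :=
  ∑ x, q x * |1 - 2 * θ x - acceptanceEstimate (c (x, true)) (c (x, false))|

theorem acceptanceError_div_add (a b : ι → ℝ) (c : ι × Bool → ℕ) :
    acceptanceError (fun x => a x + b x) (fun x => b x / (a x + b x)) c
      = ∑ x, |(a x - b x) / (a x + b x) - acceptanceEstimate (c (x, true)) (c (x, false))|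
          * (a x + b x) := by
  refine sum_congr rfl fun x _ => ?_
  rcases eq_or_ne (a x + b x) 0 with total_zero | total_ne
  · simp [total_zero]
  · rw [mul_comm, show a x - b x = a x + b x - 2 * b x by ring, sub_div, div_self total_ne,
      mul_div_assoc]

variable {q θ : ι → ℝ}

theorem acceptanceError_le_sum_labelError (hq : ∀ x, 0 ≤ q x) (hθ₀ : ∀ x, 0 ≤ θ x)
    (hθ₁ : ∀ x, θ x ≤ 1 / 2) (c : ι × Bool → ℕ) :
    acceptanceError q θ c ≤
      ∑ x, labelError q (fun x => signWeight (θ x)) (fun x => signDeviation (θ x)) x c :=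
  sum_le_sum fun x _ => mul_le_mul_of_nonneg_left
    (abs_sub_acceptanceEstimate_le (hθ₀ x) (hθ₁ x) fun k => c (x, k)) (hq x)

variable [DecidableEq ι]

theorem multinomialExp_tail_acceptanceError_le (hq₀ : ∀ x, 0 ≤ q x) (hq₁ : ∑ x, q x = 1)
    (hθ₀ : ∀ x, 0 ≤ θ x) (hθ₁ : ∀ x, θ x ≤ 1 / 2) (N : ℕ) {v : ι → ℝ}
    (hv : ∀ x, 8 * (q x * θ x) / (N + 1) ≤ v x) {t : ℝ} (ht : 0 < t) :
    multinomialExp (fun z : ι × Bool => q z.1 * signWeight (θ z.1) z.2) N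
        ({c | ∑ x, √(v x) + t < acceptanceError q θ c}.indicator 1)
      ≤ (∑ x, v x) / t ^ 2 := by
  have sign_nonneg (x : ι) (k : Bool) : 0 ≤ signWeight (θ x) k :=
    signWeight_nonneg (hθ₀ x) (by linarith [hθ₁ x]) k
  have sign_variance_le (x : ι) :
      2 * (q x * ∑ k, signWeight (θ x) k * signDeviation (θ x) k ^ 2) / (N + 1) ≤ v x := by
    refine le_trans ?_ (hv x)
    rw [sum_signWeight_mul_signDeviation_sq]
    gcongr ?_ / _
    nlinarith [mul_nonneg (hq₀ x) (sq_nonneg (θ x))]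
  have weight_nonneg (z : ι × Bool) : 0 ≤ q z.1 * signWeight (θ z.1) z.2 :=
    mul_nonneg (hq₀ z.1) (sign_nonneg z.1 z.2)
  refine le_trans (multinomialExp_mono weight_nonneg ?_)
    (multinomialExp_tail_sum_labelError_le hq₀ hq₁ sign_nonneg (fun x => sum_signWeight (θ x))
      (fun x => sum_signWeight_mul_signDeviation (θ x)) N sign_variance_le ht)
  exact fun c _ => Set.indicator_le_indicator_of_subset
    (fun c hc => hc.trans_le (acceptanceError_le_sum_labelError hq₀ hθ₀ hθ₁ c))
    (fun _ => zero_le_one) c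

theorem ofReal_one_sub_le_measure_acceptanceError_le [MeasurableSpace ι]
    (hq₀ : ∀ x, 0 ≤ q x) (hq₁ : ∑ x, q x = 1) (hθ₀ : ∀ x, 0 ≤ θ x) (hθ₁ : ∀ x, θ x ≤ 1 / 2)
    (μ : Measure (ι × Bool)) [IsProbabilityMeasure μ]
    (hμ : ∀ z, μ {z} = ENNReal.ofReal (q z.1 * signWeight (θ z.1) z.2)) {N : ℕ} {v : ι → ℝ}
    (hv : ∀ x, 8 * (q x * θ x) / (N + 1) ≤ v x) {T δ : ℝ} (hT : ∑ x, √(v x) < T) (hδ₀ : 0 ≤ δ)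
    (hδ : (∑ x, v x) / (T - ∑ x, √(v x)) ^ 2 ≤ δ) :
    ENNReal.ofReal (1 - δ) ≤
      Measure.pi (fun _ : Fin N => μ) {ω | acceptanceError q θ (letterCount ω) ≤ T} := by
  have tail_le := multinomialExp_tail_acceptanceError_le hq₀ hq₁ hθ₀ hθ₁ N hv (sub_pos.2 hT)
  have weight_nonneg (z : ι × Bool) : 0 ≤ q z.1 * signWeight (θ z.1) z.2 :=
    mul_nonneg (hq₀ z.1) (signWeight_nonneg (hθ₀ z.1) (by linarith [hθ₁ z.1]) z.2)
  refine (ofReal_one_sub_le_measure_pi_letterCount weight_nonneg μ hμ hδ₀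
    (tail_le.trans hδ)).trans_eq (congrArg _ ?_)
  ext ω
  simp

theorem ofReal_one_sub_le_measure_signed_error_le [MeasurableSpace ι] {a b : ι → ℝ}
    (hb : ∀ x, 0 ≤ b x) (hba : ∀ x, b x ≤ a x) (hab : ∑ x, (a x + b x) = 1)
    (μ : Measure (ι × Bool)) [IsProbabilityMeasure μ]
    (hμa : ∀ x, μ {(x, true)} = ENNReal.ofReal (a x))
    (hμb : ∀ x, μ {(x, false)} = ENNReal.ofReal (b x)) {N : ℕ} {v : ι → ℝ}
    (hv : ∀ x, 8 * b x / (N + 1) ≤ v x) {T δ : ℝ} (hT : ∑ x, √(v x) < T) (hδ₀ : 0 ≤ δ)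
    (hδ : (∑ x, v x) / (T - ∑ x, √(v x)) ^ 2 ≤ δ) :
    ENNReal.ofReal (1 - δ) ≤ Measure.pi (fun _ : Fin N => μ)
      {ω | ∑ x, |(a x - b x) / (a x + b x)
        - acceptanceEstimate (letterCount ω (x, true)) (letterCount ω (x, false))|
          * (a x + b x) ≤ T} := by
  have ha (x : ι) : 0 ≤ a x := (hb x).trans (hba x)
  have total_nonneg (x : ι) : 0 ≤ a x + b x := add_nonneg (ha x) (hb x)
  have weight_eq (x : ι) := add_mul_signWeight_div_add (ha x) (hb x)
  have negative_le_half (x : ι) : b x / (a x + b x) ≤ 1 / 2 :=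
    div_le_of_le_mul₀ (total_nonneg x) (by norm_num) (by linarith [hba x])
  simp only [← acceptanceError_div_add]
  refine ofReal_one_sub_le_measure_acceptanceError_le total_nonneg hab
    (fun x => div_nonneg (hb x) (total_nonneg x)) negative_le_half μ ?_ (fun x => ?_) hT hδ₀ hδ
  · rintro ⟨x, k⟩
    cases k <;> simp [weight_eq, hμa, hμb]
  · have negative_eq : (a x + b x) * (b x / (a x + b x)) = b x := weight_eq x false
    rw [negative_eq]
    exact hv x

end SignedSamples

section SampleSize

theorem sqrt_mul_le_of_le_sampleSize {c γ K r N : ℝ} (hc : 0 ≤ c) (hγ : 0 < γ) (hr : 0 < r)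
    (hN₀ : 0 < N) (hN : c * γ * r⁻¹ ^ 2 * K ^ 2 ≤ N) :
    √(c / (γ * N)) * K ≤ r / γ := by
  refine le_of_sq_le_sq ?_ (by positivity)
  rw [mul_pow, Real.sq_sqrt (by positivity)]
  field_simp at hN ⊢
  linarith

theorem sum_sqrt_mul_lt_and_div_sq_le {ι : Type*} [Fintype ι] {r : ι → ℝ} (hr : ∑ x, r x = 1)
    {s T δ : ℝ} (hs : 0 ≤ s) (hT : 0 < T) (hδ : 0 < δ)
    (h : √s * (∑ x, √(r x) + δ ^ (-(1 : ℝ) / 2)) ≤ T) :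
    ∑ x, √(s * r x) < T ∧ (∑ x, s * r x) / (T - ∑ x, √(s * r x)) ^ 2 ≤ δ := by
  simp only [Real.sqrt_mul hs, ← mul_sum, hr, mul_one]
  have pow_sq : δ * (δ ^ (-(1 : ℝ) / 2)) ^ 2 = 1 := by
    rw [← Real.rpow_natCast, ← Real.rpow_mul hδ.le]
    norm_num [Real.rpow_neg_one, hδ.ne']
  rcases hs.eq_or_lt with rfl | s_pos
  · simpa [hT] using hδ.le
  have margin_le : √s * δ ^ (-(1 : ℝ) / 2) ≤ T - √s * ∑ x, √(r x) := by linarith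
  have margin_pos : 0 < T - √s * ∑ x, √(r x) := lt_of_lt_of_le (by positivity) margin_le
  refine ⟨sub_pos.1 margin_pos, (div_le_iff₀ (by positivity)).2 ?_⟩
  calc
    s = δ * (√s * δ ^ (-(1 : ℝ) / 2)) ^ 2 := by
      rw [mul_pow, Real.sq_sqrt hs, mul_left_comm, pow_sq, mul_one]
    _ ≤ δ * (T - √s * ∑ x, √(r x)) ^ 2 := by gcongr

end SampleSize

/-- Theorem 2, estimation stage, Rényi-entropy form: if the number of samples
satisfies `N ≥ 8c₋γ((1+ε)/ε)²(∑_x √(p⁻ₓ) + δ₁^{−1/2})²` (note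
`∑_x √(p⁻ₓ) = 2^{H_{1/2}(p⁻)/2}`), then with probability at least `1 − δ₁` the
estimated acceptance ratios `R` (built from the counts `N⁺ₓ, N⁻ₓ` of the `N`
i.i.d. samples) satisfy `γ·∑_x |μₓ − Rₓ|·qₓ ≤ ε/(1+ε)`, where `μₓ = pₓ/(γqₓ)` is
the ideal acceptance ratio. -/
theorem acceptance_ratio_estimation_cost_renyi_bound
    {ι : Type*} [Fintype ι] [DecidableEq ι] [MeasurableSpace ι]
    (pp pm : ι → ℝ)
    (hpp0 : ∀ x, 0 ≤ pp x) (hpp1 : ∑ x, pp x = 1)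
    (hpm0 : ∀ x, 0 ≤ pm x) (hpm1 : ∑ x, pm x = 1)
    (cp cm : ℝ) (hcp : 0 ≤ cp) (hcm : 0 ≤ cm) (hc : cp - cm = 1)
    (γ : ℝ) (hγ : γ = cp + cm)
    (p : ι → ℝ) (hp : ∀ x, p x = cp * pp x - cm * pm x)
    (hp0 : ∀ x, 0 ≤ p x)
    (q : ι → ℝ) (hq : ∀ x, q x = (cp * pp x + cm * pm x) / γ)
    (μ1 : Measure (ι × Bool)) [IsProbabilityMeasure μ1]
    (hμt : ∀ x, μ1 {(x, true)} = ENNReal.ofReal (cp * pp x / γ))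
    (hμf : ∀ x, μ1 {(x, false)} = ENNReal.ofReal (cm * pm x / γ))
    (N : ℕ) (hN : 0 < N)
    (R : ι → (Fin N → ι × Bool) → ℝ)
    (hR : ∀ x ω, R x ω =
      if ((Finset.univ.filter fun i => ω i = (x, true)).card
           + (Finset.univ.filter fun i => ω i = (x, false)).card) = 0
      then 1
      else max 0
        ((((Finset.univ.filter fun i => ω i = (x, true)).card : ℝ)
            - ((Finset.univ.filter fun i => ω i = (x, false)).card : ℝ))
          / (((Finset.univ.filter fun i => ω i = (x, true)).card : ℝ)
            + ((Finset.univ.filter fun i => ω i = (x, false)).card : ℝ))))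
    (μid : ι → ℝ) (hμid : ∀ x, μid x = if q x = 0 then 0 else p x / (γ * q x))
    (ε δ₁ : ℝ) (hε : 0 < ε) (hδ₁0 : 0 < δ₁) (hδ₁1 : δ₁ < 1)
    (hNbound : (N : ℝ) ≥ 8 * cm * γ * ((1 + ε) / ε) ^ 2 *
      (∑ x, Real.sqrt (pm x) + δ₁ ^ (-(1 : ℝ) / 2)) ^ 2) :
    ENNReal.ofReal (1 - δ₁) ≤
      (Measure.pi fun _ : Fin N => μ1)
        {ω | γ * ∑ x, |μid x - R x ω| * q x ≤ ε / (1 + ε)} := by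
  have γ_pos : 0 < γ := by linarith
  have mass_eq (x : ι) : q x = cp * pp x / γ + cm * pm x / γ := by rw [hq, add_div]
  have ideal_eq (x : ι) : μid x = (cp * pp x / γ - cm * pm x / γ) / q x := by
    rw [hμid, ← sub_div, ← hp, div_div]
    split_ifs with hqx <;> simp [hqx]
  have mass_sum : ∑ x, (cp * pp x / γ + cm * pm x / γ) = 1 := by
    simp only [sum_add_distrib, ← sum_div, ← mul_sum, hpp1, hpm1, mul_one, ← add_div, ← hγ,
      div_self γ_pos.ne']
  have positive_ge (x : ι) : cm * pm x / γ ≤ cp * pp x / γ :=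
    div_le_div_of_nonneg_right (by linarith [hp0 x, hp x]) γ_pos.le
  have variance_le (x : ι) : 8 * (cm * pm x / γ) / (N + 1) ≤ 8 * cm / (γ * (N + 1)) * pm x :=
    le_of_eq (by field_simp)
  have mean_add_le : √(8 * cm / (γ * (N + 1))) * (∑ x, √(pm x) + δ₁ ^ (-(1 : ℝ) / 2))
      ≤ ε / (1 + ε) / γ :=
    sqrt_mul_le_of_le_sampleSize (by positivity) γ_pos (by positivity) N.cast_add_one_pos
      (by simpa using hNbound.le.trans (lt_add_one _).le)
  obtain ⟨mean_lt, tail_le⟩ :=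
    sum_sqrt_mul_lt_and_div_sq_le hpm1 (by positivity) (by positivity) hδ₁0 mean_add_le
  convert ofReal_one_sub_le_measure_signed_error_le
    (fun x => div_nonneg (mul_nonneg hcm (hpm0 x)) γ_pos.le) positive_ge mass_sum μ1 hμt hμf
    variance_le mean_lt hδ₁0.le tail_le using 4 with ω
  simp only [← mass_eq, ← ideal_eq, le_div_iff₀' γ_pos, hR]
  rfl
end

section
/- Let v = 1 − e^{−1/2}. For ε > 0 and δ₁ ∈ (0,1), if the number of samples N satisfies N ≥ 2·γ²·((1+ε)/ε)²·( ∑_x √(q_x) + √((2/v)·log(1/δ₁)) )², then with probability at least 1 − δ₁ the estimated acceptance ratios satisfy Δ := γ·∑_x |μ_x − R_x|·q_x ≤ ε/(1+ε). (Theorem S3, estimation stage: alternative bound with logarithmic dependence on the failure probability.) -/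
open MeasureTheory Finset

/-!
The ratio `R x` itself is unstable when `x` is rarely sampled, but `N * q x * |μ x - R x|` is
dominated by a function of the counts at `x` (`ratioErrorMajorant`) that moves by at most `2` when
a sample hits `x`. Replacing one sample therefore changes the sum of the majorants by at most `4`,
and McDiarmid's inequality bounds its upper deviations.

The mean of the majorant at `x` is at most `√(2 * N * q x)`: its first part is half the shortfall
of hits, and the rest is the absolute value of a sum of two square-integrable terms, one a multiple
of that shortfall and the other a sum of centred signs, which are orthogonal since the centred
signs have mean zero given the number of hits. The constant `4` from McDiarmid is absorbed by
`2 / v ≥ 4`, which is `exp (-1 / 2) ≥ 1 / 2`.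
-/

open ProbabilityTheory
open scoped NNReal

theorem mgf_sub_const_le_exp_iff {Ω : Type*} [MeasurableSpace Ω] {P : Measure Ω} {f : Ω → ℝ}
    {m s t : ℝ} :
    mgf (fun ω => f ω - m) P t ≤ Real.exp s ↔ mgf f P t ≤ Real.exp (t * m + s) := by
  simp only [sub_eq_add_neg, mgf_add_const, mul_neg, Real.exp_neg, add_comm (t * m), Real.exp_add]
  exact mul_inv_le_iff₀ (Real.exp_pos _)

theorem hasSubgaussianMGF_of_forall_abs_sub_le {Ω : Type*} [MeasurableSpace Ω] {P : Measure Ω}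
    [IsProbabilityMeasure P] {f : Ω → ℝ} (hm : Measurable f) {c : ℝ≥0}
    (hc : ∀ a b, |f a - f b| ≤ c) :
    HasSubgaussianMGF (fun ω => f ω - P[f]) ((c / 2) ^ 2) P := by
  have : Nonempty Ω := P.nonempty_of_neZero
  have hle (a b : Ω) : f a - c ≤ f b := by linarith [(abs_le.1 (hc a b)).2]
  have hbdd : BddBelow (Set.range f) := ⟨_, Set.forall_mem_range.2 (hle (Classical.arbitrary Ω))⟩
  have hmem (a : Ω) : f a ∈ Set.Icc (⨅ b, f b) ((⨅ b, f b) + c) :=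
    ⟨ciInf_le hbdd a, sub_le_iff_le_add.1 (le_ciInf (hle a))⟩
  simpa using hasSubgaussianMGF_of_mem_Icc hm.aemeasurable (.of_forall hmem : ∀ᵐ a ∂P, _)

theorem integral_pi_eq_integral_insertNth {n : ℕ} {Ω : Fin (n + 1) → Type*}
    [∀ i, MeasurableSpace (Ω i)] {P : ∀ i, Measure (Ω i)} [∀ i, SigmaFinite (P i)]
    (i : Fin (n + 1)) {f : (∀ i, Ω i) → ℝ} (hf : Integrable f (Measure.pi P)) :
    ∫ ω, f ω ∂Measure.pi P =
      ∫ η, ∫ a, f (i.insertNth a η) ∂P i ∂Measure.pi fun j => P (i.succAbove j) := by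
  have hmp := (measurePreserving_piFinSuccAbove P i).symm
  rw [← hmp.integral_comp']
  exact integral_prod_symm _ (hmp.integrable_comp_of_integrable hf)

theorem measurable_insertNth {n : ℕ} {Ω : Fin (n + 1) → Type*} [∀ i, MeasurableSpace (Ω i)]
    (i : Fin (n + 1)) :
    Measurable fun z : Ω i × (∀ j, Ω (i.succAbove j)) => (i.insertNth z.1 z.2 : ∀ j, Ω j) :=
  (MeasurableEquiv.piFinSuccAbove Ω i).symm.measurable

/-- The bounded differences property of McDiarmid's inequality: replacing the `i`-th coordinate
of the argument changes the value of `f` by at most `c i`. -/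
def HasBoundedDifferences {n : ℕ} {Ω : Fin n → Type*} (f : (∀ i, Ω i) → ℝ) (c : Fin n → ℝ≥0) :
    Prop :=
  ∀ ω i a, |f (Function.update ω i a) - f ω| ≤ c i

namespace HasBoundedDifferences

section Slices

variable {n : ℕ} {Ω : Fin (n + 1) → Type*} {f : (∀ i, Ω i) → ℝ} {c : Fin (n + 1) → ℝ≥0}

theorem abs_insertNth_sub_le (hf : HasBoundedDifferences f c) (i : Fin (n + 1)) (a b : Ω i)
    (η : ∀ j, Ω (i.succAbove j)) :
    |f (i.insertNth a η) - f (i.insertNth b η)| ≤ c i := by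
  simpa using hf (i.insertNth b η) i a

theorem comp_insertNth (hf : HasBoundedDifferences f c) (i : Fin (n + 1)) (a : Ω i) :
    HasBoundedDifferences (fun η => f (i.insertNth a η)) fun j => c (i.succAbove j) :=
  fun η j b => by simpa using hf (i.insertNth a η) (i.succAbove j) b

theorem integral_insertNth (hf : HasBoundedDifferences f c) (i : Fin (n + 1))
    [MeasurableSpace (Ω i)] {P : Measure (Ω i)} [IsProbabilityMeasure P]
    (hint : ∀ η : ∀ j, Ω (i.succAbove j), Integrable (fun a => f (i.insertNth a η)) P) :
    HasBoundedDifferences (fun η => ∫ a, f (i.insertNth a η) ∂P) fun j => c (i.succAbove j) := by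
  intro η j b
  have hbound (a : Ω i) :
      ‖f (i.insertNth a (Function.update η j b)) - f (i.insertNth a η)‖ ≤ c (i.succAbove j) :=
    hf.comp_insertNth i a η j b
  rw [← integral_sub (hint _) (hint _), ← Real.norm_eq_abs]
  simpa using norm_integral_le_of_norm_le_const (.of_forall hbound : ∀ᵐ a ∂P, _)

end Slices

variable {n : ℕ} {Ω : Fin n → Type*} {f : (∀ i, Ω i) → ℝ} {c : Fin n → ℝ≥0}

theorem abs_sub_le_sum (hf : HasBoundedDifferences f c) (ω ω' : ∀ i, Ω i) :
    |f ω - f ω'| ≤ ∑ i, (c i : ℝ) := by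
  induction n with
  | zero => simp [Subsingleton.elim ω ω']
  | succ n ih =>
    rw [← Fin.insertNth_self_removeNth 0 ω, ← Fin.insertNth_self_removeNth 0 ω',
      Fin.sum_univ_succAbove _ 0]
    exact (abs_sub_le _ (f (Fin.insertNth 0 (ω' 0) (Fin.removeNth 0 ω))) _).trans
      (add_le_add (hf.abs_insertNth_sub_le ..) (ih (hf.comp_insertNth _ _) _ _))

theorem exists_forall_mem_Icc (hf : HasBoundedDifferences f c) :
    ∃ a b, ∀ ω, f ω ∈ Set.Icc a b := by
  rcases isEmpty_or_nonempty (∀ i, Ω i) with h | ⟨⟨ω₀⟩⟩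
  · exact ⟨0, 0, h.elim⟩
  · exact ⟨_, _, fun ω => Set.mem_Icc_iff_abs_le.1 (hf.abs_sub_le_sum ω₀ ω)⟩

variable [∀ i, MeasurableSpace (Ω i)] {P : ∀ i, Measure (Ω i)} [∀ i, IsProbabilityMeasure (P i)]

theorem integrable (hf : HasBoundedDifferences f c) (hm : Measurable f) :
    Integrable f (Measure.pi P) := by
  obtain ⟨a, b, hab⟩ := hf.exists_forall_mem_Icc
  exact .of_mem_Icc a b hm.aemeasurable (.of_forall hab)

theorem integrable_exp_mul (hf : HasBoundedDifferences f c) (hm : Measurable f) (t : ℝ) :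
    Integrable (fun ω => Real.exp (t * f ω)) (Measure.pi P) := by
  obtain ⟨a, b, hab⟩ := hf.exists_forall_mem_Icc
  exact integrable_exp_mul_of_mem_Icc hm.aemeasurable (.of_forall hab)

-- Integrating out one coordinate costs one application of Hoeffding's lemma and leaves a function
-- of the remaining coordinates with the same bounded differences.
theorem mgf_le (hf : HasBoundedDifferences f c) (hm : Measurable f) (t : ℝ) :
    mgf f (Measure.pi P) t ≤
      Real.exp (t * (Measure.pi P)[f] + (∑ i, (c i / 2) ^ 2 : ℝ≥0) * t ^ 2 / 2) := by
  induction n with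
  | zero => simp [mgf, integral_unique]
  | succ n ih =>
    set Q := Measure.pi fun j : Fin n => P (Fin.succAbove 0 j)
    set g : (∀ j : Fin n, Ω (Fin.succAbove 0 j)) → ℝ := fun η => ∫ a, f (Fin.insertNth 0 a η) ∂P 0
    set s : ℝ := ((c 0 / 2) ^ 2 : ℝ≥0) * t ^ 2 / 2 with hs
    have hfm := hm.comp (measurable_insertNth 0)
    have hslice (η : ∀ j : Fin n, Ω (Fin.succAbove 0 j)) :
        HasSubgaussianMGF (fun a => f (Fin.insertNth 0 a η) - g η) ((c 0 / 2) ^ 2) (P 0) :=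
      hasSubgaussianMGF_of_forall_abs_sub_le (hfm.comp measurable_prodMk_right)
        (hf.abs_insertNth_sub_le 0 · · η)
    have hgm : Measurable g := hfm.stronglyMeasurable.integral_prod_left'.measurable
    have hg : HasBoundedDifferences g fun j => c (Fin.succAbove 0 j) :=
      hf.integral_insertNth 0 fun η => by simpa [sub_eq_add_neg] using (hslice η).integrable
    have hmean : (Measure.pi P)[f] = Q[g] :=
      integral_pi_eq_integral_insertNth 0 (hf.integrable hm)
    calc mgf f (Measure.pi P) t
        = ∫ η, mgf (fun a => f (Fin.insertNth 0 a η)) (P 0) t ∂Q :=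
          integral_pi_eq_integral_insertNth 0 (hf.integrable_exp_mul hm t)
      _ ≤ ∫ η, Real.exp (t * g η + s) ∂Q := by
          refine integral_mono_of_nonneg (.of_forall fun _ => mgf_nonneg) ?_
            (.of_forall fun η => mgf_sub_const_le_exp_iff.1 ((hslice η).mgf_le t))
          simpa only [Real.exp_add] using (hg.integrable_exp_mul hgm t).mul_const _
      _ = mgf g Q t * Real.exp s := by simp only [Real.exp_add, integral_mul_const, mgf]
      _ ≤ Real.exp (t * Q[g] + (∑ j, (c (Fin.succAbove 0 j) / 2) ^ 2 : ℝ≥0) * t ^ 2 / 2)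
            * Real.exp s := by gcongr; exact ih hg hgm
      _ = _ := by
          rw [← Real.exp_add, hmean, Fin.sum_univ_succAbove _ 0, hs]
          push_cast
          ring_nf

/-- **McDiarmid's inequality**. -/
theorem hasSubgaussianMGF (hf : HasBoundedDifferences f c) (hm : Measurable f) :
    HasSubgaussianMGF (fun ω => f ω - (Measure.pi P)[f]) (∑ i, (c i / 2) ^ 2) (Measure.pi P) where
  integrable_exp_mul t := by
    simpa [mul_sub, Real.exp_sub] using (hf.integrable_exp_mul hm t).div_const _
  mgf_le t := mgf_sub_const_le_exp_iff.2 (hf.mgf_le hm t)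

end HasBoundedDifferences

/-- The acceptance ratio estimated from `n` hits with signed count `d`. -/
noncomputable def estimatedRatio (n d : ℝ) : ℝ := if n = 0 then 1 else max 0 (d / n)

theorem exists_estimatedRatio_eq_max {n d : ℝ} (hd : |d| ≤ n) :
    ∃ r ≤ 1, n * r = d ∧ estimatedRatio n d = max 0 r := by
  rcases eq_or_ne n 0 with rfl | hn
  · exact ⟨1, le_rfl, by simp [abs_nonpos_iff.1 hd], by simp [estimatedRatio]⟩
  · exact ⟨d / n, div_le_one_of_le₀ ((le_abs_self d).trans hd) ((abs_nonneg d).trans hd),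
      mul_div_cancel₀ d hn, if_neg hn⟩

/-- An upper bound for `M * |m - R|`, where `R` is the acceptance ratio estimated from `n` hits with
signed count `d`, `m` is the ideal ratio and `M` the expected number of hits. Unlike `R` itself it
is stable: a further hit changes it by at most `2`. -/
noncomputable def ratioErrorMajorant (m M n d : ℝ) : ℝ :=
  max (m * (M - n)⁺ + (m * n - d)) ((1 - m) * (M - n)⁺ - (m * n - d))

namespace ratioErrorMajorant

variable {m M n d : ℝ}

theorem eq_add_abs :
    ratioErrorMajorant m M n d = (M - n)⁺ / 2 + |(m * n - d) + (m - 1 / 2) * (M - n)⁺| := by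
  rw [ratioErrorMajorant, abs_eq_max_neg, ← max_add_add_left]
  congr 1 <;> ring

theorem mul_abs_sub_estimatedRatio_le (hm0 : 0 ≤ m) (hd : |d| ≤ n) :
    M * |m - estimatedRatio n d| ≤ ratioErrorMajorant m M n d := by
  obtain ⟨r, hr, rfl, hratio⟩ := exists_estimatedRatio_eq_max hd
  have hn : 0 ≤ n := (abs_nonneg _).trans hd
  rw [hratio]
  have hexcess : M - n ≤ (M - n)⁺ := le_posPart _
  have hpos : 0 ≤ (M - n)⁺ := posPart_nonneg _
  rcases le_or_gt (max 0 r) m with hle | hlt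
  · refine le_max_of_le_left ?_
    rw [abs_of_nonneg (sub_nonneg.2 hle)]
    nlinarith [mul_le_mul_of_nonneg_right hexcess (sub_nonneg.2 hle),
      mul_nonneg hpos (le_max_left 0 r), mul_le_mul_of_nonneg_left (le_max_right 0 r) hn]
  · have hmr : m < r := (lt_max_iff.1 hlt).resolve_left hm0.not_gt
    refine le_max_of_le_right ?_
    rw [max_eq_right (hm0.trans hmr.le), abs_of_neg (sub_neg.2 hmr)]
    nlinarith [mul_le_mul_of_nonneg_right hexcess (sub_nonneg.2 hmr.le),
      mul_le_mul_of_nonneg_left hr hpos]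

theorem abs_add_one_sub_le (hm0 : 0 ≤ m) (hm1 : m ≤ 1) {s : ℝ} (hs : |s| ≤ 1) :
    |ratioErrorMajorant m M (n + 1) (d + s) - ratioErrorMajorant m M n d| ≤ 2 := by
  obtain ⟨hs₁, hs₂⟩ := abs_le.1 hs
  have hanti : (M - (n + 1))⁺ ≤ (M - n)⁺ := posPart_mono (by linarith)
  have hlip : (M - n)⁺ ≤ (M - (n + 1))⁺ + 1 :=
    sup_le (by linarith [le_posPart (M - (n + 1))]) (by linarith [posPart_nonneg (M - (n + 1))])
  refine (abs_max_sub_max_le_max _ _ _ _).trans (max_le ?_ ?_) <;> rw [abs_le] <;>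
    constructor <;> nlinarith

theorem continuous : Continuous fun z : ℝ × ℝ => ratioErrorMajorant m M z.1 z.2 := by
  unfold ratioErrorMajorant
  fun_prop

end ratioErrorMajorant

theorem integral_abs_le_sqrt_integral_sq {Ω : Type*} [MeasurableSpace Ω] {P : Measure Ω}
    [IsProbabilityMeasure P] {f : Ω → ℝ} (hf : MemLp f 2 P) :
    ∫ ω, |f ω| ∂P ≤ √(∫ ω, f ω ^ 2 ∂P) := by
  refine Real.le_sqrt_of_sq_le ?_
  have hvar := variance_nonneg |f| P
  rw [variance_eq_sub hf.abs] at hvar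
  simpa using hvar

theorem integral_posPart_le_sqrt_integral_sq_div_two {Ω : Type*} [MeasurableSpace Ω]
    {P : Measure Ω} [IsProbabilityMeasure P] {f : Ω → ℝ} (hf : MemLp f 2 P)
    (hf0 : ∫ ω, f ω ∂P = 0) : ∫ ω, (f ω)⁺ ∂P ≤ √(∫ ω, f ω ^ 2 ∂P) / 2 := by
  have hint := hf.integrable one_le_two
  have hpos (ω : Ω) : (f ω)⁺ = (f ω + |f ω|) / 2 := by
    rw [add_abs_eq_two_nsmul_posPart, two_nsmul, add_self_div_two]
  simp only [hpos]
  rw [integral_div, integral_add hint hint.abs, hf0, zero_add]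
  gcongr
  exact integral_abs_le_sqrt_integral_sq hf

theorem integral_sq_add_const_mul {Ω : Type*} [MeasurableSpace Ω] {P : Measure Ω} {f g : Ω → ℝ}
    (hf : MemLp f 2 P) (hg : MemLp g 2 P) (horth : ∫ ω, f ω * g ω ∂P = 0) (c : ℝ) :
    ∫ ω, (f ω + c * g ω) ^ 2 ∂P = ∫ ω, f ω ^ 2 ∂P + c ^ 2 * ∫ ω, g ω ^ 2 ∂P := by
  have hfg : Integrable (fun ω => 2 * c * (f ω * g ω)) P := (hf.integrable_mul hg).const_mul _
  have hexpand (ω : Ω) : (f ω + c * g ω) ^ 2 =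
      f ω ^ 2 + 2 * c * (f ω * g ω) + c ^ 2 * g ω ^ 2 := by ring
  simp only [hexpand]
  rw [integral_add (by exact hf.integrable_sq.add hfg) (hg.integrable_sq.const_mul _),
    integral_add hf.integrable_sq hfg, integral_const_mul, integral_const_mul, horth, mul_zero,
    add_zero]

/-- The empirical sum of `f` over a sample `ω`. -/
def sampleSum {α : Type*} {N : ℕ} (f : α → ℝ) (ω : Fin N → α) : ℝ := ∑ i, f (ω i)

section SampleSum

variable {α : Type*} {N : ℕ} {f : α → ℝ}

theorem sampleSum_update (f : α → ℝ) (ω : Fin N → α) (i : Fin N) (a : α) :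
    sampleSum f (Function.update ω i a) = ∑ j ∈ univ.erase i, f (ω j) + f a := by
  rw [sampleSum, ← sum_erase_add _ _ (mem_univ i), Function.update_self]
  congr 1
  exact sum_congr rfl fun j hj => by rw [Function.update_of_ne (ne_of_mem_erase hj)]

theorem sampleSum_insertNth {n : ℕ} (f : α → ℝ) (i : Fin (n + 1)) (a : α) (η : Fin n → α) :
    sampleSum f (i.insertNth a η : Fin (n + 1) → α) = f a + sampleSum f η := by
  simp [sampleSum, Fin.sum_univ_succAbove _ i]

theorem abs_sampleSum_indicator_le {S : α → ℝ} (hS1 : ∀ a, |S a| ≤ 1) (A : Set α)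
    (ω : Fin N → α) :
    |sampleSum (A.indicator S) ω| ≤ sampleSum (A.indicator 1) ω := by
  refine (abs_sum_le_sum_abs _ _).trans (sum_le_sum fun i _ => ?_)
  by_cases hi : ω i ∈ A <;> simp [hi, hS1]

variable [MeasurableSpace α] {P : Measure α} [IsProbabilityMeasure P]

theorem measurable_sampleSum (hf : Measurable f) :
    Measurable (sampleSum f : (Fin N → α) → ℝ) := by
  unfold sampleSum
  fun_prop

theorem memLp_comp_eval (hf : MemLp f 2 P) (i : Fin N) :
    MemLp (fun ω : Fin N → α => f (ω i)) 2 (Measure.pi fun _ => P) :=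
  hf.comp_measurePreserving (measurePreserving_eval (fun _ => P) i)

theorem memLp_sampleSum (hf : MemLp f 2 P) :
    MemLp (sampleSum f) 2 (Measure.pi fun _ : Fin N => P) :=
  memLp_finsetSum _ fun i _ => memLp_comp_eval hf i

theorem integral_sampleSum (hf : Integrable f P) :
    ∫ ω, sampleSum f ω ∂(Measure.pi fun _ : Fin N => P) = N * ∫ a, f a ∂P := by
  unfold sampleSum
  rw [integral_finsetSum _ fun i _ => integrable_comp_eval (μ := fun _ : Fin N => P) hf]
  simp [integral_comp_eval (μ := fun _ : Fin N => P) hf.aestronglyMeasurable]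

theorem variance_sampleSum (hf : MemLp f 2 P) :
    Var[sampleSum f; Measure.pi fun _ : Fin N => P] = N * Var[f; P] := by
  have hsum : sampleSum f = ∑ i : Fin N, fun ω : Fin N → α => f (ω i) := by
    ext ω
    simp [sampleSum]
  simp [hsum, variance_sum_pi (μ := fun _ : Fin N => P) fun _ => hf]

theorem integral_sq_mul_integral_sub_sampleSum_le (hf : MemLp f 2 P) :
    ∫ ω, (N * ∫ a, f a ∂P - sampleSum f ω) ^ 2 ∂(Measure.pi fun _ : Fin N => P) ≤
      N * ∫ a, f a ^ 2 ∂P := by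
  calc ∫ ω, (N * ∫ a, f a ∂P - sampleSum f ω) ^ 2 ∂(Measure.pi fun _ : Fin N => P)
      = Var[sampleSum f; Measure.pi fun _ : Fin N => P] := by
        rw [variance_eq_integral (memLp_sampleSum hf).aemeasurable,
          integral_sampleSum (hf.integrable one_le_two)]
        simp only [sub_sq_comm]
    _ = N * Var[f; P] := variance_sampleSum hf
    _ ≤ N * ∫ a, f a ^ 2 ∂P := by
        gcongr
        exact variance_le_expectation_sq hf.aestronglyMeasurable

end SampleSum

section Hits

variable {α : Type*} [MeasurableSpace α] {N : ℕ} {P : Measure α} {A : Set α} {S : α → ℝ} {m : ℝ}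

/-- The shortfall of the number of hits of `A` in the sample `ω` from its expectation under `P`. -/
noncomputable def hitDeficit (P : Measure α) (A : Set α) (ω : Fin N → α) : ℝ :=
  (N * P.real A - sampleSum (A.indicator 1) ω)⁺

/-- `ratioErrorMajorant` at the hit counts of `A` in the sample `ω`, where `S` is the sign of a
sample point. -/
noncomputable def sampleErrorMajorant (P : Measure α) (A : Set α) (S : α → ℝ) (m : ℝ)
    (ω : Fin N → α) : ℝ :=
  ratioErrorMajorant m (N * P.real A) (sampleSum (A.indicator 1) ω) (sampleSum (A.indicator S) ω)

theorem measurable_sampleErrorMajorant (hA : MeasurableSet A) (hS : Measurable S) :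
    Measurable (sampleErrorMajorant P A S m : (Fin N → α) → ℝ) :=
  ratioErrorMajorant.continuous.measurable.comp
    ((measurable_sampleSum (measurable_one.indicator hA)).prodMk
      (measurable_sampleSum (hS.indicator hA)))

theorem sampleErrorMajorant_eq_add_abs (ω : Fin N → α) :
    sampleErrorMajorant P A S m ω = hitDeficit P A ω / 2 +
      |sampleSum (A.indicator fun a => m - S a) ω + (m - 1 / 2) * hitDeficit P A ω| := by
  have hmarks : sampleSum (A.indicator fun a => m - S a) ω =
      m * sampleSum (A.indicator 1) ω - sampleSum (A.indicator S) ω := by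
    rw [sampleSum, sampleSum, sampleSum, mul_sum, ← sum_sub_distrib]
    refine sum_congr rfl fun i _ => ?_
    by_cases hi : ω i ∈ A <;> simp [hi]
  rw [hmarks]
  exact ratioErrorMajorant.eq_add_abs

variable [IsProbabilityMeasure P]

-- Conditionally on the number of hits the centred marks still average to zero.
theorem integral_sampleSum_mul_comp_sampleSum_indicator_eq_zero {f : α → ℝ} (hf : MemLp f 2 P)
    (hf0 : ∫ a, f a ∂P = 0) (hfA : ∀ a ∉ A, f a = 0) {φ : ℝ → ℝ}
    (hφ : MemLp (fun ω => φ (sampleSum (A.indicator 1) ω)) 2 (Measure.pi fun _ : Fin N => P)) :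
    ∫ ω, sampleSum f ω * φ (sampleSum (A.indicator 1) ω) ∂(Measure.pi fun _ : Fin N => P) = 0 := by
  have hint (i : Fin N) := (memLp_comp_eval hf i).integrable_mul hφ
  have hcoord (i : Fin N) :
      ∫ ω, f (ω i) * φ (sampleSum (A.indicator 1) ω) ∂(Measure.pi fun _ : Fin N => P) = 0 := by
    cases N with
    | zero => exact i.elim0
    | succ n =>
      refine (integral_pi_eq_integral_insertNth i (hint i)).trans ?_
      have hslice (η : Fin n → α) (a : α) :
          f a * φ (sampleSum (A.indicator 1) (i.insertNth a η : Fin (n + 1) → α)) =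
            f a * φ (1 + sampleSum (A.indicator 1) η) := by
        by_cases ha : a ∈ A
        · simp [sampleSum_insertNth, ha]
        · simp [hfA a ha]
      simp [hslice, integral_mul_const, hf0]
  simp only [sampleSum, sum_mul] at hint hcoord ⊢
  exact (integral_finsetSum _ fun i _ => hint i).trans (sum_eq_zero fun i _ => hcoord i)

theorem memLp_indicator_one (hA : MeasurableSet A) : MemLp (A.indicator (1 : α → ℝ)) 2 P :=
  memLp_indicator_const 2 hA 1 (.inr (measure_ne_top P A))

theorem memLp_indicator_const_sub (hA : MeasurableSet A) (hS : Measurable S)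
    (hS1 : ∀ a, |S a| ≤ 1) : MemLp (A.indicator fun a => m - S a) 2 P :=
  (MemLp.sub (memLp_const m) (.of_bound hS.aestronglyMeasurable 1 (.of_forall hS1))).indicator hA

theorem integral_indicator_const_sub_eq_zero (hA : MeasurableSet A) (hS : Integrable S P)
    (hmean : ∫ a in A, S a ∂P = m * P.real A) : ∫ a, A.indicator (fun a => m - S a) a ∂P = 0 := by
  rw [integral_indicator hA, integral_sub (integrable_const m) hS.integrableOn, hmean]
  simp [mul_comm]

theorem integral_sq_indicator_const_sub_le (hA : MeasurableSet A) (hS : Integrable S P)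
    (hS1 : ∀ a, |S a| ≤ 1) (hmean : ∫ a in A, S a ∂P = m * P.real A) :
    ∫ a, A.indicator (fun a => m - S a) a ^ 2 ∂P ≤ (1 - m ^ 2) * P.real A := by
  have hsq (a : α) : (m - S a) ^ 2 ≤ (m ^ 2 + 1) - 2 * m * S a := by
    linarith [(sq_le_one_iff_abs_le_one (S a)).2 (hS1 a), sub_sq m (S a)]
  calc ∫ a, A.indicator (fun a => m - S a) a ^ 2 ∂P
      = ∫ a in A, (m - S a) ^ 2 ∂P := by
        rw [← integral_indicator hA]
        congr with a
        by_cases ha : a ∈ A <;> simp [ha]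
    _ ≤ ∫ a in A, ((m ^ 2 + 1) - 2 * m * S a) ∂P :=
        integral_mono_of_nonneg (.of_forall fun _ => sq_nonneg _)
          ((integrable_const _).sub (hS.integrableOn.const_mul _)) (.of_forall hsq)
    _ = (1 - m ^ 2) * P.real A := by
        rw [integral_sub (integrable_const _) (hS.integrableOn.const_mul _), integral_const_mul,
          hmean]
        simp only [integral_const, measureReal_restrict_apply_univ, smul_eq_mul]
        ring

theorem integral_sq_sampleSum_indicator_const_sub_le (hA : MeasurableSet A) (hS : Measurable S)
    (hS1 : ∀ a, |S a| ≤ 1) (hmean : ∫ a in A, S a ∂P = m * P.real A) :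
    ∫ ω, sampleSum (A.indicator fun a => m - S a) ω ^ 2 ∂(Measure.pi fun _ : Fin N => P) ≤
      N * ((1 - m ^ 2) * P.real A) := by
  have hSint : Integrable S P := .of_bound hS.aestronglyMeasurable 1 (.of_forall hS1)
  have hle := integral_sq_mul_integral_sub_sampleSum_le (N := N) (P := P)
    (memLp_indicator_const_sub (m := m) hA hS hS1)
  simp only [integral_indicator_const_sub_eq_zero hA hSint hmean, mul_zero, zero_sub, neg_sq] at hle
  exact hle.trans (by gcongr; exact integral_sq_indicator_const_sub_le hA hSint hS1 hmean)

theorem memLp_mul_measureReal_sub_sampleSum_indicator (hA : MeasurableSet A) :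
    MemLp (fun ω => N * P.real A - sampleSum (A.indicator 1) ω) 2
      (Measure.pi fun _ : Fin N => P) :=
  MemLp.sub (memLp_const _) (memLp_sampleSum (memLp_indicator_one hA))

theorem integral_sq_mul_measureReal_sub_sampleSum_indicator_le (hA : MeasurableSet A) :
    ∫ ω, (N * P.real A - sampleSum (A.indicator 1) ω) ^ 2 ∂(Measure.pi fun _ : Fin N => P) ≤
      N * P.real A := by
  have hsq : (fun a => A.indicator (1 : α → ℝ) a ^ 2) = A.indicator 1 := by
    ext a
    by_cases ha : a ∈ A <;> simp [ha]
  simpa only [hsq, integral_indicator_one hA] using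
    integral_sq_mul_integral_sub_sampleSum_le (N := N) (memLp_indicator_one (P := P) hA)

theorem memLp_hitDeficit (hA : MeasurableSet A) :
    MemLp (hitDeficit P A) 2 (Measure.pi fun _ : Fin N => P) :=
  (memLp_mul_measureReal_sub_sampleSum_indicator hA).pos_part

theorem integral_sq_hitDeficit_le (hA : MeasurableSet A) :
    ∫ ω, hitDeficit P A ω ^ 2 ∂(Measure.pi fun _ : Fin N => P) ≤ N * P.real A := by
  refine (integral_mono (memLp_hitDeficit hA).integrable_sq
    (memLp_mul_measureReal_sub_sampleSum_indicator hA).integrable_sq fun ω => ?_).trans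
    (integral_sq_mul_measureReal_sub_sampleSum_indicator_le hA)
  exact sq_le_sq.2 ((abs_of_nonneg (posPart_nonneg _)).trans_le
    (sup_le (le_abs_self _) (abs_nonneg _)))

theorem integral_hitDeficit_le (hA : MeasurableSet A) :
    ∫ ω, hitDeficit P A ω ∂(Measure.pi fun _ : Fin N => P) ≤ √(N * P.real A) / 2 := by
  have hhits := memLp_indicator_one (P := P) hA
  have hcentred : ∫ ω, (N * P.real A - sampleSum (A.indicator 1) ω)
      ∂(Measure.pi fun _ : Fin N => P) = 0 := by
    rw [integral_sub (integrable_const _) ((memLp_sampleSum hhits).integrable one_le_two),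
      integral_sampleSum (hhits.integrable one_le_two), integral_indicator_one hA]
    simp
  refine (integral_posPart_le_sqrt_integral_sq_div_two
    (memLp_mul_measureReal_sub_sampleSum_indicator hA) hcentred).trans ?_
  gcongr
  exact integral_sq_mul_measureReal_sub_sampleSum_indicator_le hA

theorem integral_sq_sampleSum_add_mul_hitDeficit_le (hA : MeasurableSet A) (hS : Measurable S)
    (hS1 : ∀ a, |S a| ≤ 1) (hmean : ∫ a in A, S a ∂P = m * P.real A) (hm0 : 0 ≤ m) :
    ∫ ω, (sampleSum (A.indicator fun a => m - S a) ω + (m - 1 / 2) * hitDeficit P A ω) ^ 2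
      ∂(Measure.pi fun _ : Fin N => P) ≤ 5 / 4 * (N * P.real A) := by
  have hSint : Integrable S P := .of_bound hS.aestronglyMeasurable 1 (.of_forall hS1)
  have hmarks : MemLp (A.indicator fun a => m - S a) 2 P := memLp_indicator_const_sub hA hS hS1
  have horth : ∫ ω, sampleSum (A.indicator fun a => m - S a) ω * hitDeficit P A ω
      ∂(Measure.pi fun _ : Fin N => P) = 0 :=
    integral_sampleSum_mul_comp_sampleSum_indicator_eq_zero hmarks
      (integral_indicator_const_sub_eq_zero hA hSint hmean)
      (fun a ha => Set.indicator_of_notMem ha _) (φ := fun n => (N * P.real A - n)⁺)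
      (memLp_hitDeficit hA)
  have hMm : 0 ≤ N * P.real A * m := by positivity
  rw [integral_sq_add_const_mul (memLp_sampleSum hmarks) (memLp_hitDeficit hA) horth]
  calc _ ≤ N * ((1 - m ^ 2) * P.real A) + (m - 1 / 2) ^ 2 * (N * P.real A) := by
        gcongr
        · exact integral_sq_sampleSum_indicator_const_sub_le hA hS hS1 hmean
        · exact integral_sq_hitDeficit_le hA
    _ ≤ 5 / 4 * (N * P.real A) := by linarith

theorem memLp_sampleSum_add_mul_hitDeficit (hA : MeasurableSet A) (hS : Measurable S)
    (hS1 : ∀ a, |S a| ≤ 1) (c : ℝ) :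
    MemLp (fun ω => sampleSum (A.indicator fun a => m - S a) ω + c * hitDeficit P A ω) 2
      (Measure.pi fun _ : Fin N => P) :=
  MemLp.add (memLp_sampleSum (memLp_indicator_const_sub hA hS hS1))
    ((memLp_hitDeficit hA).const_mul c)

theorem integrable_sampleErrorMajorant (hA : MeasurableSet A) (hS : Measurable S)
    (hS1 : ∀ a, |S a| ≤ 1) :
    Integrable (sampleErrorMajorant P A S m) (Measure.pi fun _ : Fin N => P) := by
  rw [funext sampleErrorMajorant_eq_add_abs]
  exact (((memLp_hitDeficit hA).integrable one_le_two).div_const 2).add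
    ((memLp_sampleSum_add_mul_hitDeficit hA hS hS1 _).integrable one_le_two).abs

theorem one_fourth_add_sqrt_le_sqrt_two : 1 / 4 + √(5 / 4) ≤ √2 := by
  refine Real.le_sqrt_of_sq_le ?_
  have hsq : √(5 / 4) ^ 2 = 5 / 4 := Real.sq_sqrt (by norm_num)
  nlinarith

theorem integral_sampleErrorMajorant_le (hA : MeasurableSet A) (hS : Measurable S)
    (hS1 : ∀ a, |S a| ≤ 1) (hmean : ∫ a in A, S a ∂P = m * P.real A) (hm0 : 0 ≤ m) :
    ∫ ω, sampleErrorMajorant P A S m ω ∂(Measure.pi fun _ : Fin N => P) ≤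
      √(2 * N) * √(P.real A) := by
  have hsum := memLp_sampleSum_add_mul_hitDeficit (N := N) (P := P) (m := m) hA hS hS1 (m - 1 / 2)
  simp only [sampleErrorMajorant_eq_add_abs]
  rw [integral_add (((memLp_hitDeficit hA).integrable one_le_two).div_const 2)
    (hsum.integrable one_le_two).abs, integral_div]
  calc _ ≤ √(N * P.real A) / 2 / 2 + √(5 / 4 * (N * P.real A)) := by
        gcongr
        · exact integral_hitDeficit_le hA
        · exact (integral_abs_le_sqrt_integral_sq hsum).trans (Real.sqrt_le_sqrt
            (integral_sq_sampleSum_add_mul_hitDeficit_le hA hS hS1 hmean hm0))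
    _ = (1 / 4 + √(5 / 4)) * √(N * P.real A) := by
        rw [Real.sqrt_mul (by norm_num : (0 : ℝ) ≤ 5 / 4)]
        ring
    _ ≤ √2 * √(N * P.real A) := by
        gcongr
        exact one_fourth_add_sqrt_le_sqrt_two
    _ = √(2 * N) * √(P.real A) := by
        rw [← Real.sqrt_mul zero_le_two, ← mul_assoc, Real.sqrt_mul (by positivity)]

end Hits

section Labels

variable {α ι : Type*} [Fintype ι] {N : ℕ} {X : α → ι} {S : α → ℝ} {m : ι → ℝ}

theorem abs_sum_ratioErrorMajorant_add_indicator_sub_le (hS1 : ∀ a, |S a| ≤ 1)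
    (hm0 : ∀ x, 0 ≤ m x) (hm1 : ∀ x, m x ≤ 1) (M n d : ι → ℝ) (a : α) :
    |∑ x, ratioErrorMajorant (m x) (M x) (n x + (X ⁻¹' {x}).indicator 1 a)
          (d x + (X ⁻¹' {x}).indicator S a)
        - ∑ x, ratioErrorMajorant (m x) (M x) (n x) (d x)| ≤ 2 := by
  rw [← sum_sub_distrib, sum_eq_single (X a)]
  · simpa using ratioErrorMajorant.abs_add_one_sub_le (hm0 (X a)) (hm1 (X a)) (hS1 a)
  · intro x _ hx
    simp [hx.symm]
  · simp

variable [MeasurableSpace α] {P : Measure α}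

theorem hasBoundedDifferences_sum_sampleErrorMajorant (hS1 : ∀ a, |S a| ≤ 1)
    (hm0 : ∀ x, 0 ≤ m x) (hm1 : ∀ x, m x ≤ 1) :
    HasBoundedDifferences
      (fun ω : Fin N → α => ∑ x, sampleErrorMajorant P (X ⁻¹' {x}) S (m x) ω) fun _ => 4 := by
  intro ω i a
  have hinsert (b : α) := abs_sum_ratioErrorMajorant_add_indicator_sub_le (X := X) hS1 hm0 hm1
    (fun x => N * P.real (X ⁻¹' {x})) (fun x => ∑ j ∈ univ.erase i, (X ⁻¹' {x}).indicator 1 (ω j))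
    (fun x => ∑ j ∈ univ.erase i, (X ⁻¹' {x}).indicator S (ω j)) b
  simp only [← sampleSum_update] at hinsert
  have hω := hinsert (ω i)
  rw [Function.update_eq_self, abs_sub_comm] at hω
  calc _ ≤ (2 : ℝ) + 2 := (abs_sub_le _ _ _).trans (add_le_add (hinsert a) hω)
    _ = (4 : ℝ≥0) := by norm_num

theorem mul_sum_abs_sub_estimatedRatio_mul_le (hS1 : ∀ a, |S a| ≤ 1) (hm0 : ∀ x, 0 ≤ m x)
    (ω : Fin N → α) :
    N * ∑ x, |m x - estimatedRatio (sampleSum ((X ⁻¹' {x}).indicator 1) ω)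
        (sampleSum ((X ⁻¹' {x}).indicator S) ω)| * P.real (X ⁻¹' {x}) ≤
      ∑ x, sampleErrorMajorant P (X ⁻¹' {x}) S (m x) ω := by
  rw [mul_sum]
  refine sum_le_sum fun x _ => ?_
  rw [mul_left_comm, mul_comm]
  exact ratioErrorMajorant.mul_abs_sub_estimatedRatio_le (hm0 x)
    (abs_sampleSum_indicator_le hS1 _ ω)

variable [IsProbabilityMeasure P]

theorem measureReal_le_sum_sampleErrorMajorant_le (hX : ∀ x, MeasurableSet (X ⁻¹' {x}))
    (hS : Measurable S) (hS1 : ∀ a, |S a| ≤ 1) (hm0 : ∀ x, 0 ≤ m x) (hm1 : ∀ x, m x ≤ 1)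
    (hmean : ∀ x, ∫ a in X ⁻¹' {x}, S a ∂P = m x * P.real (X ⁻¹' {x})) (hN : 0 < N) {T : ℝ}
    (hT : 0 ≤ T) :
    (Measure.pi fun _ : Fin N => P).real {ω | √(2 * N) * (∑ x, √(P.real (X ⁻¹' {x})) + T) ≤
        ∑ x, sampleErrorMajorant P (X ⁻¹' {x}) S (m x) ω} ≤ Real.exp (-T ^ 2 / 4) := by
  set G : (Fin N → α) → ℝ := fun ω => ∑ x, sampleErrorMajorant P (X ⁻¹' {x}) S (m x) ω
  have hGm : Measurable G :=
    measurable_sum _ fun x _ => measurable_sampleErrorMajorant (hX x) hS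
  have hGbd : HasBoundedDifferences G fun _ => 4 :=
    hasBoundedDifferences_sum_sampleErrorMajorant hS1 hm0 hm1
  have hGmean : ∫ ω, G ω ∂(Measure.pi fun _ => P) ≤ √(2 * N) * ∑ x, √(P.real (X ⁻¹' {x})) := by
    rw [integral_finsetSum _ fun x _ => integrable_sampleErrorMajorant (hX x) hS hS1, mul_sum]
    exact sum_le_sum fun x _ =>
      integral_sampleErrorMajorant_le (hX x) hS hS1 (hmean x) (hm0 x)
  have hparam : ((∑ _i : Fin N, (4 / 2) ^ 2 : ℝ≥0) : ℝ) = 4 * N := by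
    push_cast
    rw [sum_const, card_fin, nsmul_eq_mul]
    ring
  calc _ ≤ (Measure.pi fun _ : Fin N => P).real
        {ω | √(2 * N) * T ≤ G ω - ∫ ω, G ω ∂(Measure.pi fun _ => P)} := by
        refine measureReal_mono fun ω hω => ?_
        simp only [Set.mem_ofPred_eq, mul_add] at hω ⊢
        linarith
    _ ≤ _ := (hGbd.hasSubgaussianMGF hGm).measure_ge_le (by positivity)
    _ = Real.exp (-T ^ 2 / 4) := by
        rw [hparam, mul_pow, Real.sq_sqrt (by positivity)]
        congr 1
        field_simp

theorem ofReal_one_sub_le_pi_sum_abs_sub_estimatedRatio_le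
    (hX : ∀ x, MeasurableSet (X ⁻¹' {x})) (hS : Measurable S) (hS1 : ∀ a, |S a| ≤ 1)
    (hm0 : ∀ x, 0 ≤ m x) (hm1 : ∀ x, m x ≤ 1)
    (hmean : ∀ x, ∫ a in X ⁻¹' {x}, S a ∂P = m x * P.real (X ⁻¹' {x})) (hN : 0 < N) {T η δ : ℝ}
    (hT : 0 ≤ T) (hδ : Real.exp (-T ^ 2 / 4) ≤ δ)
    (hη : √(2 * N) * (∑ x, √(P.real (X ⁻¹' {x})) + T) ≤ N * η) :
    ENNReal.ofReal (1 - δ) ≤ (Measure.pi fun _ : Fin N => P)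
      {ω | ∑ x, |m x - estimatedRatio (sampleSum ((X ⁻¹' {x}).indicator 1) ω)
        (sampleSum ((X ⁻¹' {x}).indicator S) ω)| * P.real (X ⁻¹' {x}) ≤ η} := by
  set B : Set (Fin N → α) := {ω | √(2 * N) * (∑ x, √(P.real (X ⁻¹' {x})) + T) ≤
    ∑ x, sampleErrorMajorant P (X ⁻¹' {x}) S (m x) ω}
  have hBm : MeasurableSet B := measurableSet_le measurable_const
    (measurable_sum _ fun x _ => measurable_sampleErrorMajorant (hX x) hS)
  have hB : (Measure.pi fun _ => P).real B ≤ δ :=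
    (measureReal_le_sum_sampleErrorMajorant_le hX hS hS1 hm0 hm1 hmean hN hT).trans hδ
  calc ENNReal.ofReal (1 - δ) ≤ ENNReal.ofReal ((Measure.pi fun _ => P).real Bᶜ) := by
        rw [probReal_compl_eq_one_sub hBm]
        gcongr
    _ = (Measure.pi fun _ => P) Bᶜ := ofReal_measureReal
    _ ≤ _ := by
        refine measure_mono fun ω hω => ?_
        simp only [B, Set.mem_compl_iff, Set.mem_ofPred_eq, not_le] at hω
        exact le_of_mul_le_mul_left
          ((mul_sum_abs_sub_estimatedRatio_mul_le hS1 hm0 ω).trans (hω.le.trans hη))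
          (Nat.cast_pos.2 hN)

end Labels

-- Singletons of `α` need not be measurable, so `μ` is realised as the image of an atomic measure
-- on a discrete space.
theorem exists_isProbabilityMeasure_map_equiv_eq {α β : Type*} [Fintype α] [MeasurableSpace α]
    [MeasurableSpace β] [DiscreteMeasurableSpace β] (μ : Measure α)
    [IsProbabilityMeasure μ] (hμ : ∑ a, μ.real {a} = 1) (e : β ≃ α) :
    ∃ P : Measure β, IsProbabilityMeasure P ∧ (∀ b, P {b} = μ {e b}) ∧ P.map e = μ := by
  classical
  let : Fintype β := .ofEquiv α e.symm
  let P : Measure β := ∑ b, μ {e b} • Measure.dirac b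
  have hP (B : Set β) : P B = ∑ b, if b ∈ B then μ {e b} else 0 := by
    simp [P, Set.indicator_apply]
  have hprob : IsProbabilityMeasure P := ⟨by
    rw [hP, ← ENNReal.toReal_eq_one_iff, ENNReal.toReal_sum (by simp)]
    simpa [Measure.real, e.sum_comp fun a => (μ {a}).toReal] using hμ⟩
  refine ⟨P, hprob, fun b => by simp [hP], ?_⟩
  have he : Measurable e := .of_discrete
  have := Measure.isProbabilityMeasure_map (μ := P) he.aemeasurable
  refine (Measure.eq_of_le_of_isProbabilityMeasure (Measure.le_iff.2 fun A hA => ?_)).symm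
  have hA_eq : A = ⋃ a ∈ univ.filter (· ∈ A), {a} := by ext; simp
  calc μ A = μ (⋃ a ∈ univ.filter (· ∈ A), {a}) := congrArg μ hA_eq
    _ ≤ ∑ a ∈ univ.filter (· ∈ A), μ {a} := measure_biUnion_finset_le _ _
    _ = P.map e A := by
        rw [Measure.map_apply he hA, hP, sum_filter, ← e.sum_comp]
        rfl

theorem pi_preimage_comp_le_pi_map {α β κ : Type*} [Fintype κ] [MeasurableSpace α]
    [MeasurableSpace β] {P : Measure β} [IsProbabilityMeasure P] {e : β → α} (he : Measurable e)
    (E : Set (κ → α)) :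
    Measure.pi (fun _ => P) ((fun ω i => e (ω i)) ⁻¹' E) ≤ Measure.pi (fun _ => P.map e) E := by
  have := Measure.isProbabilityMeasure_map (μ := P) he.aemeasurable
  rw [← Measure.pi_map_pi fun _ => he.aemeasurable]
  exact Measure.le_map_apply (by fun_prop : Measurable _).aemeasurable E

theorem sub_div_add_mul_add {a b : ℝ} (ha : 0 ≤ a) (hb : 0 ≤ b) :
    (a - b) / (a + b) * (a + b) = a - b := by
  refine div_mul_cancel_of_imp fun h => ?_
  obtain ⟨rfl, rfl⟩ := (add_eq_zero_iff_of_nonneg ha hb).1 h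
  exact sub_zero 0

section SignedSamples

variable {ι : Type*}

/-- The sign encoded by a Boolean, with `true` standing for `+1`. -/
def boolSign (s : Bool) : ℝ := if s then 1 else -1

theorem abs_boolSign (s : Bool) : |boolSign s| = 1 := by cases s <;> simp [boolSign]

theorem sampleSum_indicator_fst_preimage [DecidableEq ι] {N : ℕ} (ω : Fin N → ι × Bool) (x : ι)
    (g : ι × Bool → ℝ) :
    sampleSum ((Prod.fst ⁻¹' {x}).indicator g) ω =
      #{i | ω i = (x, true)} * g (x, true) + #{i | ω i = (x, false)} * g (x, false) := by
  rw [sampleSum, natCast_card_filter, natCast_card_filter, sum_mul, sum_mul, ← sum_add_distrib]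
  refine sum_congr rfl fun i _ => ?_
  obtain ⟨y, s⟩ := ω i
  by_cases hy : y = x <;> cases s <;> simp [hy]

theorem setIntegral_fst_fiber {β : Type*} [MeasurableSpace β] [MeasurableSingletonClass β]
    (P : Measure β) [IsFiniteMeasure P] (e : β ≃ ι × Bool) (x : ι) (g : ι × Bool → ℝ) :
    ∫ b in (fun b => (e b).1) ⁻¹' {x}, g (e b) ∂P =
      P.real {e.symm (x, true)} * g (x, true) + P.real {e.symm (x, false)} * g (x, false) := by
  have hfiber : (fun b => (e b).1) ⁻¹' {x} = {e.symm (x, true)} ∪ {e.symm (x, false)} := by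
    ext b
    rcases h : e b with ⟨y, _ | _⟩ <;> simp [Equiv.eq_symm_apply, h]
  rw [hfiber, setIntegral_union (by simp) (measurableSet_singleton _) (by simp) (by simp)]
  simp [Measure.real]

variable [Fintype ι]

theorem ofReal_one_sub_le_pi_sum_abs_sub_estimatedRatio_card_le [DecidableEq ι]
    [MeasurableSpace ι] {μ : Measure (ι × Bool)} [IsProbabilityMeasure μ]
    {q m : ι → ℝ} (hq1 : ∑ x, q x = 1)
    (hq : ∀ x, q x = μ.real {(x, true)} + μ.real {(x, false)})
    (hmq : ∀ x, m x * q x = μ.real {(x, true)} - μ.real {(x, false)})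
    (hm0 : ∀ x, 0 ≤ m x) (hm1 : ∀ x, m x ≤ 1) {N : ℕ} (hN : 0 < N) {T η δ : ℝ} (hT : 0 ≤ T)
    (hδ : Real.exp (-T ^ 2 / 4) ≤ δ) (hη : √(2 * N) * (∑ x, √(q x) + T) ≤ N * η) :
    ENNReal.ofReal (1 - δ) ≤ (Measure.pi fun _ : Fin N => μ)
      {ω | ∑ x, |m x - estimatedRatio (#{i | ω i = (x, true)} + #{i | ω i = (x, false)})
        (#{i | ω i = (x, true)} - #{i | ω i = (x, false)})| * q x ≤ η} := by
  set e := (Fintype.equivFin (ι × Bool)).symm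
  have hμ : ∑ z, μ.real {z} = 1 := by simpa [Fintype.sum_prod_type, hq] using hq1
  obtain ⟨P, hP, hPe, hmap⟩ := exists_isProbabilityMeasure_map_equiv_eq μ hμ e
  have hPreal (z : ι × Bool) : P.real {e.symm z} = μ.real {z} := by simp [Measure.real, hPe]
  have hfiber (x : ι) : P.real ((fun b => (e b).1) ⁻¹' {x}) = q x := by
    simpa [hPreal, hq] using setIntegral_fst_fiber P e x 1
  have hmean (x : ι) : ∫ b in (fun b => (e b).1) ⁻¹' {x}, boolSign (e b).2 ∂P =
      m x * P.real ((fun b => (e b).1) ⁻¹' {x}) := by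
    rw [setIntegral_fst_fiber P e x fun z => boolSign z.2, hfiber, hmq, hPreal, hPreal]
    simp [boolSign, sub_eq_add_neg]
  have hcore := ofReal_one_sub_le_pi_sum_abs_sub_estimatedRatio_le (fun _ => .of_discrete)
    .of_discrete (fun b => (abs_boolSign (e b).2).le) hm0 hm1 hmean hN hT hδ
    (by simpa only [hfiber])
  have hhits (ω : Fin N → Fin (Fintype.card (ι × Bool))) (x : ι) :
      sampleSum (((fun b => (e b).1) ⁻¹' {x}).indicator 1) ω =
        #{i | e (ω i) = (x, true)} + #{i | e (ω i) = (x, false)} := by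
    exact (sampleSum_indicator_fst_preimage (fun i => e (ω i)) x 1).trans (by simp)
  have hsigned (ω : Fin N → Fin (Fintype.card (ι × Bool))) (x : ι) :
      sampleSum (((fun b => (e b).1) ⁻¹' {x}).indicator fun b => boolSign (e b).2) ω =
        #{i | e (ω i) = (x, true)} - #{i | e (ω i) = (x, false)} := by
    exact (sampleSum_indicator_fst_preimage (fun i => e (ω i)) x fun z => boolSign z.2).trans
      (by simp [boolSign, sub_eq_add_neg])
  simp only [hfiber, hhits, hsigned] at hcore
  rw [← hmap]
  exact hcore.trans (pi_preimage_comp_le_pi_map .of_discrete _)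

theorem ofReal_one_sub_le_pi_sum_abs_sub_estimatedRatio_card_le_of_weights [DecidableEq ι]
    [MeasurableSpace ι] {μ : Measure (ι × Bool)} [IsProbabilityMeasure μ] {a b : ι → ℝ} {γ : ℝ}
    (hγ : 0 < γ) (hb : ∀ x, 0 ≤ b x) (hba : ∀ x, b x ≤ a x) (hsum : ∑ x, (a x + b x) = γ)
    (hμt : ∀ x, μ {(x, true)} = ENNReal.ofReal (a x / γ))
    (hμf : ∀ x, μ {(x, false)} = ENNReal.ofReal (b x / γ)) {N : ℕ} (hN : 0 < N) {T η δ : ℝ}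
    (hT : 0 ≤ T) (hδ : Real.exp (-T ^ 2 / 4) ≤ δ)
    (hη : √(2 * N) * (∑ x, √((a x + b x) / γ) + T) ≤ N * η) :
    ENNReal.ofReal (1 - δ) ≤ (Measure.pi fun _ : Fin N => μ)
      {ω | ∑ x, |(a x - b x) / (a x + b x)
          - estimatedRatio (#{i | ω i = (x, true)} + #{i | ω i = (x, false)})
            (#{i | ω i = (x, true)} - #{i | ω i = (x, false)})| * ((a x + b x) / γ) ≤ η} := by
  have ha (x : ι) : 0 ≤ a x := (hb x).trans (hba x)
  have hab (x : ι) : 0 ≤ a x + b x := add_nonneg (ha x) (hb x)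
  have htrue (x : ι) : μ.real {(x, true)} = a x / γ := by
    rw [Measure.real, hμt, ENNReal.toReal_ofReal (div_nonneg (ha x) hγ.le)]
  have hfalse (x : ι) : μ.real {(x, false)} = b x / γ := by
    rw [Measure.real, hμf, ENNReal.toReal_ofReal (div_nonneg (hb x) hγ.le)]
  refine ofReal_one_sub_le_pi_sum_abs_sub_estimatedRatio_card_le ?_ (fun x => ?_) (fun x => ?_)
    (fun x => div_nonneg (sub_nonneg.2 (hba x)) (hab x))
    (fun x => div_le_one_of_le₀ (by linarith [hb x]) (hab x)) hN hT hδ hη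
  · rw [← sum_div, hsum, div_self hγ.ne']
  · rw [htrue, hfalse, add_div]
  · rw [htrue, hfalse, ← mul_div_assoc, sub_div_add_mul_add (ha x) (hb x), sub_div]

end SignedSamples

theorem sqrt_two_mul_mul_le_of_two_mul_sq_div_sq_le {n A η : ℝ} (hη : 0 < η)
    (h : 2 * A ^ 2 / η ^ 2 ≤ n) : √(2 * n) * A ≤ n * η := by
  have hn : 0 ≤ n := le_trans (by positivity) h
  refine le_of_abs_le (abs_le_of_sq_le_sq ?_ (by positivity))
  calc (√(2 * n) * A) ^ 2 = n * (2 * A ^ 2) := by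
        rw [mul_pow, Real.sq_sqrt (by positivity)]
        ring
    _ ≤ n * (n * η ^ 2) :=
        mul_le_mul_of_nonneg_left ((div_le_iff₀ (by positivity)).1 h) hn
    _ = (n * η) ^ 2 := by ring

theorem exp_neg_sq_sqrt_mul_log_div_four_le {c δ : ℝ} (hc : 4 ≤ c) (hδ0 : 0 < δ) (hδ1 : δ < 1) :
    Real.exp (-√(c * Real.log (1 / δ)) ^ 2 / 4) ≤ δ := by
  have hlog : 0 ≤ Real.log (1 / δ) := Real.log_nonneg (one_le_one_div hδ0 hδ1.le)
  rw [Real.sq_sqrt (by positivity), ← Real.le_log_iff_exp_le hδ0]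
  rw [one_div, Real.log_inv] at hlog ⊢
  nlinarith

theorem four_le_two_div_one_sub_exp_neg_half : 4 ≤ 2 / (1 - Real.exp (-1 / 2)) := by
  have hpos : 0 < 1 - Real.exp (-1 / 2) := by
    rw [sub_pos, Real.exp_lt_one_iff]
    norm_num
  rw [le_div_iff₀ hpos]
  linarith [Real.add_one_le_exp (-1 / 2)]

/-- Theorem S3, estimation stage: alternative bound with logarithmic dependence on
the failure probability. With `v = 1 − e^{−1/2}`, if the number of samples
satisfies `N ≥ 2γ²((1+ε)/ε)²(∑_x √(qₓ) + √((2/v)·log(1/δ₁)))²` (note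
`∑_x √(qₓ) = 2^{H_{1/2}(q)/2}`), then with probability at least `1 − δ₁` the
estimated acceptance ratios `R` (built from the counts `N⁺ₓ, N⁻ₓ` of the `N`
i.i.d. samples) satisfy `γ·∑_x |μₓ − Rₓ|·qₓ ≤ ε/(1+ε)`, where `μₓ = pₓ/(γqₓ)` is
the ideal acceptance ratio. -/
theorem acceptance_ratio_estimation_cost_log_delta_bound
    {ι : Type*} [Fintype ι] [DecidableEq ι] [MeasurableSpace ι]
    (pp pm : ι → ℝ)
    (hpp0 : ∀ x, 0 ≤ pp x) (hpp1 : ∑ x, pp x = 1)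
    (hpm0 : ∀ x, 0 ≤ pm x) (hpm1 : ∑ x, pm x = 1)
    (cp cm : ℝ) (hcp : 0 ≤ cp) (hcm : 0 ≤ cm) (hc : cp - cm = 1)
    (γ : ℝ) (hγ : γ = cp + cm)
    (p : ι → ℝ) (hp : ∀ x, p x = cp * pp x - cm * pm x)
    (hp0 : ∀ x, 0 ≤ p x)
    (q : ι → ℝ) (hq : ∀ x, q x = (cp * pp x + cm * pm x) / γ)
    (μ1 : Measure (ι × Bool)) [IsProbabilityMeasure μ1]
    (hμt : ∀ x, μ1 {(x, true)} = ENNReal.ofReal (cp * pp x / γ))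
    (hμf : ∀ x, μ1 {(x, false)} = ENNReal.ofReal (cm * pm x / γ))
    (N : ℕ) (hN : 0 < N)
    (R : ι → (Fin N → ι × Bool) → ℝ)
    (hR : ∀ x ω, R x ω =
      if ((Finset.univ.filter fun i => ω i = (x, true)).card
           + (Finset.univ.filter fun i => ω i = (x, false)).card) = 0
      then 1
      else max 0
        ((((Finset.univ.filter fun i => ω i = (x, true)).card : ℝ)
            - ((Finset.univ.filter fun i => ω i = (x, false)).card : ℝ))
          / (((Finset.univ.filter fun i => ω i = (x, true)).card : ℝ)
            + ((Finset.univ.filter fun i => ω i = (x, false)).card : ℝ))))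
    (μid : ι → ℝ) (hμid : ∀ x, μid x = if q x = 0 then 0 else p x / (γ * q x))
    (v : ℝ) (hv : v = 1 - Real.exp (-1 / 2))
    (ε δ₁ : ℝ) (hε : 0 < ε) (hδ₁0 : 0 < δ₁) (hδ₁1 : δ₁ < 1)
    (hNbound : (N : ℝ) ≥ 2 * γ ^ 2 * ((1 + ε) / ε) ^ 2 *
      (∑ x, Real.sqrt (q x) + Real.sqrt ((2 / v) * Real.log (1 / δ₁))) ^ 2) :
    ENNReal.ofReal (1 - δ₁) ≤
      (Measure.pi fun _ : Fin N => μ1)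
        {ω | γ * ∑ x, |μid x - R x ω| * q x ≤ ε / (1 + ε)} := by
  have hγ0 : 0 < γ := by linarith
  have hsum : ∑ x, (cp * pp x + cm * pm x) = γ := by
    rw [sum_add_distrib, ← mul_sum, ← mul_sum, hpp1, hpm1, hγ, mul_one, mul_one]
  have hideal (x : ι) : μid x = (cp * pp x - cm * pm x) / (cp * pp x + cm * pm x) := by
    have hγq : γ * q x = cp * pp x + cm * pm x := by rw [hq, mul_div_cancel₀ _ hγ0.ne']
    rw [hμid, ← hp, ← hγq]
    split_ifs with hqx <;> simp [hqx]
  have hestimated (x : ι) (ω : Fin N → ι × Bool) : R x ω = estimatedRatio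
      (#{i | ω i = (x, true)} + #{i | ω i = (x, false)})
      (#{i | ω i = (x, true)} - #{i | ω i = (x, false)}) := by
    rw [hR, estimatedRatio]
    simp only [← Nat.cast_add, Nat.cast_eq_zero]
  have hδ := exp_neg_sq_sqrt_mul_log_div_four_le (hv ▸ four_le_two_div_one_sub_exp_neg_half)
    hδ₁0 hδ₁1
  have hη : √(2 * N) * (∑ x, √(q x) + √((2 / v) * Real.log (1 / δ₁))) ≤
      N * (ε / (1 + ε) / γ) := by
    refine sqrt_two_mul_mul_le_of_two_mul_sq_div_sq_le (by positivity) ?_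
    convert hNbound.le using 1
    field_simp
  simp only [← le_div_iff₀' hγ0, hestimated, hideal]
  simp only [hq] at hη ⊢
  exact ofReal_one_sub_le_pi_sum_abs_sub_estimatedRatio_card_le_of_weights hγ0
    (fun x => mul_nonneg hcm (hpm0 x)) (fun x => sub_nonneg.1 (hp x ▸ hp0 x)) hsum hμt hμf hN
    (Real.sqrt_nonneg _) hδ hη
end

section
/- Let ι be a finite type, let p and q be probability mass functions on ι with q_x > 0 for all x, let K > 0, and let ε : ι → ℝ. Define R_x = p_x/(K·q_x) − ε_x and assume R_x ≥ 0 for all x and K·∑_x |ε_x|·q_x < 1. Define the distribution produced by rejection sampling with the perturbed acceptance ratios R as p̃_x = R_x·q_x / (∑_y R_y·q_y) (the denominator is positive under the assumptions). Then the total variation distance satisfies (1/2)·∑_x |p_x − p̃_x| ≤ K·∑_x |ε_x|·q_x / (1 − K·∑_x |ε_x|·q_x). Consequently, if K·∑_x |ε_x|·q_x ≤ ε/(1+ε) for some ε > 0, then (1/2)·∑_x |p_x − p̃_x| ≤ ε. -/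
open Finset

open MeasureTheory

/-!
Put `w = K R q = p - K e q`. The sampler's output density is `w / ∫ w`, and since `w ≥ 0` the
normalization moves `w` in `L¹` by exactly `|∫ w - 1| = |∫ w - ∫ p| ≤ ∫ |p - w|`. By the triangle
inequality through `w`, the output is at `L¹` distance at most `2 ∫ |p - w| = 2 K ∫ |e| q` from `p`,
which even gives the total variation bound `K ∫ |e| q` without the factor `1 / (1 - K ∫ |e| q)`.
-/

section Normalization

variable {Ω : Type*} [MeasurableSpace Ω] {μ : Measure Ω} {f g h : Ω → ℝ}

/-- The density with respect to `μ` proportional to the weight `g`; it is `0` when `g` has zero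
integral or is not integrable. -/
noncomputable def normalizedDensity (μ : Measure Ω) (g : Ω → ℝ) (x : Ω) : ℝ :=
  g x / ∫ y, g y ∂μ

lemma normalizedDensity_const_mul {c : ℝ} (hc : c ≠ 0) (g : Ω → ℝ) :
    normalizedDensity μ (fun x ↦ c * g x) = normalizedDensity μ g := by
  funext x
  simp only [normalizedDensity, integral_const_mul, mul_div_mul_left _ _ hc]

lemma integrable_normalizedDensity (hg : Integrable g μ) : Integrable (normalizedDensity μ g) μ :=
  hg.div_const _

lemma integral_abs_sub_le (hf : Integrable f μ) (hg : Integrable g μ) (hh : Integrable h μ) :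
    ∫ x, |f x - h x| ∂μ ≤ ∫ x, |f x - g x| ∂μ + ∫ x, |g x - h x| ∂μ :=
  calc ∫ x, |f x - h x| ∂μ
      ≤ ∫ x, (|f x - g x| + |g x - h x|) ∂μ :=
        integral_mono (hf.sub hh).abs ((hf.sub hg).abs.add (hg.sub hh).abs) fun _ ↦
          abs_sub_le _ _ _
    _ = ∫ x, |f x - g x| ∂μ + ∫ x, |g x - h x| ∂μ :=
        integral_add (hf.sub hg).abs (hg.sub hh).abs

lemma abs_integral_sub_integral_le (hf : Integrable f μ) (hg : Integrable g μ) :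
    |∫ x, f x ∂μ - ∫ x, g x ∂μ| ≤ ∫ x, |f x - g x| ∂μ := by
  rw [← integral_sub hf hg]
  exact abs_integral_le_integral_abs

lemma integral_pos_of_integral_abs_sub_lt (hf : Integrable f μ) (hg : Integrable g μ)
    (hfg : ∫ x, |f x - g x| ∂μ < ∫ x, f x ∂μ) : 0 < ∫ x, g x ∂μ := by
  linarith [le_of_abs_le (abs_integral_sub_integral_le hf hg)]

lemma integral_abs_sub_normalizedDensity (hg : 0 ≤ᵐ[μ] g) (hZ : ∫ x, g x ∂μ ≠ 0) :
    ∫ x, |g x - normalizedDensity μ g x| ∂μ = |∫ x, g x ∂μ - 1| := by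
  set Z := ∫ x, g x ∂μ with hZ_def
  have hZ_nonneg : 0 ≤ Z := integral_nonneg_of_ae hg
  calc ∫ x, |g x - normalizedDensity μ g x| ∂μ
      = ∫ x, g x * |1 - 1 / Z| ∂μ := by
        refine integral_congr_ae (hg.mono fun x hx ↦ ?_)
        have hfactor : g x - normalizedDensity μ g x = g x * (1 - 1 / Z) := by
          rw [normalizedDensity, ← hZ_def]; ring
        simp only [hfactor, abs_mul, abs_of_nonneg hx]
    _ = Z * |1 - 1 / Z| := integral_mul_const _ _
    _ = |Z * (1 - 1 / Z)| := by rw [abs_mul, abs_of_nonneg hZ_nonneg]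
    _ = |Z - 1| := by rw [mul_sub, mul_one, mul_one_div_cancel hZ]

lemma half_integral_abs_sub_normalizedDensity_le (hf : ∫ x, f x ∂μ = 1) (hg : 0 ≤ᵐ[μ] g)
    (hZ : ∫ x, g x ∂μ ≠ 0) :
    (1 / 2) * ∫ x, |f x - normalizedDensity μ g x| ∂μ ≤ ∫ x, |f x - g x| ∂μ := by
  have hf_int : Integrable f μ := .of_integral_ne_zero (hf ▸ one_ne_zero)
  have hg_int : Integrable g μ := .of_integral_ne_zero hZ
  have htriangle := integral_abs_sub_le hf_int hg_int (integrable_normalizedDensity hg_int)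
  have hnormalization : ∫ x, |g x - normalizedDensity μ g x| ∂μ ≤ ∫ x, |f x - g x| ∂μ := by
    rw [integral_abs_sub_normalizedDensity hg hZ, abs_sub_comm, ← hf]
    exact abs_integral_sub_integral_le hf_int hg_int
  linarith

end Normalization

section RejectionSampling

variable {Ω : Type*} [MeasurableSpace Ω] {μ : Measure Ω} {p q e R : Ω → ℝ} {K : ℝ}

lemma integral_abs_sub_perturbed_weight (hq : ∀ᵐ x ∂μ, 0 < q x) (hK : 0 < K)
    (hR : ∀ᵐ x ∂μ, R x = p x / (K * q x) - e x) :
    ∫ x, |p x - K * (R x * q x)| ∂μ = K * ∫ x, |e x| * q x ∂μ := by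
  rw [← integral_const_mul]
  refine integral_congr_ae ?_
  filter_upwards [hq, hR] with x hqx hRx
  have herror : p x - K * (R x * q x) = K * (e x * q x) := by
    rw [hRx]
    field_simp
    ring
  rw [herror, abs_mul, abs_mul, abs_of_pos hK, abs_of_pos hqx]

lemma integral_perturbed_ratio_mul_pos (hp : ∫ x, p x ∂μ = 1) (hq : ∀ᵐ x ∂μ, 0 < q x)
    (hK : 0 < K) (hR : ∀ᵐ x ∂μ, R x = p x / (K * q x) - e x)
    (hRq : Integrable (fun x ↦ R x * q x) μ) (hsmall : K * ∫ x, |e x| * q x ∂μ < 1) :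
    0 < ∫ x, R x * q x ∂μ := by
  have hp_int : Integrable p μ := .of_integral_ne_zero (hp ▸ one_ne_zero)
  have hweight : 0 < ∫ x, K * (R x * q x) ∂μ := by
    refine integral_pos_of_integral_abs_sub_lt hp_int (hRq.const_mul K) ?_
    rwa [integral_abs_sub_perturbed_weight hq hK hR, hp]
  rw [integral_const_mul] at hweight
  exact pos_of_mul_pos_right hweight hK.le

theorem rejection_sampling_perturbed_tv_general (hp : ∫ x, p x ∂μ = 1)
    (hq : ∀ᵐ x ∂μ, 0 < q x) (hK : 0 < K) (hR : ∀ᵐ x ∂μ, R x = p x / (K * q x) - e x)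
    (hR_nonneg : ∀ᵐ x ∂μ, 0 ≤ R x) (hZ : ∫ x, R x * q x ∂μ ≠ 0) :
    (1 / 2) * ∫ x, |p x - normalizedDensity μ (fun y ↦ R y * q y) x| ∂μ ≤
      K * ∫ x, |e x| * q x ∂μ := by
  have hweight_nonneg : 0 ≤ᵐ[μ] fun x ↦ K * (R x * q x) := by
    filter_upwards [hq, hR_nonneg] with x hqx hRx
    exact mul_nonneg hK.le (mul_nonneg hRx hqx.le)
  have hweight_ne : ∫ x, K * (R x * q x) ∂μ ≠ 0 := by
    rw [integral_const_mul]
    exact mul_ne_zero hK.ne' hZ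
  rw [← integral_abs_sub_perturbed_weight hq hK hR, ← normalizedDensity_const_mul hK.ne']
  exact half_integral_abs_sub_normalizedDensity_le hp hweight_nonneg hweight_ne

end RejectionSampling

/-- Rejection sampling with perturbed acceptance ratios: total variation error bound.
If `R x = p x / (K * q x) - ε x ≥ 0` and `K * ∑ x, |ε x| * q x < 1`, then the
distribution `p̃ x = R x * q x / ∑ y, R y * q y` produced by rejection sampling
satisfies `d_tv(p, p̃) ≤ K·∑|ε|q / (1 − K·∑|ε|q)`; consequently, if
`K·∑|ε|q ≤ ε₀/(1+ε₀)` then `d_tv(p, p̃) ≤ ε₀`. -/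
theorem rejection_sampling_perturbed_tv {ι : Type*} [Fintype ι]
    (p q : ι → ℝ) (hp0 : ∀ x, 0 ≤ p x) (hp1 : ∑ x, p x = 1)
    (hq0 : ∀ x, 0 < q x) (hq1 : ∑ x, q x = 1)
    (K : ℝ) (hK : 0 < K) (e : ι → ℝ)
    (R : ι → ℝ) (hR : ∀ x, R x = p x / (K * q x) - e x)
    (hR0 : ∀ x, 0 ≤ R x)
    (hsmall : K * ∑ x, |e x| * q x < 1)
    (ptilde : ι → ℝ) (hpt : ∀ x, ptilde x = R x * q x / (∑ y, R y * q y)) :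
    (1 / 2) * ∑ x, |p x - ptilde x| ≤
        K * (∑ x, |e x| * q x) / (1 - K * ∑ x, |e x| * q x) ∧
    ∀ ε : ℝ, 0 < ε → K * ∑ x, |e x| * q x ≤ ε / (1 + ε) →
      (1 / 2) * ∑ x, |p x - ptilde x| ≤ ε := by
  let _ : MeasurableSpace ι := ⊤
  have hp : ∫ x, p x ∂Measure.count = 1 := (integral_count p).trans hp1
  have hZ := integral_perturbed_ratio_mul_pos hp (.of_forall hq0) hK (.of_forall hR)
    .of_finite (by rwa [integral_count])
  have htv := rejection_sampling_perturbed_tv_general hp (.of_forall hq0) hK (.of_forall hR)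
    (.of_forall hR0) hZ.ne'
  simp only [normalizedDensity, integral_count, ← hpt] at htv
  have herror_nonneg : 0 ≤ K * ∑ x, |e x| * q x :=
    mul_nonneg hK.le (sum_nonneg fun x _ ↦ mul_nonneg (abs_nonneg _) (hq0 x).le)
  exact ⟨htv.trans (le_div_self herror_nonneg (sub_pos.2 hsmall) (sub_le_self 1 herror_nonneg)),
    fun ε hε hle ↦ (htv.trans hle).trans (div_le_self hε.le (le_add_of_nonneg_right hε.le))⟩
end

section
/- For every integer N ≥ 1 and every q ∈ (0,1], ∑_{n=1}^{N} (1/n)·C(N,n)·qⁿ·(1−q)^{N−n} ≤ 2/(N·q). (Bound for the expectation of 1/Y restricted to Y ≥ 1, for a binomial random variable Y ~ Bin(N, q).) -/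
open Finset

/-!
For `Y ~ Bin(N, q)` the expectation of `1 / (Y + 1)` has a closed form: absorbing `1 / (n + 1)` into
the binomial coefficient turns the sum into a binomial expansion of degree `N + 1` without its
zeroth term. The bound on the expectation of `1 / Y` follows from `1 / n ≤ 2 / (n + 1)` for
`n ≥ 1`.
-/

section

variable {K : Type*} [Field K]

theorem one_div_add_one_mul_choose [CharZero K] (N n : ℕ) :
    1 / ((n : K) + 1) * (N.choose n : K) = ((N + 1).choose (n + 1) : K) / (N + 1) := by
  have absorption : ((N : K) + 1) * N.choose n = (N + 1).choose (n + 1) * (n + 1) :=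
    mod_cast Nat.add_one_mul_choose_eq N n
  rw [one_div_mul_eq_div, div_eq_div_iff n.cast_add_one_ne_zero N.cast_add_one_ne_zero, mul_comm,
    absorption]

theorem sum_one_div_add_one_mul_choose_mul_pow [CharZero K] (N : ℕ) {x : K} (hx : x ≠ 0) (y : K) :
    ∑ n ∈ range (N + 1), 1 / ((n : K) + 1) * (N.choose n : K) * x ^ n * y ^ (N - n) =
      ((x + y) ^ (N + 1) - y ^ (N + 1)) / ((N + 1) * x) := by
  have expansion : (x + y) ^ (N + 1) - y ^ (N + 1) =
      ∑ n ∈ range (N + 1), x ^ (n + 1) * y ^ (N - n) * ((N + 1).choose (n + 1) : K) := by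
    rw [add_pow, sum_range_succ']
    simp
  rw [expansion, sum_div]
  refine sum_congr rfl fun n _ ↦ ?_
  rw [one_div_add_one_mul_choose, pow_succ]
  field_simp

variable [LinearOrder K] [IsStrictOrderedRing K]

theorem one_div_le_two_mul_one_div_add_one {a : K} (ha : 1 ≤ a) : 1 / a ≤ 2 * (1 / (a + 1)) := by
  rw [mul_one_div, div_le_div_iff₀ (by linarith) (by linarith)]
  linarith

theorem binomial_inv_expectation_le_general (N : ℕ) {x y : K} (hx : 0 < x) (hy : 0 ≤ y) :
    ∑ n ∈ Icc 1 N, 1 / (n : K) * (N.choose n : K) * x ^ n * y ^ (N - n) ≤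
      2 * (x + y) ^ (N + 1) / ((N + 1) * x) := by
  have Icc_subset_range : Icc 1 N ⊆ range (N + 1) := fun n hn ↦
    mem_range_succ_iff.2 (mem_Icc.1 hn).2
  calc ∑ n ∈ Icc 1 N, 1 / (n : K) * (N.choose n : K) * x ^ n * y ^ (N - n)
      ≤ ∑ n ∈ Icc 1 N,
          2 * (1 / ((n : K) + 1)) * (N.choose n : K) * x ^ n * y ^ (N - n) := by
        gcongr with n hn
        exact one_div_le_two_mul_one_div_add_one (mod_cast (mem_Icc.1 hn).1)
    _ ≤ ∑ n ∈ range (N + 1),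
          2 * (1 / ((n : K) + 1)) * (N.choose n : K) * x ^ n * y ^ (N - n) :=
        sum_le_sum_of_subset_of_nonneg Icc_subset_range fun n _ _ ↦ by positivity
    _ = 2 * (((x + y) ^ (N + 1) - y ^ (N + 1)) / ((N + 1) * x)) := by
        rw [← sum_one_div_add_one_mul_choose_mul_pow N hx.ne' y, mul_sum]
        simp only [mul_assoc]
    _ ≤ 2 * (x + y) ^ (N + 1) / ((N + 1) * x) := by
        rw [mul_div_assoc]
        gcongr
        exact sub_le_self _ (by positivity)

end

/-- Bound for the expectation of `1/Y` restricted to `Y ≥ 1`, for `Y ~ Bin(N, q)`: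
`∑_{n=1}^{N} (1/n)·C(N,n)·qⁿ·(1−q)^{N−n} ≤ 2/(N·q)`. -/
theorem binomial_inv_expectation_le (N : ℕ) (hN : 1 ≤ N) (q : ℝ)
    (hq0 : 0 < q) (hq1 : q ≤ 1) :
    ∑ n ∈ Finset.Icc 1 N,
        (1 / (n : ℝ)) * (N.choose n : ℝ) * q ^ n * (1 - q) ^ (N - n)
      ≤ 2 / ((N : ℝ) * q) := by
  refine (binomial_inv_expectation_le_general N hq0 (sub_nonneg.2 hq1)).trans ?_
  rw [add_sub_cancel, one_pow, mul_one]
  gcongr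
  exact le_add_of_nonneg_right zero_le_one
end

section
/- Let N ≥ 1 be an integer, let α, β ≥ 0 with q := α + β ∈ (0,1]. Consider the two-stage random variable W defined as follows: first draw Y ~ Binomial(N, q); if Y = n ≥ 1, draw n i.i.d. random variables B₁,…,B_n each taking value +1 with probability α/q and −1 with probability β/q, and set W = (1/n)·∑_{i=1}^n B_i − (α−β)/q; if Y = 0, set W = 0. Then E[W²] ≤ 8·α·β / (N·q³). (Second-moment bound for the conditional empirical-mean error averaged over a binomial sample size.) -/
open Finset

/-!
Given `Y = n ≥ 1`, the error `W` is the mean of `n` independent centred variables of variance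
`4αβ/q²`, so `E[W² | Y = n] = 4αβ/(q²n)`. It remains to bound `E[1/Y; Y ≥ 1]`. Since
`1/n ≤ 2/(n + 1)`, it suffices to bound `E[1/(Y + 1)]`. By the absorption identity
`(N + 1) C(N, n) = (n + 1) C(N + 1, n + 1)`, the quantity `(N + 1) q E[1/(Y + 1)]` is the
probability that a `Binomial(N + 1, q)` variable is positive, hence at most `1`.
-/

section ProductWeights

variable {ι : Type*} [Fintype ι] [DecidableEq ι]

theorem sum_prod_mul_prod_apply {R : Type*} [CommSemiring R] {κ : ι → Type*}
    [∀ i, Fintype (κ i)] {w : ∀ i, κ i → R} (hw : ∀ i, ∑ c, w i c = 1) (x : ∀ i, κ i → R)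
    (s : Finset ι) :
    ∑ b : ∀ i, κ i, (∏ i, w i (b i)) * ∏ i ∈ s, x i (b i) = ∏ i ∈ s, ∑ c, w i c * x i c := by
  calc ∑ b : ∀ i, κ i, (∏ i, w i (b i)) * ∏ i ∈ s, x i (b i)
      = ∑ b : ∀ i, κ i, ∏ i, w i (b i) * (if i ∈ s then x i (b i) else 1) := by
        simp only [prod_mul_distrib, Fintype.prod_ite_mem]
    _ = ∏ i, ∑ c, w i c * (if i ∈ s then x i c else 1) := by
        rw [prod_univ_sum, Fintype.piFinset_univ]
    _ = ∏ i, if i ∈ s then ∑ c, w i c * x i c else 1 := by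
        refine prod_congr rfl fun i _ => ?_
        split_ifs <;> simp [hw]
    _ = ∏ i ∈ s, ∑ c, w i c * x i c := Fintype.prod_ite_mem s _

theorem sum_prod_mul_sum_sq_of_centered {R : Type*} [CommSemiring R] {κ : ι → Type*}
    [∀ i, Fintype (κ i)] {w x : ∀ i, κ i → R} (hw : ∀ i, ∑ c, w i c = 1)
    (hx : ∀ i, ∑ c, w i c * x i c = 0) :
    ∑ b : ∀ i, κ i, (∏ i, w i (b i)) * (∑ i, x i (b i)) ^ 2 = ∑ i, ∑ c, w i c * x i c ^ 2 := by
  have diagonal (i : ι) :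
      ∑ b : ∀ i, κ i, (∏ k, w k (b k)) * (x i (b i) * x i (b i)) = ∑ c, w i c * x i c ^ 2 := by
    simpa [← sq] using sum_prod_mul_prod_apply hw (fun i c => x i c ^ 2) {i}
  have off_diagonal {i j : ι} (hij : j ≠ i) :
      ∑ b : ∀ i, κ i, (∏ k, w k (b k)) * (x i (b i) * x j (b j)) = 0 := by
    simpa [prod_pair hij.symm, hx] using sum_prod_mul_prod_apply hw x {i, j}
  calc ∑ b : ∀ i, κ i, (∏ i, w i (b i)) * (∑ i, x i (b i)) ^ 2
      = ∑ i, ∑ j, ∑ b : ∀ i, κ i, (∏ k, w k (b k)) * (x i (b i) * x j (b j)) := by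
        simp_rw [sq, sum_mul_sum, mul_sum]
        rw [sum_comm]
        exact sum_congr rfl fun i _ => sum_comm
    _ = ∑ i, ∑ c, w i c * x i c ^ 2 := by
        refine sum_congr rfl fun i _ => ?_
        rw [Fintype.sum_eq_single i fun j hij => off_diagonal hij, diagonal]

variable {K : Type*} [Field K] [CharZero K]

theorem sum_prod_mul_empirical_mean_sub_mean_sq [Nonempty ι] {κ : Type*} [Fintype κ] {w : κ → K}
    (hw : ∑ c, w c = 1) (x : κ → K) {m : K} (hm : ∑ c, w c * x c = m) :
    ∑ b : ι → κ, (∏ i, w (b i)) * ((∑ i, x (b i)) / Fintype.card ι - m) ^ 2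
      = (∑ c, w c * (x c - m) ^ 2) / Fintype.card ι := by
  have card_ne_zero : (Fintype.card ι : K) ≠ 0 := Nat.cast_ne_zero.2 Fintype.card_ne_zero
  have centered : ∑ c, w c * (x c - m) = 0 := by
    simp only [mul_sub, sum_sub_distrib, ← sum_mul, hw, hm, one_mul, sub_self]
  have deviation (b : ι → κ) :
      (∑ i, x (b i)) / Fintype.card ι - m = (∑ i, (x (b i) - m)) / Fintype.card ι := by
    rw [sum_sub_distrib, sum_const, card_univ, nsmul_eq_mul, sub_div,
      mul_div_cancel_left₀ _ card_ne_zero]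
  have variance_sum :=
    sum_prod_mul_sum_sq_of_centered (ι := ι) (fun _ => hw) (fun _ => centered)
  simp only [deviation, div_pow, ← mul_div_assoc, ← sum_div]
  rw [variance_sum, sum_const, card_univ, nsmul_eq_mul]
  field_simp

theorem sum_prod_mul_empirical_mean_sign_sub_mean_sq [Nonempty ι] {p r : K} (hpr : p + r = 1) :
    ∑ b : ι → Bool, (∏ i, if b i then p else r) *
        ((∑ i, if b i then (1 : K) else -1) / Fintype.card ι - (p - r)) ^ 2
      = 4 * p * r / Fintype.card ι := by
  have variance : p * (1 - (p - r)) ^ 2 + r * (-1 - (p - r)) ^ 2 = 4 * p * r := by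
    obtain rfl : r = 1 - p := eq_sub_of_add_eq' hpr
    ring
  rw [sum_prod_mul_empirical_mean_sub_mean_sq (w := fun c : Bool => if c then p else r)
    (by simpa using hpr) (fun c => if c then 1 else -1) (by simp [sub_eq_add_neg])]
  simp [variance]

end ProductWeights

section InverseMoments

theorem mul_sum_choose_mul_pow_div_add_one {K : Type*} [Field K] [CharZero K] (p r : K) (N : ℕ) :
    (N + 1) * p * ∑ n ∈ range (N + 1), N.choose n * p ^ n * r ^ (N - n) / (n + 1)
      = (p + r) ^ (N + 1) - r ^ (N + 1) := by
  have absorb (n : ℕ) : (N + 1) * p * (N.choose n * p ^ n * r ^ (N - n) / (n + 1))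
      = p ^ (n + 1) * r ^ (N - n) * (N + 1).choose (n + 1) := by
    have choose_eq : ((N : K) + 1) * N.choose n = (N + 1).choose (n + 1) * (n + 1) := by
      exact_mod_cast Nat.add_one_mul_choose_eq N n
    have : (n : K) + 1 ≠ 0 := Nat.cast_add_one_ne_zero n
    field_simp
    linear_combination p * p ^ n * r ^ (N - n) * choose_eq
  rw [add_pow, sum_range_succ' _ (N + 1), mul_sum]
  simp [absorb]

variable {K : Type*} [Field K] [LinearOrder K] [IsStrictOrderedRing K]

theorem sum_choose_mul_pow_div_add_one_le {q : K} (hq0 : 0 < q) (hq1 : q ≤ 1) (N : ℕ) :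
    ∑ n ∈ range (N + 1), N.choose n * q ^ n * (1 - q) ^ (N - n) / (n + 1)
      ≤ 1 / ((N + 1) * q) := by
  rw [le_div_iff₀' (by positivity), mul_sum_choose_mul_pow_div_add_one, add_sub_cancel, one_pow]
  exact sub_le_self _ (pow_nonneg (sub_nonneg.2 hq1) _)

theorem one_div_natCast_le_two_div_add_one {n : ℕ} (hn : 1 ≤ n) : 1 / (n : K) ≤ 2 / (n + 1) := by
  have one_le : (1 : K) ≤ n := Nat.one_le_cast.2 hn
  rw [div_le_div_iff₀ (by positivity) (by positivity)]
  linarith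

theorem sum_Icc_choose_mul_pow_div_le {q : K} (hq0 : 0 < q) (hq1 : q ≤ 1) (N : ℕ) :
    ∑ n ∈ Icc 1 N, N.choose n * q ^ n * (1 - q) ^ (N - n) / n ≤ 2 / ((N + 1) * q) := by
  have weight_nonneg (n : ℕ) : 0 ≤ N.choose n * q ^ n * (1 - q) ^ (N - n) := by
    have := sub_nonneg.2 hq1
    positivity
  calc ∑ n ∈ Icc 1 N, N.choose n * q ^ n * (1 - q) ^ (N - n) / n
      ≤ ∑ n ∈ Icc 1 N, 2 * (N.choose n * q ^ n * (1 - q) ^ (N - n) / (n + 1)) := by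
        refine sum_le_sum fun n hn => ?_
        rw [mul_div_left_comm, div_eq_mul_one_div]
        exact mul_le_mul_of_nonneg_left
          (one_div_natCast_le_two_div_add_one (mem_Icc.1 hn).1) (weight_nonneg n)
    _ ≤ ∑ n ∈ range (N + 1), 2 * (N.choose n * q ^ n * (1 - q) ^ (N - n) / (n + 1)) := by
        refine sum_le_sum_of_subset_of_nonneg (fun n hn => ?_) fun n _ _ => ?_
        · exact mem_range_succ_iff.2 (mem_Icc.1 hn).2
        · have := weight_nonneg n
          positivity
    _ ≤ 2 * (1 / ((N + 1) * q)) := by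
        rw [← mul_sum]
        gcongr
        exact sum_choose_mul_pow_div_add_one_le hq0 hq1 N
    _ = 2 / ((N + 1) * q) := mul_one_div _ _

end InverseMoments

/-- Second-moment bound for the conditional empirical-mean error averaged over a
binomial sample size. The two-stage random variable `W` is: draw `Y ~ Bin(N, q)`
with `q = α + β`; given `Y = n ≥ 1` draw `n` i.i.d. ±1 variables (`+1` with
probability `α/q`, `−1` with probability `β/q`) and set
`W = (mean of the signs) − (α−β)/q`; if `Y = 0` set `W = 0`.
Then `E[W²] ≤ 8αβ/(Nq³)`, the expectation written as an explicit sum. -/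
theorem binomial_two_stage_second_moment (N : ℕ) (hN : 1 ≤ N)
    (α β : ℝ) (hα : 0 ≤ α) (hβ : 0 ≤ β)
    (q : ℝ) (hq : q = α + β) (hq0 : 0 < q) (hq1 : q ≤ 1) :
    (1 - q) ^ N * 0 ^ 2 +
      ∑ n ∈ Finset.Icc 1 N, (N.choose n : ℝ) * q ^ n * (1 - q) ^ (N - n) *
        ∑ b : Fin n → Bool,
          (∏ i, (if b i then α / q else β / q)) *
            ((∑ i, (if b i then (1 : ℝ) else -1)) / (n : ℝ) - (α - β) / q) ^ 2
      ≤ 8 * α * β / ((N : ℝ) * q ^ 3) := by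
  have prob_add : α / q + β / q = 1 := by rw [← add_div, ← hq, div_self hq0.ne']
  calc _ = 4 * (α / q) * (β / q) *
          ∑ n ∈ Icc 1 N, N.choose n * q ^ n * (1 - q) ^ (N - n) / n := by
        rw [zero_pow two_ne_zero, mul_zero, zero_add, mul_sum]
        refine sum_congr rfl fun n hn => ?_
        have : Nonempty (Fin n) := ⟨⟨0, (mem_Icc.1 hn).1⟩⟩
        have second_moment := sum_prod_mul_empirical_mean_sign_sub_mean_sq (ι := Fin n) prob_add
        rw [Fintype.card_fin, ← sub_div] at second_moment
        rw [second_moment]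
        ring
    _ ≤ 4 * (α / q) * (β / q) * (2 / ((N + 1) * q)) := by
        gcongr
        exact sum_Icc_choose_mul_pow_div_le hq0 hq1 N
    _ ≤ 4 * (α / q) * (β / q) * (2 / (N * q)) := by
        gcongr
        exact le_add_of_nonneg_right zero_le_one
    _ = 8 * α * β / (N * q ^ 3) := by
        field_simp
        ring
end

section
/- For every q ∈ [0,1] and every y ∈ [0,1], 1 − q + q·e^{−y/2} ≤ exp( −q·(1 − e^{−1/2})·y ). -/
theorem exp_mul_le_one_sub_add_mul_exp (t : ℝ) {y : ℝ} (hy0 : 0 ≤ y) (hy1 : y ≤ 1) :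
    Real.exp (t * y) ≤ 1 - y + y * Real.exp t := by
  simpa [mul_comm t y] using
    convexOn_exp.2 (Set.mem_univ 0) (Set.mem_univ t) (sub_nonneg.2 hy1) hy0 (sub_add_cancel 1 y)

theorem one_sub_q_add_q_exp_le_general (t : ℝ) {q y : ℝ} (hq0 : 0 ≤ q)
    (hy0 : 0 ≤ y) (hy1 : y ≤ 1) :
    1 - q + q * Real.exp (t * y) ≤ Real.exp (-q * (1 - Real.exp t) * y) := by
  calc 1 - q + q * Real.exp (t * y)
      ≤ 1 - q + q * (1 - y + y * Real.exp t) := by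
        gcongr
        exact exp_mul_le_one_sub_add_mul_exp t hy0 hy1
    _ = -q * (1 - Real.exp t) * y + 1 := by ring
    _ ≤ Real.exp (-q * (1 - Real.exp t) * y) := Real.add_one_le_exp _

/-- For every `q ∈ [0,1]` and `y ∈ [0,1]`,
`1 − q + q·e^{−y/2} ≤ exp(−q·(1 − e^{−1/2})·y)`. -/
theorem one_sub_q_add_q_exp_le (q y : ℝ) (hq0 : 0 ≤ q) (hq1 : q ≤ 1)
    (hy0 : 0 ≤ y) (hy1 : y ≤ 1) :
    1 - q + q * Real.exp (-y / 2) ≤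
      Real.exp (-q * (1 - Real.exp (-1 / 2)) * y) := by
  rw [show -y / 2 = -1 / 2 * y by ring]
  exact one_sub_q_add_q_exp_le_general (-1 / 2) hq0 hy0 hy1
end
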